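/- arXiv:2005.14125 — 5 statements merged into one kernel-verified Lean document; each statement's English description precedes it below -/
import Mathlib

section
/- Let a^1, a^2 be nonzero vectors in ℝ^d and let X be a compact subset of ℝ^d all of whose orbits are closed (as subsets of X). Then the set R(a^1, a^2; X) = {g_1(a^1·x) + g_2(a^2·x) : g_1, g_2 ∈ C(ℝ)} is dense in C(X) with respect to the uniform norm if and only if X contains no closed path with respect to the directions a^1 and a^2. -/
/-- A finite path `(p₀,...,p_{n-1})` (with `n` points) in `Q` with respect to
the directions `a1`, `a2`. -/
def FinPath {d : ℕ} (a1 a2 : Fin d → ℝ) (Q : Set (Fin d → ℝ)) (n : ℕ)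
    (p : ℕ → Fin d → ℝ) : Prop :=
  (∀ i < n, p i ∈ Q) ∧ (∀ i, i + 1 < n → p i ≠ p (i + 1)) ∧
  (((∀ i, 2 * i + 1 < n → ∑ t, a1 t * p (2 * i) t = ∑ t, a1 t * p (2 * i + 1) t) ∧
    (∀ i, 2 * i + 2 < n → ∑ t, a2 t * p (2 * i + 1) t = ∑ t, a2 t * p (2 * i + 2) t)) ∨
   ((∀ i, 2 * i + 1 < n → ∑ t, a2 t * p (2 * i) t = ∑ t, a2 t * p (2 * i + 1) t) ∧
    (∀ i, 2 * i + 2 < n → ∑ t, a1 t * p (2 * i + 1) t = ∑ t, a1 t * p (2 * i + 2) t)))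

/-- An (ℕ-indexed) infinite path in `Q` with respect to the directions `a1`, `a2`. -/
def PathSeq {d : ℕ} (a1 a2 : Fin d → ℝ) (Q : Set (Fin d → ℝ))
    (p : ℕ → Fin d → ℝ) : Prop :=
  (∀ i, p i ∈ Q) ∧ (∀ i, p i ≠ p (i + 1)) ∧
  (((∀ i, ∑ t, a1 t * p (2 * i) t = ∑ t, a1 t * p (2 * i + 1) t) ∧
    (∀ i, ∑ t, a2 t * p (2 * i + 1) t = ∑ t, a2 t * p (2 * i + 2) t)) ∨
   ((∀ i, ∑ t, a2 t * p (2 * i) t = ∑ t, a2 t * p (2 * i + 1) t) ∧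
    (∀ i, ∑ t, a1 t * p (2 * i + 1) t = ∑ t, a1 t * p (2 * i + 2) t)))

/-- A closed path `(p₁,...,p_{2m})`, encoded as a `2m`-periodic path sequence. -/
def ClosedPathSeq {d : ℕ} (a1 a2 : Fin d → ℝ) (Q : Set (Fin d → ℝ))
    (p : ℕ → Fin d → ℝ) : Prop :=
  PathSeq a1 a2 Q p ∧ ∃ m : ℕ, 0 < m ∧ ∀ i, p (i + 2 * m) = p i

namespace LightningBolt

open Set Relation MeasureTheory

/-- Two points are linked when they agree under one of the two maps `h false`, `h true`. -/
def Linked {Y : Type*} (h : Bool → Y → ℝ) (x y : Y) : Prop := ∃ b, h b x = h b y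

/-- A sequence is alternating if consecutive points are distinct and agree alternately under
`h b` and `h (!b)`. -/
def Alternating {Y : Type*} (h : Bool → Y → ℝ) (b : Bool) (p : ℕ → Y) : Prop :=
  ∀ i, p i ≠ p (i + 1) ∧ h (b ^^ i.bodd) (p i) = h (b ^^ i.bodd) (p (i + 1))

/-- There is no closed alternating sequence. -/
def Acyclic {Y : Type*} (h : Bool → Y → ℝ) : Prop :=
  ∀ b p m, Alternating h b p → 0 < m → ¬ ∀ i, p (i + 2 * m) = p i

/-- `Bridge h b x y`: an alternating path from `x` to `y` whose first and last steps both preserve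
`h b`. -/
inductive Bridge {Y : Type*} (h : Bool → Y → ℝ) : Bool → Y → Y → Prop
  | single {b x y} (hne : x ≠ y) (hb : h b x = h b y) : Bridge h b x y
  | wrap {b x x' y' y} (hx : x ≠ x') (hbx : h b x = h b x') (hxy : Bridge h (!b) x' y')
      (hy : y' ≠ y) (hby : h b y' = h b y) : Bridge h b x y

section Combinatorics

variable {Y : Type*} {h : Bool → Y → ℝ}

theorem Linked.symm {x y : Y} : Linked h x y → Linked h y x := fun ⟨b, hb⟩ => ⟨b, hb.symm⟩

theorem reflTransGen_linked_symm {x y : Y} (hxy : ReflTransGen (Linked h) x y) :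
    ReflTransGen (Linked h) y x := by
  induction hxy with
  | refl => exact .refl
  | tail _ hl ih => exact .head hl.symm ih

theorem Bridge.exists_path {b : Bool} {x y : Y} (hxy : Bridge h b x y) :
    ∃ (m : ℕ) (p : ℕ → Y), p 0 = x ∧ p (2 * m + 1) = y ∧ ∀ i ≤ 2 * m,
      p i ≠ p (i + 1) ∧ h (b ^^ i.bodd) (p i) = h (b ^^ i.bodd) (p (i + 1)) := by
  induction hxy with
  | @single b x y hne hb =>
    refine ⟨0, fun i => if i = 0 then x else y, by simp, by simp, ?_⟩
    intro i hi
    obtain rfl : i = 0 := by omega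
    simp [hne, hb]
  | @wrap b x x' y' y hx hbx _ hy hby ih =>
    obtain ⟨m, p, h0, h1, hp⟩ := ih
    obtain ⟨q, hq0, hqp, hqy⟩ : ∃ q : ℕ → Y, q 0 = x ∧ (∀ i ≤ 2 * m + 1, q (i + 1) = p i) ∧
        q (2 * m + 3) = y :=
      ⟨fun i => if i = 0 then x else if i ≤ 2 * m + 2 then p (i - 1) else y, by simp,
        fun i hi => by simp [hi], by simp⟩
    refine ⟨m + 1, q, hq0, hqy, fun i hi => ?_⟩
    rcases i with _ | i
    · simp [hq0, hqp, h0, hx, hbx]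
    · by_cases hi' : i ≤ 2 * m
      · rw [hqp i (by omega), hqp (i + 1) (by omega)]
        simpa using hp i hi'
      · obtain rfl : i = 2 * m + 1 := by omega
        rw [hqp _ le_rfl, hqy, h1]
        simp [hy, hby]

theorem exists_alternating_of_path {b : Bool} {m : ℕ} {p : ℕ → Y}
    (hp : ∀ i ≤ 2 * m, p i ≠ p (i + 1) ∧ h (b ^^ i.bodd) (p i) = h (b ^^ i.bodd) (p (i + 1)))
    (hne : p (2 * m + 1) ≠ p 0) (hb : h (!b) (p (2 * m + 1)) = h (!b) (p 0)) :
    ∃ q, Alternating h b q ∧ ∀ i, q (i + 2 * (m + 1)) = q i := by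
  refine ⟨fun i => p (i % (2 * (m + 1))), fun i => ?_, by simp⟩
  have hbodd : i.bodd = (i % (2 * (m + 1))).bodd := by
    conv_lhs => rw [← Nat.mod_add_div i (2 * (m + 1))]
    simp
  have hlt : i % (2 * (m + 1)) < 2 * (m + 1) := Nat.mod_lt _ (by omega)
  beta_reduce
  rw [hbodd, Nat.add_mod i 1, Nat.mod_eq_of_lt (show 1 < 2 * (m + 1) by omega)]
  generalize i % (2 * (m + 1)) = r at hlt
  by_cases hr : r ≤ 2 * m
  · rw [Nat.mod_eq_of_lt (show r + 1 < 2 * (m + 1) by omega)]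
    exact hp r hr
  · obtain rfl : r = 2 * m + 1 := by omega
    have : (2 * m + 1 + 1) % (2 * (m + 1)) = 0 := by
      rw [show 2 * m + 1 + 1 = 2 * (m + 1) by ring, Nat.mod_self]
    rw [this]
    simpa using ⟨hne, hb⟩

theorem Acyclic.not_bridge (hac : Acyclic h) {b : Bool} {x y : Y} (hne : x ≠ y)
    (hb : h (!b) x = h (!b) y) : ¬ Bridge h b x y := by
  intro hxy
  obtain ⟨m, p, h0, h1, hp⟩ := hxy.exists_path
  obtain ⟨q, hq, hqm⟩ := exists_alternating_of_path hp (by rw [h0, h1]; exact hne.symm)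
    (by rw [h0, h1]; exact hb.symm)
  exact hac b q (m + 1) hq m.succ_pos hqm

/-- A closed alternating path of minimal length does not revisit a point at a step of the opposite
parity. -/
theorem exists_alternating_ne_of_not_acyclic (hac : ¬ Acyclic h) :
    ∃ b p m, Alternating h b p ∧ 0 < m ∧ (∀ i, p (i + 2 * m) = p i) ∧
      ∀ i j, p (2 * i) ≠ p (2 * j + 1) := by
  classical
  have hex : ∃ m, 0 < m ∧ ∃ b p, Alternating h b p ∧ ∀ i, p (i + 2 * m) = p i := by
    simp only [Acyclic] at hac
    push Not at hac
    obtain ⟨b, p, m, hp, hm, hpm⟩ := hac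
    exact ⟨m, hm, b, p, hp, hpm⟩
  obtain ⟨hm, b, p, hp, hpm⟩ := Nat.find_spec hex
  have hmin : ∀ m' < Nat.find hex, _ := fun m' => Nat.find_min hex
  generalize Nat.find hex = m at *
  have hdesc : ∀ k i, 2 * k + 1 < 2 * m → p i ≠ p (i + (2 * k + 1)) := by
    intro k
    induction k with
    | zero => exact fun i _ => (hp i).1
    | succ k ih =>
      intro i hk heq
      have hne : p (i + 1) ≠ p (i + 1 + (2 * k + 1)) := ih (i + 1) (by omega)
      have hlast := (hp (i + 1 + (2 * k + 1))).2
      rw [show i + 1 + (2 * k + 1) + 1 = i + (2 * (k + 1) + 1) by ring, ← heq] at hlast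
      refine hmin (k + 1) (by omega) ⟨k.succ_pos, b ^^ (i + 1).bodd,
        exists_alternating_of_path (m := k) (p := fun j => p (i + 1 + j))
          (fun j _ => ?_) hne.symm ?_⟩
      · have := hp (i + 1 + j)
        rw [Nat.bodd_add, ← Bool.xor_assoc] at this
        exact this
      · have hfirst := (hp i).2
        rw [show (b ^^ (i + 1 + (2 * k + 1)).bodd) = (b ^^ i.bodd) by simp] at hlast
        rw [show (!(b ^^ (i + 1).bodd)) = (b ^^ i.bodd) by simp]
        exact hlast.trans hfirst
  have hper : ∀ k i, p (i + k * (2 * m)) = p i := by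
    intro k
    induction k with
    | zero => simp
    | succ k ih => intro i; rw [Nat.succ_mul, ← add_assoc, hpm, ih]
  have hodd : ∀ i k, p i ≠ p (i + (2 * k + 1)) := by
    intro i k
    have hk := Nat.mod_add_div (2 * k + 1) (2 * m)
    have hlt := Nat.mod_lt (2 * k + 1) (show 2 * m > 0 by omega)
    obtain ⟨l, hl⟩ : Odd ((2 * k + 1) % (2 * m)) := by
      rw [Nat.odd_iff, Nat.mod_mod_of_dvd _ (dvd_mul_right 2 m)]
      omega
    rw [← hk, hl, mul_comm (2 * m), ← add_assoc, hper]
    exact hdesc l i (by omega)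
  refine ⟨b, p, m, hp, hm, hpm, fun i j => ?_⟩
  rcases le_or_gt i j with hij | hij
  · have := hodd (2 * i) (j - i)
    rwa [show 2 * i + (2 * (j - i) + 1) = 2 * j + 1 by omega] at this
  · have := hodd (2 * j + 1) (i - j - 1)
    rw [show 2 * j + 1 + (2 * (i - j - 1) + 1) = 2 * i by omega] at this
    exact this.symm

theorem Alternating.sum_eq_zero {b : Bool} {p : ℕ → Y} {m : ℕ} (hp : Alternating h b p)
    (hpm : ∀ i, p (i + 2 * m) = p i) (u : ℝ → ℝ) (c : Bool) :
    ∑ i ∈ Finset.range m, (u (h c (p (2 * i))) - u (h c (p (2 * i + 1)))) = 0 := by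
  by_cases hc : c = b
  · subst hc
    refine Finset.sum_eq_zero fun i _ => ?_
    have := (hp (2 * i)).2
    rw [show (c ^^ (2 * i).bodd) = c by simp] at this
    rw [this, sub_self]
  · obtain rfl : c = !b := by revert hc; cases b <;> cases c <;> simp
    have hstep : ∀ i, u (h (!b) (p (2 * i + 1))) = u (h (!b) (p (2 * (i + 1)))) := by
      intro i
      have := (hp (2 * i + 1)).2
      rw [show (b ^^ (2 * i + 1).bodd) = !b by simp] at this
      rw [this]
      rfl
    simp only [hstep]
    rw [Finset.sum_range_sub' fun i => u (h (!b) (p (2 * i)))]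
    have := hpm 0
    rw [zero_add] at this
    rw [this, mul_zero, sub_self]

/-- A function separating the even from the odd points of a closed alternating path is not
approximable by sums of functions of `h false` and `h true`. -/
theorem Alternating.not_approx {b : Bool} {p : ℕ → Y} {m : ℕ} (hp : Alternating h b p)
    (hm : 0 < m) (hpm : ∀ i, p (i + 2 * m) = p i) {f : Y → ℝ} (h0 : ∀ i, f (p (2 * i)) = 0)
    (h1 : ∀ i, f (p (2 * i + 1)) = 1) (u v : ℝ → ℝ) :
    ∃ i, 1 / 2 ≤ |f (p i) - u (h false (p i)) - v (h true (p i))| := by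
  by_contra! hlt
  have hu := hp.sum_eq_zero hpm u false
  have hv := hp.sum_eq_zero hpm v true
  have hpos : 0 < ∑ i ∈ Finset.range m,
      (1 + (f (p (2 * i)) - u (h false (p (2 * i))) - v (h true (p (2 * i)))) -
        (f (p (2 * i + 1)) - u (h false (p (2 * i + 1))) - v (h true (p (2 * i + 1))))) := by
    refine Finset.sum_pos (fun i _ => ?_) ⟨0, Finset.mem_range.2 hm⟩
    have e := abs_lt.1 (hlt (2 * i))
    have e' := abs_lt.1 (hlt (2 * i + 1))
    linarith [e.1, e'.2]
  refine hpos.ne' ?_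
  calc _ = ∑ i ∈ Finset.range m, (-(u (h false (p (2 * i))) - u (h false (p (2 * i + 1)))) -
        (v (h true (p (2 * i))) - v (h true (p (2 * i + 1))))) := by
        refine Finset.sum_congr rfl fun i _ => ?_
        rw [h0, h1]
        ring
    _ = 0 := by rw [Finset.sum_sub_distrib, Finset.sum_neg_distrib, hu, hv, neg_zero, sub_zero]

/-- Points connected by linking are connected by an alternating path. -/
theorem exists_path_of_reflTransGen_linked {x y : Y} (hxy : ReflTransGen (Linked h) x y) :
    ∃ (n : ℕ) (b : Bool) (p : ℕ → Y), p 0 = x ∧ p n = y ∧ ∀ i < n,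
      p i ≠ p (i + 1) ∧ h (b ^^ i.bodd) (p i) = h (b ^^ i.bodd) (p (i + 1)) := by
  have happend : ∀ (n : ℕ) (b : Bool) (p : ℕ → Y) (z : Y), p 0 = x → (∀ i < n,
      p i ≠ p (i + 1) ∧ h (b ^^ i.bodd) (p i) = h (b ^^ i.bodd) (p (i + 1))) → p n ≠ z →
      h (b ^^ n.bodd) (p n) = h (b ^^ n.bodd) z → ∃ (n : ℕ) (b : Bool) (p : ℕ → Y),
      p 0 = x ∧ p n = z ∧ ∀ i < n,
      p i ≠ p (i + 1) ∧ h (b ^^ i.bodd) (p i) = h (b ^^ i.bodd) (p (i + 1)) := by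
    intro n b p z h0 hp hne hz
    refine ⟨n + 1, b, Function.update p (n + 1) z, ?_, Function.update_self .., fun i hi => ?_⟩
    · rw [Function.update_of_ne (by omega), h0]
    · rw [Function.update_of_ne (by omega)]
      rcases Nat.lt_succ_iff_lt_or_eq.1 hi with hi' | rfl
      · rw [Function.update_of_ne (by omega)]
        exact hp i hi'
      · rw [Function.update_self]
        exact ⟨hne, hz⟩
  induction hxy with
  | refl => exact ⟨0, false, fun _ => x, rfl, rfl, by simp⟩
  | @tail y z _ hyz ih =>
    obtain ⟨n, b, p, h0, rfl, hp⟩ := ih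
    obtain ⟨c, hc⟩ := hyz
    by_cases hz : p n = z
    · exact ⟨n, b, p, h0, hz, hp⟩
    rcases n with _ | n
    · exact happend 0 c p z h0 (by simp) hz (by simpa using hc)
    by_cases hcb : c = (b ^^ (n + 1).bodd)
    · subst hcb
      exact happend (n + 1) b p z h0 hp hz hc
    · have hcb' : c = (b ^^ n.bodd) := by
        rw [Nat.bodd_succ] at hcb
        revert hcb
        cases b <;> cases c <;> cases n.bodd <;> simp
      subst hcb'
      have hp' : ∀ i < n, _ := fun i hi => hp i (hi.trans n.lt_succ_self)
      by_cases hz' : p n = z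
      · exact ⟨n, b, p, h0, hz', hp'⟩
      · exact happend n b p z h0 hp' hz' ((hp n n.lt_succ_self).2.trans hc)

/-- The set reached from `T` by `n + 1` alternating saturations, starting with `h false`. -/
def level (h : Bool → Y → ℝ) (T : Set Y) : ℕ → Set Y
  | 0 => h false ⁻¹' (h false '' T)
  | n + 1 => h (n + 1).bodd ⁻¹' (h (n + 1).bodd '' level h T n)

variable {T : Set Y}

theorem level_saturated {n : ℕ} {x y : Y} (hx : x ∈ level h T n)
    (hxy : h n.bodd x = h n.bodd y) : y ∈ level h T n := by
  cases n <;> simp only [level, mem_preimage] at hx ⊢ <;> exact hxy ▸ hx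

theorem level_mono : Monotone (level h T) :=
  monotone_nat_of_le_succ fun _ x hx => ⟨x, hx, rfl⟩

theorem mem_disjointed_level_succ {n : ℕ} {x : Y} :
    x ∈ disjointed (level h T) (n + 1) ↔ x ∈ level h T (n + 1) ∧ x ∉ level h T n := by
  rw [level_mono.disjointed_add_one, mem_sdiff]

theorem disjointed_level_next {n : ℕ} {x y : Y} (hx : x ∈ disjointed (level h T) n)
    (hy : y ∉ disjointed (level h T) n) (hxy : h (n + 1).bodd x = h (n + 1).bodd y) :
    y ∈ disjointed (level h T) (n + 1) := by
  rw [mem_disjointed_level_succ]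
  refine ⟨⟨x, disjointed_subset _ _ hx, hxy⟩, fun hyn => ?_⟩
  rcases n with _ | n
  · exact hy (by simpa using hyn)
  · rw [mem_disjointed_level_succ] at hx hy
    have hyn' : y ∈ level h T n := by tauto
    exact hx.2 (level_saturated hyn' (by simpa using hxy.symm))

theorem disjointed_level_parent {n : ℕ} {y : Y} (hy : y ∈ disjointed (level h T) (n + 1)) :
    ∃ x ∈ disjointed (level h T) n, x ≠ y ∧ h (n + 1).bodd x = h (n + 1).bodd y := by
  rw [mem_disjointed_level_succ] at hy
  obtain ⟨⟨x, hx, hxy⟩, hyn⟩ := hy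
  refine ⟨x, ?_, fun hxy' => hyn (hxy' ▸ hx), hxy⟩
  rcases n with _ | n
  · simpa using hx
  · rw [mem_disjointed_level_succ]
    exact ⟨hx, fun hxn => hyn (level_mono n.le_succ (level_saturated hxn (by simpa using hxy)))⟩

theorem iUnion_level (hT : ∀ x, ∃ t ∈ T, ReflTransGen (Linked h) t x) :
    ⋃ n, level h T n = univ := by
  refine eq_univ_of_forall fun x => ?_
  obtain ⟨t, ht, htx⟩ := hT x
  induction htx with
  | refl => exact mem_iUnion.2 ⟨0, t, ht, rfl⟩
  | @tail y z _ hyz ih =>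
    obtain ⟨n, hn⟩ := mem_iUnion.1 ih
    obtain ⟨b, hb⟩ := hyz
    by_cases hbn : b = n.bodd
    · subst hbn
      exact mem_iUnion.2 ⟨n, level_saturated hn hb⟩
    · have : b = (n + 1).bodd := by
        rw [Nat.bodd_succ]
        revert hbn
        cases b <;> cases n.bodd <;> simp
      subst this
      exact mem_iUnion.2 ⟨n + 1, y, hn, hb⟩

theorem bridge_of_mem_disjointed_level
    (hT : ∀ t ∈ T, ∀ t' ∈ T, ReflTransGen (Linked h) t t' → t = t') (n : ℕ) {x y : Y}
    (hx : x ∈ disjointed (level h T) n) (hy : y ∈ disjointed (level h T) n) (hne : x ≠ y)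
    (hxy : ReflTransGen (Linked h) x y) : Bridge h n.bodd x y := by
  induction n generalizing x y with
  | zero =>
    simp only [disjointed_zero, level] at hx hy
    obtain ⟨t, ht, htx⟩ := hx
    obtain ⟨t', ht', hty⟩ := hy
    have : t = t' := hT t ht t' ht' (.head ⟨_, htx⟩ (.tail hxy ⟨_, hty.symm⟩))
    subst this
    exact .single hne (htx.symm.trans hty)
  | succ n ih =>
    obtain ⟨x', hx', hxne, hxx⟩ := disjointed_level_parent hx
    obtain ⟨y', hy', hyne, hyy⟩ := disjointed_level_parent hy
    by_cases hne' : x' = y'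
    · subst hne'
      exact .single hne (hxx.symm.trans hyy)
    · refine .wrap hxne.symm hxx.symm ?_ hyne hyy
      simpa using ih hx' hy' hne' (.head ⟨_, hxx⟩ (.tail hxy ⟨_, hyy.symm⟩))

theorem Acyclic.injOn_disjointed_level (hac : Acyclic h)
    (hT : ∀ t ∈ T, ∀ t' ∈ T, ReflTransGen (Linked h) t t' → t = t') (n : ℕ) :
    InjOn (h (n + 1).bodd) (disjointed (level h T) n) := by
  intro x hx y hy hxy
  by_contra hne
  exact hac.not_bridge hne (by simpa using hxy)
    (bridge_of_mem_disjointed_level hT n hx hy hne (.single ⟨_, hxy⟩))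

end Combinatorics

section Measures

variable {Y : Type*} [MetricSpace Y] [CompactSpace Y] [MeasurableSpace Y] [BorelSpace Y]
  {h : Bool → Y → ℝ}

theorem measurableSet_reflTransGen_linked (hc : ∀ b, Continuous (h b)) {K : Set Y}
    (hK : IsCompact K) : MeasurableSet {x | ∃ k ∈ K, ReflTransGen (Linked h) k x} := by
  let S : ℕ → Set Y := fun n =>
    Nat.rec K (fun _ s => ⋃ b : Bool, h b ⁻¹' (h b '' s)) n
  have hS : ∀ n, IsCompact (S n) := by
    intro n
    induction n with
    | zero => exact hK
    | succ n ih =>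
      exact isCompact_iUnion fun b =>
        ((ih.image (hc b)).isClosed.preimage (hc b)).isCompact
  have heq : {x | ∃ k ∈ K, ReflTransGen (Linked h) k x} = ⋃ n, S n := by
    ext x
    simp only [mem_ofPred_eq, mem_iUnion]
    constructor
    · rintro ⟨k, hk, hkx⟩
      induction hkx with
      | refl => exact ⟨0, hk⟩
      | tail _ hl ih =>
        obtain ⟨n, hn⟩ := ih
        obtain ⟨b, hb⟩ := hl
        exact ⟨n + 1, mem_iUnion.2 ⟨b, _, hn, hb⟩⟩
    · rintro ⟨n, hn⟩
      induction n generalizing x with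
      | zero => exact ⟨x, hn, .refl⟩
      | succ n ih =>
        obtain ⟨b, y, hy, hyx⟩ := mem_iUnion.1 hn
        obtain ⟨k, hk, hky⟩ := ih y hy
        exact ⟨k, hk, hky.tail ⟨b, hyx⟩⟩
  rw [heq]
  exact MeasurableSet.iUnion fun n => (hS n).measurableSet

/-- If the classes generated by linking are closed, they have a Borel transversal. -/
theorem exists_measurable_transversal (hc : ∀ b, Continuous (h b))
    (hcl : ∀ x, IsClosed {y | ReflTransGen (Linked h) x y}) :
    ∃ T : Set Y, MeasurableSet T ∧ (∀ x, ∃ t ∈ T, ReflTransGen (Linked h) t x) ∧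
      ∀ t ∈ T, ∀ t' ∈ T, ReflTransGen (Linked h) t t' → t = t' := by
  rcases isEmpty_or_nonempty Y with hY | hY
  · exact ⟨∅, MeasurableSet.empty, fun x => isEmptyElim x, by simp⟩
  obtain ⟨φ, hφ, hφs⟩ := exists_nat_bool_continuous_surjective_of_compact Y
  let ψ : cantorSet → Y := φ ∘ cantorSetHomeomorphNatToBool
  have hψ : Continuous ψ := hφ.comp cantorSetHomeomorphNatToBool.continuous
  have hψs : Function.Surjective ψ := hφs.comp cantorSetHomeomorphNatToBool.surjective
  have : CompactSpace cantorSet := isCompact_iff_compactSpace.1 isCompact_cantorSet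
  let F : Y → Set cantorSet := fun x => ψ ⁻¹' {y | ReflTransGen (Linked h) x y}
  have hF : ∀ x, ∃ k, IsLeast (F x) k := fun x =>
    ((hcl x).preimage hψ).isCompact.exists_isLeast
      ((hψs x).imp fun k hk => by simp [hk, ReflTransGen.refl])
  choose m hm using hF
  have hmeas : Measurable m := by
    refine (MeasurableEmbedding.subtype_coe
      isClosed_cantorSet.measurableSet).measurable_comp_iff.1 (measurable_of_Iic fun t => ?_)
    have : (Subtype.val ∘ m) ⁻¹' Iic t =
        {x | ∃ y ∈ ψ '' (Subtype.val ⁻¹' Iic t), ReflTransGen (Linked h) y x} := by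
      ext x
      constructor
      · intro hx
        exact ⟨ψ (m x), ⟨m x, hx, rfl⟩, reflTransGen_linked_symm (hm x).1⟩
      · rintro ⟨_, ⟨k, hk, rfl⟩, hkx⟩
        exact (Subtype.coe_le_coe.2 ((hm x).2 (reflTransGen_linked_symm hkx))).trans hk
    rw [this]
    exact measurableSet_reflTransGen_linked hc
      ((isClosed_Iic.preimage continuous_subtype_val).isCompact.image hψ)
  have hm_congr : ∀ x y, ReflTransGen (Linked h) x y → m x = m y := by
    intro x y hxy
    have : F x = F y := by
      ext k
      exact ⟨fun hk => (reflTransGen_linked_symm hxy).trans hk, fun hk => hxy.trans hk⟩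
    exact (hm x).unique (this ▸ hm y)
  refine ⟨{x | ψ (m x) = x}, measurableSet_eq_fun (hψ.measurable.comp hmeas) measurable_id,
    fun x => ⟨ψ (m x), ?_, reflTransGen_linked_symm (hm x).1⟩, fun t ht t' ht' htt => ?_⟩
  · rw [mem_ofPred_eq, ← hm_congr _ _ (hm x).1]
  · rw [← show ψ (m t) = t from ht, ← show ψ (m t') = t' from ht', hm_congr t t' htt]

theorem Acyclic.measurableSet_disjointed_level (hac : Acyclic h) (hc : ∀ b, Continuous (h b))
    {T : Set Y} (hTm : MeasurableSet T)
    (hT : ∀ t ∈ T, ∀ t' ∈ T, ReflTransGen (Linked h) t t' → t = t') (n : ℕ) :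
    MeasurableSet (disjointed (level h T) n) := by
  induction n with
  | zero =>
    rw [disjointed_zero]
    refine (hc false).measurable (hTm.image_of_continuousOn_injOn (hc false).continuousOn ?_)
    exact fun t ht t' ht' htt => hT t ht t' ht' (.single ⟨_, htt⟩)
  | succ n ih =>
    have : disjointed (level h T) (n + 1) = h (n + 1).bodd ⁻¹' (h (n + 1).bodd ''
        disjointed (level h T) n) \ disjointed (level h T) n := by
      ext y
      constructor
      · intro hy
        obtain ⟨x, hx, -, hxy⟩ := disjointed_level_parent hy
        exact ⟨⟨x, hx, hxy⟩, fun hy' =>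
          (disjoint_left.1 (disjoint_disjointed (level h T) n.succ_ne_self)) hy hy'⟩
      · rintro ⟨⟨x, hx, hxy⟩, hy⟩
        exact disjointed_level_next hx hy hxy
    rw [this]
    exact ((hc _).measurable (ih.image_of_continuousOn_injOn (hc _).continuousOn
      (hac.injOn_disjointed_level hT n))).diff ih

/-- Two finite measures on an acyclic space with closed classes are equal as soon as their images
under both maps are equal. -/
theorem Acyclic.measure_ext (hac : Acyclic h) (hc : ∀ b, Continuous (h b))
    (hcl : ∀ x, IsClosed {y | ReflTransGen (Linked h) x y}) {ρ σ : Measure Y}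
    [IsFiniteMeasure ρ] [IsFiniteMeasure σ] (hmap : ∀ b, ρ.map (h b) = σ.map (h b)) : ρ = σ := by
  obtain ⟨T, hTm, hTs, hT⟩ := exists_measurable_transversal hc hcl
  let A := disjointed (level h T)
  have hA : ∀ n, MeasurableSet (A n) := hac.measurableSet_disjointed_level hc hTm hT
  have hdisj : Pairwise (Function.onFun Disjoint A) := disjoint_disjointed _
  have hcover : ⋃ n, A n = univ := by
    rw [← iUnion_level hTs]
    exact iUnion_disjointed
  have hstep : ∀ n B, MeasurableSet B → B ⊆ A n → ∃ B' ⊆ A (n + 1), MeasurableSet B' ∧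
      |ρ.real B - σ.real B| = |ρ.real B' - σ.real B'| := by
    intro n B hB hBA
    have hinj := hac.injOn_disjointed_level hT n
    have hI : MeasurableSet (h (n + 1).bodd '' B) :=
      hB.image_of_continuousOn_injOn (hc _).continuousOn (hinj.mono hBA)
    have hS := (hc (n + 1).bodd).measurable hI
    have hsub : B ⊆ h (n + 1).bodd ⁻¹' (h (n + 1).bodd '' B) := subset_preimage_image _ _
    refine ⟨h (n + 1).bodd ⁻¹' (h (n + 1).bodd '' B) \ B, ?_, hS.diff hB, ?_⟩
    · rintro y ⟨⟨x, hx, hxy⟩, hy⟩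
      refine disjointed_level_next (hBA hx) (fun hyA => hy ?_) hxy
      rwa [← hinj (hBA hx) hyA hxy]
    · have heq : ρ.real (h (n + 1).bodd ⁻¹' (h (n + 1).bodd '' B)) =
          σ.real (h (n + 1).bodd ⁻¹' (h (n + 1).bodd '' B)) := by
        rw [← map_measureReal_apply (hc _).measurable hI,
          ← map_measureReal_apply (hc _).measurable hI, hmap]
      rw [measureReal_sdiff hsub hB, measureReal_sdiff hsub hB, heq, abs_sub_comm]
      congr 1
      ring
  have hiter : ∀ j n B, MeasurableSet B → B ⊆ A n →
      |ρ.real B - σ.real B| ≤ (ρ + σ).real (A (n + j)) := by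
    intro j
    induction j with
    | zero =>
      intro n B hB hBA
      have h1 := measureReal_mono (μ := ρ) hBA
      have h2 := measureReal_mono (μ := σ) hBA
      have h3 := measureReal_nonneg (μ := ρ) (s := B)
      have h4 := measureReal_nonneg (μ := σ) (s := B)
      rw [measureReal_add_apply, add_zero, abs_le]
      constructor <;> linarith
    | succ j ih =>
      intro n B hB hBA
      obtain ⟨B', hBA', hB', heq⟩ := hstep n B hB hBA
      rw [heq, show n + (j + 1) = n + 1 + j by ring]
      exact ih (n + 1) B' hB' hBA'
  have hzero : ∀ n B, MeasurableSet B → B ⊆ A n → ρ B = σ B := by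
    intro n B hB hBA
    have hsum : Summable fun i => (ρ + σ).real (A i) := by
      refine ENNReal.summable_toReal ?_
      rw [← measure_iUnion hdisj hA]
      exact measure_ne_top _ _
    have hlim := (hsum.tendsto_atTop_zero).comp (Filter.tendsto_add_atTop_nat n)
    have hle : |ρ.real B - σ.real B| ≤ 0 := by
      refine ge_of_tendsto' hlim fun j => ?_
      simpa [add_comm] using hiter j n B hB hBA
    have := sub_eq_zero.1 (abs_nonpos_iff.1 hle)
    exact (measureReal_eq_measureReal_iff).1 this
  ext B hB
  have hB' : B = ⋃ n, B ∩ A n := by rw [← inter_iUnion, hcover, inter_univ]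
  have hd : Pairwise (Function.onFun Disjoint fun n => B ∩ A n) := fun i j hij =>
    (hdisj hij).mono inter_subset_right inter_subset_right
  rw [hB', measure_iUnion hd fun n => hB.inter (hA n),
    measure_iUnion hd fun n => hB.inter (hA n)]
  exact tsum_congr fun n => hzero n _ (hB.inter (hA n)) inter_subset_right

end Measures

section Density

variable {Y : Type*} [TopologicalSpace Y] [CompactSpace Y]

theorem norm_add_sup_zero_le (u v : C(Y, ℝ)) : ‖(u + v) ⊔ 0‖ ≤ ‖u ⊔ 0‖ + ‖v ⊔ 0‖ := by
  refine (ContinuousMap.norm_le _ (by positivity)).2 fun x => ?_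
  have hu := (u ⊔ 0).norm_coe_le_norm x
  have hv := (v ⊔ 0).norm_coe_le_norm x
  simp only [ContinuousMap.sup_apply, ContinuousMap.zero_apply, ContinuousMap.add_apply,
    Real.norm_eq_abs] at *
  rw [abs_of_nonneg (le_max_right _ _)] at *
  rcases max_cases (u x) 0 with h1 | h1 <;> rcases max_cases (v x) 0 with h2 | h2 <;>
    rcases max_cases (u x + v x) 0 with h3 | h3 <;> linarith

theorem norm_smul_sup_zero {c : ℝ} (hc : 0 < c) (u : C(Y, ℝ)) : ‖(c • u) ⊔ 0‖ = c * ‖u ⊔ 0‖ := by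
  have : (c • u) ⊔ 0 = c • (u ⊔ 0) := by
    ext x
    simp [mul_max_of_nonneg _ _ hc.le]
  rw [this, norm_smul, Real.norm_of_nonneg hc.le]

theorem norm_le_max_norm_sup_zero (u : C(Y, ℝ)) : ‖u‖ ≤ max ‖u ⊔ 0‖ ‖(-u) ⊔ 0‖ := by
  refine (ContinuousMap.norm_le _ (le_max_of_le_left (norm_nonneg _))).2 fun x => ?_
  have hu := (u ⊔ 0).norm_coe_le_norm x
  have hv := ((-u) ⊔ 0).norm_coe_le_norm x
  simp only [ContinuousMap.sup_apply, ContinuousMap.zero_apply, ContinuousMap.neg_apply,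
    Real.norm_eq_abs] at *
  rw [abs_of_nonneg (le_max_right _ _)] at *
  rcases abs_cases (u x) with h1 | h1
  · exact le_max_of_le_left ((h1.1.trans_le (le_max_left _ _)).trans hu)
  · exact le_max_of_le_right ((h1.1.trans_le (le_max_left _ _)).trans hv)

theorem exists_measure_of_nonneg [T2Space Y] [MeasurableSpace Y] [BorelSpace Y]
    (Λ : C(Y, ℝ) →ₗ[ℝ] ℝ) (hΛ : ∀ u, 0 ≤ u → 0 ≤ Λ u) :
    ∃ ρ : Measure Y, IsFiniteMeasure ρ ∧ ∀ u, Λ u = ∫ x, u x ∂ρ := by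
  let ι : CompactlySupportedContinuousMap Y ℝ →ₗ[ℝ] C(Y, ℝ) :=
    { toFun := fun u => u.toContinuousMap
      map_add' := fun _ _ => rfl
      map_smul' := fun _ _ => rfl }
  let Λ' := PositiveLinearMap.mk₀ (Λ ∘ₗ ι) fun u hu => hΛ _ hu
  refine ⟨RealRMK.rieszMeasure Λ', inferInstance, fun u => ?_⟩
  exact (RealRMK.integral_rieszMeasure Λ'
    (CompactlySupportedContinuousMap.continuousMapEquiv u)).symm

/-- Jordan decomposition and Riesz representation of a bounded functional on `C(Y, ℝ)`. -/
theorem exists_measures_integral_sub [T2Space Y] [MeasurableSpace Y] [BorelSpace Y]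
    (L : StrongDual ℝ C(Y, ℝ)) :
    ∃ ρ σ : Measure Y, IsFiniteMeasure ρ ∧ IsFiniteMeasure σ ∧
      ∀ u, L u = ∫ x, u x ∂ρ - ∫ x, u x ∂σ := by
  have hL0 : 0 ≤ ‖L‖ := norm_nonneg L
  let N : C(Y, ℝ) × C(Y, ℝ) → ℝ := fun z => ‖L‖ * max ‖z.1 ⊔ 0‖ ‖z.2 ⊔ 0‖
  let δ : C(Y, ℝ) →ₗ[ℝ] C(Y, ℝ) × C(Y, ℝ) := LinearMap.id.prod (-LinearMap.id)
  let φ : (C(Y, ℝ) × C(Y, ℝ)) →ₗ.[ℝ] ℝ :=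
    ⟨LinearMap.range δ, (L : C(Y, ℝ) →ₗ[ℝ] ℝ) ∘ₗ LinearMap.fst ℝ _ _ ∘ₗ Submodule.subtype _⟩
  obtain ⟨Λ, hΛφ, hΛN⟩ := exists_extension_of_le_sublinear φ N
    (fun c hc z => by
      simp only [N, Prod.smul_fst, Prod.smul_snd, norm_smul_sup_zero hc,
        ← mul_max_of_nonneg _ _ hc.le]
      ring)
    (fun z w => by
      simp only [N, Prod.fst_add, Prod.snd_add, ← mul_add]
      refine mul_le_mul_of_nonneg_left (max_le ?_ ?_) hL0
      · exact (norm_add_sup_zero_le _ _).trans (add_le_add (le_max_left _ _) (le_max_left _ _))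
      · exact (norm_add_sup_zero_le _ _).trans (add_le_add (le_max_right _ _) (le_max_right _ _)))
    (by
      rintro ⟨_, u, rfl⟩
      refine (le_abs_self _).trans ((L.le_opNorm u).trans ?_)
      exact mul_le_mul_of_nonneg_left (norm_le_max_norm_sup_zero u) hL0)
  have hpos : ∀ z, 0 ≤ z → 0 ≤ Λ z := by
    intro z hz
    have hle := hΛN (-z)
    have h1 : (-z).1 ⊔ 0 = 0 := sup_eq_right.2 (neg_nonpos.2 hz.1)
    have h2 : (-z).2 ⊔ 0 = 0 := sup_eq_right.2 (neg_nonpos.2 hz.2)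
    simp only [N, h1, h2, norm_zero, max_self, mul_zero, map_neg] at hle
    linarith
  obtain ⟨ρ, hρ, hρΛ⟩ := exists_measure_of_nonneg (Λ ∘ₗ LinearMap.inl ℝ _ _)
    fun u hu => hpos _ ⟨hu, le_rfl⟩
  obtain ⟨σ, hσ, hσΛ⟩ := exists_measure_of_nonneg (Λ ∘ₗ LinearMap.inr ℝ _ _)
    fun u hu => hpos _ ⟨le_rfl, hu⟩
  refine ⟨ρ, σ, hρ, hσ, fun u => ?_⟩
  have hu : Λ (u, -u) = L u := hΛφ ⟨δ u, u, rfl⟩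
  rw [← hρΛ, ← hσΛ, ← hu, LinearMap.comp_apply, LinearMap.comp_apply, ← map_sub]
  simp

/-- A subspace of `C(Y, ℝ)` is dense if finite measures are determined by their integrals over
it. -/
theorem dense_of_measure_ext [T2Space Y] [MeasurableSpace Y] [BorelSpace Y]
    (V : Submodule ℝ C(Y, ℝ))
    (hV : ∀ ρ σ : Measure Y, IsFiniteMeasure ρ → IsFiniteMeasure σ →
      (∀ v ∈ V, ∫ x, v x ∂ρ = ∫ x, v x ∂σ) → ρ = σ) : Dense (V : Set C(Y, ℝ)) := by
  intro f
  by_contra hf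
  obtain ⟨L, c, hL, hc⟩ :=
    geometric_hahn_banach_closed_point V.convex.closure isClosed_closure hf
  have hVL : ∀ v ∈ V, L v = 0 := by
    intro v hv
    by_contra hne
    have := hL ((c / L v) • v) (subset_closure (V.smul_mem _ hv))
    rw [map_smul, smul_eq_mul, div_mul_cancel₀ _ hne] at this
    exact lt_irrefl _ this
  have hc0 : 0 < c := by simpa using hL 0 (subset_closure V.zero_mem)
  obtain ⟨ρ, σ, hρ, hσ, hrep⟩ := exists_measures_integral_sub L
  obtain rfl : ρ = σ := hV ρ σ hρ hσ fun v hv => sub_eq_zero.1 ((hrep v).symm.trans (hVL v hv))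
  rw [hrep f, sub_self] at hc
  exact hc.not_gt hc0

end Density

/-- Sums of functions of `h false` and `h true` are dense in `C(Y, ℝ)` when there are no closed
alternating paths and the classes generated by linking are closed. -/
theorem Acyclic.exists_approx {Y : Type*} [MetricSpace Y] [CompactSpace Y] {h : Bool → Y → ℝ}
    (hac : Acyclic h) (hc : ∀ b, Continuous (h b))
    (hcl : ∀ x, IsClosed {y | ReflTransGen (Linked h) x y}) (f : C(Y, ℝ)) {ε : ℝ} (hε : 0 < ε) :
    ∃ g : Bool → C(ℝ, ℝ), ∀ x, |f x - g false (h false x) - g true (h true x)| < ε := by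
  borelize Y
  let H : Bool → C(Y, ℝ) := fun b => ⟨h b, hc b⟩
  let V : Submodule ℝ C(Y, ℝ) :=
    ⨆ b, LinearMap.range (ContinuousMap.compRightAlgHom ℝ ℝ (H b)).toLinearMap
  have hV : Dense (V : Set C(Y, ℝ)) := by
    refine dense_of_measure_ext V fun ρ σ _ _ heq => hac.measure_ext hc hcl fun b => ?_
    refine ext_of_forall_integral_eq_of_IsFiniteMeasure fun g => ?_
    rw [integral_map (hc b).aemeasurable g.continuous.aestronglyMeasurable,
      integral_map (hc b).aemeasurable g.continuous.aestronglyMeasurable]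
    exact heq _ (Submodule.mem_iSup_of_mem b ⟨g.toContinuousMap, rfl⟩)
  obtain ⟨v, hv, hfv⟩ := Metric.mem_closure_iff.1 (hV f) ε hε
  simp only [V, iSup_bool_eq] at hv
  obtain ⟨_, ⟨g₁, rfl⟩, _, ⟨g₂, rfl⟩, rfl⟩ := Submodule.mem_sup.1 hv
  refine ⟨fun b => bif b then g₁ else g₂, fun x => ?_⟩
  have := (ContinuousMap.dist_apply_le_dist x).trans_lt hfv
  rw [Real.dist_eq] at this
  refine lt_of_eq_of_lt (congrArg abs ?_) this
  change f x - g₂ (h false x) - g₁ (h true x) = f x - (g₁ (h true x) + g₂ (h false x))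
  ring

/-- The two linear forms, indexed by `Bool`. -/
def dirForm {d : ℕ} (a1 a2 : Fin d → ℝ) (b : Bool) (x : Fin d → ℝ) : ℝ :=
  ∑ t, (bif b then a2 else a1) t * x t

section Paths

variable {d : ℕ} {a1 a2 : Fin d → ℝ} {Q : Set (Fin d → ℝ)} {p : ℕ → Fin d → ℝ}

theorem forall_bodd_iff {P : Bool → ℕ → Prop} {n : ℕ} :
    (∀ i, i + 1 < n → P i.bodd i) ↔
      (∀ i, 2 * i + 1 < n → P false (2 * i)) ∧ ∀ i, 2 * i + 2 < n → P true (2 * i + 1) := by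
  constructor
  · exact fun hP => ⟨fun i hi => by simpa using hP (2 * i) hi,
      fun i hi => by simpa using hP (2 * i + 1) hi⟩
  · rintro ⟨h0, h1⟩ i hi
    obtain ⟨k, rfl | rfl⟩ := Nat.even_or_odd' i
    · simpa using h0 k hi
    · simpa using h1 k hi

theorem finPath_iff {n : ℕ} : FinPath a1 a2 Q n p ↔ (∀ i < n, p i ∈ Q) ∧
    (∀ i, i + 1 < n → p i ≠ p (i + 1)) ∧ ∃ b : Bool, ∀ i, i + 1 < n →
      dirForm a1 a2 (b ^^ i.bodd) (p i) = dirForm a1 a2 (b ^^ i.bodd) (p (i + 1)) := by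
  rw [Bool.exists_bool,
    forall_bodd_iff (P := fun c i => dirForm a1 a2 (false ^^ c) (p i) =
      dirForm a1 a2 (false ^^ c) (p (i + 1))),
    forall_bodd_iff (P := fun c i => dirForm a1 a2 (true ^^ c) (p i) =
      dirForm a1 a2 (true ^^ c) (p (i + 1)))]
  rfl

theorem forall_bodd_iff' {P : Bool → ℕ → Prop} :
    (∀ i : ℕ, P i.bodd i) ↔ (∀ i, P false (2 * i)) ∧ ∀ i, P true (2 * i + 1) := by
  constructor
  · exact fun hP => ⟨fun i => by simpa using hP (2 * i), fun i => by simpa using hP (2 * i + 1)⟩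
  · rintro ⟨h0, h1⟩ i
    obtain ⟨k, rfl | rfl⟩ := Nat.even_or_odd' i
    · simpa using h0 k
    · simpa using h1 k

theorem pathSeq_iff : PathSeq a1 a2 Q p ↔
    (∀ i, p i ∈ Q) ∧ ∃ b, Alternating (dirForm a1 a2) b p := by
  simp only [Alternating, forall_and, exists_and_left]
  rw [Bool.exists_bool,
    forall_bodd_iff' (P := fun c i => dirForm a1 a2 (false ^^ c) (p i) =
      dirForm a1 a2 (false ^^ c) (p (i + 1))),
    forall_bodd_iff' (P := fun c i => dirForm a1 a2 (true ^^ c) (p i) =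
      dirForm a1 a2 (true ^^ c) (p (i + 1)))]
  rfl

theorem acyclic_subtype_iff : Acyclic (fun b (x : Q) => dirForm a1 a2 b x) ↔
    ¬ ∃ p : ℕ → Fin d → ℝ, ClosedPathSeq a1 a2 Q p := by
  constructor
  · rintro hac ⟨p, hp, m, hm, hpm⟩
    obtain ⟨hpQ, b, hb⟩ := pathSeq_iff.1 hp
    exact hac b (fun i => ⟨p i, hpQ i⟩) m
      (fun i => ⟨fun he => (hb i).1 (congrArg Subtype.val he), (hb i).2⟩) hm
      fun i => Subtype.ext (hpm i)
  · intro hno b p m hp hm hpm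
    refine hno ⟨fun i => p i, pathSeq_iff.2 ⟨fun i => (p i).2, b, fun i => ?_⟩, m, hm,
      fun i => congrArg Subtype.val (hpm i)⟩
    exact ⟨fun he => (hp i).1 (Subtype.ext he), (hp i).2⟩

theorem reflTransGen_linked_iff (x y : Q) :
    ReflTransGen (Linked fun b (x : Q) => dirForm a1 a2 b x) x y ↔
      ∃ (n : ℕ) (p : ℕ → Fin d → ℝ), FinPath a1 a2 Q n p ∧
        (∃ i < n, p i = x) ∧ ∃ j < n, p j = y := by
  constructor
  · intro hxy
    obtain ⟨n, b, p, rfl, rfl, hp⟩ := exists_path_of_reflTransGen_linked hxy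
    refine ⟨n + 1, fun i => p i, finPath_iff.2 ⟨fun i _ => (p i).2, fun i hi he => ?_, b,
      fun i hi => ?_⟩, ⟨0, n.succ_pos, rfl⟩, n, n.lt_succ_self, rfl⟩
    · exact (hp i (by omega)).1 (Subtype.ext he)
    · exact (hp i (by omega)).2
  · rintro ⟨n, p, hp, ⟨i, hi, hix⟩, j, hj, hjy⟩
    obtain ⟨hpQ, -, b, hb⟩ := finPath_iff.1 hp
    have hfrom : ∀ (k : ℕ) (hk : k < n),
        ReflTransGen (Linked fun b (x : Q) => dirForm a1 a2 b x)
          ⟨p 0, hpQ 0 (by omega)⟩ ⟨p k, hpQ k hk⟩ := by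
      intro k
      induction k with
      | zero => exact fun _ => .refl
      | succ k ih => exact fun hk => (ih (by omega)).tail ⟨_, hb k hk⟩
    obtain rfl : ⟨p i, hpQ i hi⟩ = x := Subtype.ext hix
    obtain rfl : ⟨p j, hpQ j hj⟩ = y := Subtype.ext hjy
    exact (reflTransGen_linked_symm (hfrom i hi)).trans (hfrom j hj)

end Paths

end LightningBolt

open LightningBolt Set Relation

/-- For a compact set `X ⊆ ℝᵈ` all of whose orbits are closed, the space
`R(a¹,a²; X) = {g₁(a¹·x) + g₂(a²·x) : g₁, g₂ ∈ C(ℝ)}` is dense in `C(X)` in the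
uniform norm if and only if `X` contains no closed path with respect to the
directions `a¹` and `a²`. -/
theorem stmt5 {d : ℕ} (a1 a2 : Fin d → ℝ) (ha1 : a1 ≠ 0) (ha2 : a2 ≠ 0)
    (X : Set (Fin d → ℝ)) (hX : IsCompact X)
    (horb : ∀ x ∈ X, IsClosed {y : Fin d → ℝ |
      ∃ (n : ℕ) (p : ℕ → Fin d → ℝ), FinPath a1 a2 X n p ∧
        (∃ i < n, p i = x) ∧ ∃ j < n, p j = y}) :
    (∀ f : (Fin d → ℝ) → ℝ, ContinuousOn f X → ∀ ε : ℝ, 0 < ε →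
      ∃ g1 g2 : ℝ → ℝ, Continuous g1 ∧ Continuous g2 ∧
        ∀ x ∈ X, |f x - g1 (∑ t, a1 t * x t) - g2 (∑ t, a2 t * x t)| < ε) ↔
    ¬ ∃ p : ℕ → Fin d → ℝ, ClosedPathSeq a1 a2 X p := by
  have hc : ∀ b, Continuous (dirForm a1 a2 b) := fun b =>
    continuous_finsetSum _ fun t _ => continuous_const.mul (continuous_apply t)
  have : CompactSpace X := isCompact_iff_compactSpace.1 hX
  rw [← acyclic_subtype_iff]
  constructor
  · intro happrox
    by_contra hac
    obtain ⟨b, p, m, hp, hm, hpm, hne⟩ := exists_alternating_ne_of_not_acyclic hac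
    have hfin : (range p).Finite := by
      refine ((Finset.range (2 * m)).finite_toSet.image p).subset ?_
      rintro _ ⟨i, rfl⟩
      exact ⟨i % (2 * m), by simpa using Nat.mod_lt _ (by omega),
        Function.Periodic.map_mod_nat hpm i⟩
    have hclosed : ∀ φ : ℕ → ℕ, IsClosed (range fun i => (p (φ i) : Fin d → ℝ)) := fun φ =>
      ((hfin.image Subtype.val).subset (by rintro _ ⟨i, rfl⟩; exact ⟨_, ⟨_, rfl⟩, rfl⟩)).isClosed
    obtain ⟨f, hf0, hf1, -⟩ := exists_continuous_zero_one_of_isClosed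
      (hclosed fun i => 2 * i) (hclosed fun i => 2 * i + 1) (by
        rw [disjoint_left]
        rintro _ ⟨i, rfl⟩ ⟨j, hj⟩
        exact hne i j (Subtype.ext hj.symm))
    obtain ⟨g1, g2, -, -, hg⟩ := happrox f f.continuous.continuousOn (1 / 2) (by norm_num)
    obtain ⟨i, hi⟩ := hp.not_approx hm hpm (f := fun x => f x) (fun i => hf0 ⟨i, rfl⟩)
      (fun i => hf1 ⟨i, rfl⟩) g1 g2
    exact hi.not_gt (hg _ (p i).2)
  · intro hac f hf ε hε
    have hcl : ∀ x : X, IsClosed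
        {y | ReflTransGen (Linked fun b (x : X) => dirForm a1 a2 b x) x y} := by
      intro x
      simp only [reflTransGen_linked_iff]
      exact (horb x x.2).preimage continuous_subtype_val
    obtain ⟨g, hg⟩ := hac.exists_approx (fun b => (hc b).comp continuous_subtype_val) hcl
      ⟨X.domRestrict f, hf.domRestrict⟩ hε
    exact ⟨g false, g true, (g false).continuous, (g true).continuous, fun x hx => hg ⟨x, hx⟩⟩
end

section
/- Let a^1, a^2 be nonzero vectors in ℝ^d, let X be a compact subset of ℝ^d, and set H_1(X) = {g_1(a^1·x) : g_1 ∈ C(ℝ)} and H_2(X) = {g_2(a^2·x) : g_2 ∈ C(ℝ)}. Then H_1(X) + H_2(X) = C(X) holds if and only if X contains no closed path with respect to the directions a^1 and a^2 and there exists a positive integer n_0 such that the lengths of all paths in X are bounded by n_0. -/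
namespace AlternatingPath

open Set Function Filter Topology

section Combinatorics

variable {X : Type*} {u v : X → ℝ}

/-- `p 0, …, p (n - 1)` is a path whose consecutive points are distinct and agree alternately
under `u` and `v`, starting with `u`. -/
def AltPath (u v : X → ℝ) (n : ℕ) (p : ℕ → X) : Prop :=
  ∀ i, i + 1 < n → p i ≠ p (i + 1) ∧ (Even i → u (p i) = u (p (i + 1))) ∧
    (Odd i → v (p i) = v (p (i + 1)))

/-- The sequence `x, p 0, p 1, …`. -/
def consSeq (x : X) (p : ℕ → X) : ℕ → X
  | 0 => x
  | i + 1 => p i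

lemma AltPath.cons {n : ℕ} {p : ℕ → X} {x : X} (hp : AltPath v u n p) (hne : x ≠ p 0)
    (hx : u x = u (p 0)) : AltPath u v (n + 1) (consSeq x p) := by
  rintro (_ | i) hi
  · simpa [consSeq] using ⟨hne, hx⟩
  · obtain ⟨h1, h2, h3⟩ := hp i (by omega)
    refine ⟨h1, fun h => h3 ?_, fun h => h2 ?_⟩ <;> grind

/-- The points of `Y` that share both their `u`-value and their `v`-value with other points
of `Y`. -/
def core (u v : X → ℝ) (Y : Set X) : Set X :=
  {x ∈ Y | (∃ y ∈ Y, y ≠ x ∧ u y = u x) ∧ ∃ z ∈ Y, z ≠ x ∧ v z = v x}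

lemma exists_altPath_of_mem_iterate_core (k : ℕ) : ∀ x ∈ (core u v)^[k] univ,
    (∃ p : ℕ → X, p 0 = x ∧ AltPath u v (k + 1) p) ∧
      ∃ p : ℕ → X, p 0 = x ∧ AltPath v u (k + 1) p := by
  induction k with
  | zero =>
    exact fun x _ => ⟨⟨fun _ => x, rfl, fun i hi => by omega⟩,
      ⟨fun _ => x, rfl, fun i hi => by omega⟩⟩
  | succ k ih =>
    intro x hx
    rw [iterate_succ_apply'] at hx
    obtain ⟨-, ⟨y, hy, hyx, huy⟩, ⟨z, hz, hzx, hvz⟩⟩ := hx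
    obtain ⟨-, p, rfl, hp⟩ := ih y hy
    obtain ⟨⟨q, rfl, hq⟩, -⟩ := ih z hz
    exact ⟨⟨consSeq x p, rfl, hp.cons hyx.symm huy.symm⟩,
      ⟨consSeq x q, rfl, hq.cons hzx.symm hvz.symm⟩⟩

lemma iterate_core_eq_empty {N : ℕ} (hN : ∀ n p, AltPath u v n p → n ≤ N) :
    (core u v)^[N] univ = ∅ := by
  refine eq_empty_iff_forall_notMem.2 fun x hx => ?_
  obtain ⟨⟨p, -, hp⟩, -⟩ := exists_altPath_of_mem_iterate_core N x hx
  have := hN _ _ hp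
  omega

lemma exists_bounded_solution {f : X → ℝ} {M : ℝ} (hf : ∀ x, |f x| ≤ M) (hM : 0 ≤ M) (k : ℕ) :
    ∀ Y : Set X, (core u v)^[k] Y = ∅ → ∃ g₁ g₂ : ℝ → ℝ, (∀ t, |g₁ t| ≤ k * M) ∧
      (∀ t, |g₂ t| ≤ k * M) ∧ ∀ x ∈ Y, f x = g₁ (u x) + g₂ (v x) := by
  induction k with
  | zero =>
    intro Y hY
    exact ⟨0, 0, by simp, by simp, fun x hx => by simp_all⟩
  | succ k ih =>
    intro Y hY
    obtain ⟨g₁, g₂, h₁, h₂, h⟩ := ih _ hY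
    let P : X → Prop := fun x => x ∈ Y ∧ ∀ y ∈ Y, u y = u x → y = x
    let R : X → Prop := fun x => (x ∈ Y ∧ ∀ y ∈ Y, v y = v x → y = x) ∧ ¬ P x
    classical
    refine ⟨fun t => if H : ∃ x, P x ∧ u x = t then f H.choose - g₂ (v H.choose) else g₁ t,
      fun s => if H : ∃ x, R x ∧ v x = s then f H.choose - g₁ (u H.choose) else g₂ s, ?_, ?_, ?_⟩
    · intro t
      have hk : (k : ℝ) * M ≤ ((k + 1 : ℕ) : ℝ) * M := by push_cast; linarith
      dsimp only
      split_ifs with H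
      · have a := abs_le.1 (hf H.choose)
        have b := abs_le.1 (h₂ (v H.choose))
        push_cast
        rw [abs_le]
        constructor <;> linarith
      · exact (h₁ t).trans hk
    · intro t
      have hk : (k : ℝ) * M ≤ ((k + 1 : ℕ) : ℝ) * M := by push_cast; linarith
      dsimp only
      split_ifs with H
      · have a := abs_le.1 (hf H.choose)
        have b := abs_le.1 (h₁ (u H.choose))
        push_cast
        rw [abs_le]
        constructor <;> linarith
      · exact (h₂ t).trans hk
    · intro x hx
      have hP : ∀ y, P y → u y = u x → y = x := fun y hy e => (hy.2 x hx e.symm).symm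
      have hR : ∀ y, R y → v y = v x → y = x := fun y hy e => (hy.1.2 x hx e.symm).symm
      by_cases hPx : P x
      · have H : ∃ y, P y ∧ u y = u x := ⟨x, hPx, rfl⟩
        have H' : ¬ ∃ y, R y ∧ v y = v x := by
          rintro ⟨y, hy, e⟩
          exact hy.2 (hR y hy e ▸ hPx)
        have e := hP _ H.choose_spec.1 H.choose_spec.2
        dsimp only
        rw [dif_pos H, dif_neg H', e]
        ring
      · have H : ¬ ∃ y, P y ∧ u y = u x := by
          rintro ⟨y, hy, e⟩
          exact hPx (hP y hy e ▸ hy)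
        dsimp only
        rw [dif_neg H]
        by_cases hRx : R x
        · have H' : ∃ y, R y ∧ v y = v x := ⟨x, hRx, rfl⟩
          have e := hR _ H'.choose_spec.1 H'.choose_spec.2
          rw [dif_pos H', e]
          ring
        · have H' : ¬ ∃ y, R y ∧ v y = v x := by
            rintro ⟨y, hy, e⟩
            exact hRx (hR y hy e ▸ hy)
          rw [dif_neg H']
          refine h x ⟨hx, ?_, ?_⟩
          · by_contra! hc
            exact hPx ⟨hx, fun y hy e => by_contra fun hne => hc y hy hne e⟩
          · by_contra! hc
            exact hRx ⟨⟨hx, fun y hy e => by_contra fun hne => hc y hy hne e⟩, hPx⟩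

/-- The points reachable from `A` in `k` steps, each preserving `u` or `v`. -/
def sat (u v : X → ℝ) (A : Set X) : ℕ → Set X
  | 0 => A
  | k + 1 => {y | ∃ z ∈ sat u v A k, u z = u y ∨ v z = v y}

lemma exists_altPath_of_mem_sat_succ (A : Set X) (k : ℕ) :
    ∀ y ∈ sat u v A (k + 1), y ∉ sat u v A k → ∃ p : ℕ → X, p 0 = y ∧ p 1 ∈ sat u v A k ∧
      (AltPath u v (k + 2) p ∨ AltPath v u (k + 2) p) := by
  induction k with
  | zero =>
    rintro y ⟨z, hz, hzy⟩ hy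
    have hne : y ≠ z := fun e => hy (e ▸ hz)
    refine ⟨consSeq y fun _ => z, rfl, hz, hzy.imp (fun e => ?_) (fun e => ?_)⟩
    · exact AltPath.cons (fun i hi => by omega) hne e.symm
    · exact AltPath.cons (fun i hi => by omega) hne e.symm
  | succ k ih =>
    rintro y ⟨z, hz, hzy⟩ hy
    have hne : y ≠ z := fun e => hy (e ▸ hz)
    have hz' : z ∉ sat u v A k := fun h => hy ⟨z, h, hzy⟩
    obtain ⟨p, rfl, hp1, hp⟩ := ih z hz hz'
    refine ⟨consSeq y p, rfl, hz, ?_⟩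
    rcases hzy with e | e <;> rcases hp with hp | hp
    · exact absurd ⟨p 1, hp1, .inl (((hp 0 (by omega)).2.1 (by simp)).symm.trans e)⟩ hy
    · exact .inl (hp.cons hne e.symm)
    · exact .inr (hp.cons hne e.symm)
    · exact absurd ⟨p 1, hp1, .inr (((hp 0 (by omega)).2.1 (by simp)).symm.trans e)⟩ hy

lemma mem_sat_iff {N : ℕ} (hN : ∀ n p, AltPath u v n p ∨ AltPath v u n p → n ≤ N) (A : Set X)
    (y : X) : y ∈ sat u v A N ↔
      ∃ x ∈ A, Relation.ReflTransGen (fun a b => u a = u b ∨ v a = v b) x y := by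
  constructor
  · generalize N = k
    induction k generalizing y with
    | zero => exact fun h => ⟨y, h, .refl⟩
    | succ k ih =>
      rintro ⟨z, hz, hzy⟩
      obtain ⟨x, hx, hxz⟩ := ih z hz
      exact ⟨x, hx, hxz.tail hzy⟩
  · rintro ⟨x, hx, hxy⟩
    induction hxy with
    | refl =>
      generalize N = k
      induction k with
      | zero => exact hx
      | succ k ih => exact ⟨x, ih, .inl rfl⟩
    | @tail b c _ hbc ih =>
      by_contra hc
      obtain ⟨p, -, -, hp⟩ := exists_altPath_of_mem_sat_succ A N c ⟨b, ih, hbc⟩ hc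
      have := hN _ _ hp
      omega

/-- The values obtained from the initial values `T` by transport along steps that preserve
either `u` and the value, or `v` and the difference between `f` and the value. -/
def transport (u v f : X → ℝ) (T : Set (X × ℝ)) : ℕ → Set (X × ℝ)
  | 0 => T
  | k + 1 => {q | ∃ t ∈ transport u v f T k, (u t.1 = u q.1 ∧ q.2 = t.2) ∨
      (v t.1 = v q.1 ∧ q.2 = t.2 + f q.1 - f t.1)}

lemma transport_eq {f : X → ℝ} {g₁ g₂ : ℝ → ℝ} (h : ∀ x, f x = g₁ (u x) + g₂ (v x)) (x₀ : X)
    (k : ℕ) : transport u v f {(x₀, g₁ (u x₀))} k =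
      (fun x => (x, g₁ (u x))) '' sat u v {x₀} k := by
  induction k with
  | zero => simp [transport, sat]
  | succ k ih =>
    ext ⟨y, s⟩
    simp only [transport, ih, sat, mem_ofPred_eq, mem_image, Prod.mk.injEq]
    constructor
    · rintro ⟨_, ⟨z, hz, rfl⟩, ⟨e, rfl⟩ | ⟨e, rfl⟩⟩
      · exact ⟨y, ⟨z, hz, .inl e⟩, rfl, by simp_all⟩
      · refine ⟨y, ⟨z, hz, .inr e⟩, rfl, ?_⟩
        dsimp only at e ⊢
        rw [h y, h z, e]
        ring
    · rintro ⟨_, ⟨z, hz, e | e⟩, rfl, rfl⟩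
      · exact ⟨_, ⟨z, hz, rfl⟩, .inl ⟨e, by rw [e]⟩⟩
      · refine ⟨_, ⟨z, hz, rfl⟩, .inr ⟨e, ?_⟩⟩
        dsimp only
        rw [h _, h z, e]
        ring

end Combinatorics

section Topology

variable {X : Type*} [TopologicalSpace X]

lemma isClosed_sat [CompactSpace X] [T2Space X] (u v : C(X, ℝ)) {A : Set X} (hA : IsClosed A)
    (k : ℕ) :
    IsClosed (sat u v A k) := by
  induction k with
  | zero => exact hA
  | succ k ih =>
    have : sat u v A (k + 1) = Prod.snd '' ((sat u v A k ×ˢ univ) ∩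
        ({q : X × X | u q.1 = u q.2} ∪ {q | v q.1 = v q.2})) := by
      ext y
      simp [sat]
    rw [this]
    refine (IsCompact.image (IsClosed.isCompact ?_) continuous_snd).isClosed
    exact (ih.prod isClosed_univ).inter ((isClosed_eq (by fun_prop) (by fun_prop)).union
      (isClosed_eq (by fun_prop) (by fun_prop)))

lemma isCompact_transport [CompactSpace X] (u v f : C(X, ℝ)) {T : Set (X × ℝ)} (hT : IsCompact T)
    (k : ℕ) :
    IsCompact (transport u v f T k) := by
  induction k with
  | zero => exact hT
  | succ k ih =>
    have hK : IsCompact (transport u v f T k ×ˢ (univ : Set X)) := ih.prod isCompact_univ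
    have : transport u v f T (k + 1) =
        (fun q : (X × ℝ) × X => (q.2, q.1.2)) ''
          ((transport u v f T k ×ˢ univ) ∩ {q | u q.1.1 = u q.2}) ∪
        (fun q : (X × ℝ) × X => (q.2, q.1.2 + f q.2 - f q.1.1)) ''
          ((transport u v f T k ×ˢ univ) ∩ {q | v q.1.1 = v q.2}) := by
      ext ⟨y, s⟩
      simp only [transport, mem_ofPred_eq, mem_union, mem_image, mem_inter_iff, mem_prod, mem_univ,
        and_true, Prod.mk.injEq]
      constructor
      · rintro ⟨t, ht, ⟨e, rfl⟩ | ⟨e, rfl⟩⟩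
        · exact .inl ⟨(t, y), ⟨ht, e⟩, rfl, rfl⟩
        · exact .inr ⟨(t, y), ⟨ht, e⟩, rfl, rfl⟩
      · rintro (⟨⟨t, z⟩, ⟨ht, e⟩, rfl, rfl⟩ | ⟨⟨t, z⟩, ⟨ht, e⟩, rfl, rfl⟩)
        · exact ⟨t, ht, .inl ⟨e, rfl⟩⟩
        · exact ⟨t, ht, .inr ⟨e, rfl⟩⟩
    rw [this]
    exact ((hK.inter_right (isClosed_eq (by fun_prop) (by fun_prop))).image (by fun_prop)).union
      ((hK.inter_right (isClosed_eq (by fun_prop) (by fun_prop))).image (by fun_prop))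

/-- A compact set in the plane that is the graph of a bounded function of the first coordinate
extends to the graph of a continuous function with the same bound. -/
lemma exists_extension_of_isCompact_graph {Γ : Set (ℝ × ℝ)} (hΓ : IsCompact Γ)
    (hinj : InjOn Prod.fst Γ) {B : ℝ} (hB : 0 ≤ B) (hb : ∀ q ∈ Γ, |q.2| ≤ B) :
    ∃ g : C(ℝ, ℝ), (∀ t, |g t| ≤ B) ∧ ∀ q ∈ Γ, g q.1 = q.2 := by
  have := isCompact_iff_compactSpace.1 hΓ
  have he : IsClosedEmbedding (fun q : Γ => q.1.1) :=
    Continuous.isClosedEmbedding (by fun_prop) (injOn_iff_injective.1 hinj)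
  obtain ⟨g, hg, hge⟩ := ContinuousMap.exists_extension_forall_mem_of_isClosedEmbedding
    (⟨fun q : Γ => q.1.2, by fun_prop⟩ : C(Γ, ℝ)) (t := Icc (-B) B)
    (fun q => abs_le.1 (hb q q.2)) ⟨0, by simpa using hB⟩ he
  exact ⟨g, fun t => abs_le.2 (hg t), fun q hq => congrFun hge ⟨q, hq⟩⟩

/-- The continuous functions that are constant on the fibres of `u`. -/
def fiberConst (u : C(X, ℝ)) : Submodule ℝ C(X, ℝ) where
  carrier := {F | ∀ x y, u x = u y → F x = F y}
  add_mem' ha hb x y h := by simp [ha x y h, hb x y h]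
  zero_mem' := by simp
  smul_mem' c F hF x y h := by simp [hF x y h]

lemma isClosed_fiberConst (u : C(X, ℝ)) : IsClosed (fiberConst u : Set C(X, ℝ)) := by
  have : (fiberConst u : Set C(X, ℝ)) = ⋂ (x) (y) (_ : u x = u y), {F | F x = F y} := by
    ext F
    simp only [mem_iInter]
    rfl
  rw [this]
  exact isClosed_iInter fun x => isClosed_iInter fun y => isClosed_iInter fun _ =>
    isClosed_eq (by fun_prop) (by fun_prop)

lemma comp_mem_fiberConst (u : C(X, ℝ)) (g : C(ℝ, ℝ)) : g.comp u ∈ fiberConst u :=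
  fun x y h => by simp [h]

lemma exists_comp_eq_of_mem_fiberConst [CompactSpace X] {u F : C(X, ℝ)}
    (hF : F ∈ fiberConst u) :
    ∃ g : C(ℝ, ℝ), ∀ x, F x = g (u x) := by
  obtain ⟨g, -, hg⟩ := exists_extension_of_isCompact_graph (Γ := range fun x => (u x, F x))
    (isCompact_range (by fun_prop))
    (by rintro _ ⟨x, rfl⟩ _ ⟨y, rfl⟩ h; exact Prod.ext h (hF x y h)) (norm_nonneg F)
    (by rintro _ ⟨x, rfl⟩; exact F.norm_coe_le_norm x)
  exact ⟨g, fun x => (hg _ ⟨x, rfl⟩).symm⟩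

end Topology

section Topology

variable {X : Type*} [TopologicalSpace X]

lemma normalSpace_of_isClosedMap {Q : Type*} [TopologicalSpace Q] [NormalSpace X] {π : X → Q}
    (hc : Continuous π) (hcl : IsClosedMap π) (hs : Surjective π) : NormalSpace Q where
  normal A B hA hB hAB := by
    obtain ⟨U, V, hU, hV, hAU, hBV, hUV⟩ := NormalSpace.normal (π ⁻¹' A) (π ⁻¹' B)
      (hA.preimage hc) (hB.preimage hc) (hAB.preimage π)
    refine ⟨(π '' Uᶜ)ᶜ, (π '' Vᶜ)ᶜ, (hcl _ hU.isClosed_compl).isOpen_compl,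
      (hcl _ hV.isClosed_compl).isOpen_compl, ?_, ?_, ?_⟩
    · rintro _ hq ⟨x, hx, rfl⟩
      exact hx (hAU hq)
    · rintro _ hq ⟨x, hx, rfl⟩
      exact hx (hBV hq)
    · rw [Set.disjoint_left]
      intro q hqU hqV
      obtain ⟨x, rfl⟩ := hs q
      have hxU : x ∈ U := by_contra fun h => hqU ⟨x, h, rfl⟩
      have hxV : x ∈ V := by_contra fun h => hqV ⟨x, h, rfl⟩
      exact Set.disjoint_left.1 hUV hxU hxV

variable [CompactSpace X] {u v : C(X, ℝ)} {N : ℕ}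

/-- On a single orbit every continuous function is exactly a sum of continuous functions
of `u` and of `v`, with a uniform bound. -/
lemma exists_solution_on_sat (hN : ∀ n p, AltPath u v n p → n ≤ N) (f : C(X, ℝ)) (x₀ : X)
    (k : ℕ) : ∃ g₁ g₂ : C(ℝ, ℝ), (∀ t, |g₁ t| ≤ N * ‖f‖) ∧ (∀ t, |g₂ t| ≤ N * ‖f‖) ∧
      ∀ x ∈ sat u v {x₀} k, f x = g₁ (u x) + g₂ (v x) := by
  obtain ⟨G₁, G₂, hG₁, hG₂, hG⟩ := exists_bounded_solution (u := u) (v := v) (f := f)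
    f.norm_coe_le_norm (norm_nonneg f) N univ (iterate_core_eq_empty hN)
  have hB : 0 ≤ N * ‖f‖ := by positivity
  have hT : IsCompact ((fun x => (x, G₁ (u x))) '' sat u v {x₀} k) := by
    rw [← transport_eq (fun x => hG x trivial)]
    exact isCompact_transport u v f isCompact_singleton k
  have h₁ := hT.image (f := fun q : X × ℝ => (u q.1, q.2)) (by fun_prop)
  have h₂ := hT.image (f := fun q : X × ℝ => (v q.1, f q.1 - q.2)) (by fun_prop)
  have e : ∀ x, f x - G₁ (u x) = G₂ (v x) := fun x => by rw [hG x trivial]; ring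
  simp only [image_image, e] at h₁ h₂
  obtain ⟨g₁, hg₁, hg₁'⟩ := exists_extension_of_isCompact_graph h₁
    (by rintro _ ⟨x, -, rfl⟩ _ ⟨y, -, rfl⟩ h; exact Prod.ext h (congrArg G₁ h)) hB
    (by rintro _ ⟨x, -, rfl⟩; exact hG₁ _)
  obtain ⟨g₂, hg₂, hg₂'⟩ := exists_extension_of_isCompact_graph h₂
    (by rintro _ ⟨x, -, rfl⟩ _ ⟨y, -, rfl⟩ h; exact Prod.ext h (congrArg G₂ h)) hB
    (by rintro _ ⟨x, -, rfl⟩; exact hG₂ _)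
  refine ⟨g₁, g₂, hg₁, hg₂, fun x hx => ?_⟩
  rw [hG x trivial, hg₁' _ ⟨x, hx, rfl⟩, hg₂' _ ⟨x, hx, rfl⟩]

lemma abs_sum_mul_le {ι : Type*} (s : Finset ι) {w a : ι → ℝ} {B : ℝ} (hw : ∀ i ∈ s, 0 ≤ w i)
    (hw1 : ∑ i ∈ s, w i = 1) (ha : ∀ i ∈ s, w i ≠ 0 → |a i| ≤ B) : |∑ i ∈ s, w i * a i| ≤ B := by
  calc |∑ i ∈ s, w i * a i| ≤ ∑ i ∈ s, |w i * a i| := Finset.abs_sum_le_sum_abs _ _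
    _ ≤ ∑ i ∈ s, w i * B := Finset.sum_le_sum fun i hi => by
        rw [abs_mul, abs_of_nonneg (hw i hi)]
        by_cases h : w i = 0
        · simp [h]
        · exact mul_le_mul_of_nonneg_left (ha i hi h) (hw i hi)
    _ = B := by rw [← Finset.sum_mul, hw1, one_mul]

variable [T2Space X]

lemma exists_approx (hN : ∀ n p, AltPath u v n p ∨ AltPath v u n p → n ≤ N) (f : C(X, ℝ)) :
    ∃ F₁ ∈ fiberConst u, ∃ F₂ ∈ fiberConst v, ‖F₁‖ ≤ N * ‖f‖ ∧ ‖F₂‖ ≤ N * ‖f‖ ∧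
      ‖f - F₁ - F₂‖ ≤ 1 / 2 * ‖f‖ := by
  rcases (norm_nonneg f).eq_or_lt with hf | hf
  · exact ⟨0, zero_mem _, 0, zero_mem _, by simp [← hf], by simp [← hf], by simp [← hf]⟩
  let S : X → X → Prop := fun a b => u a = u b ∨ v a = v b
  have hS : Std.Symm S := ⟨fun a b h => h.imp Eq.symm Eq.symm⟩
  let r : Setoid X := ⟨Relation.ReflTransGen S, fun _ => .refl,
    fun h => Relation.ReflTransGen.stdSymm.symm _ _ h, fun h h' => h.trans h'⟩
  let π : X → Quotient r := Quotient.mk r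
  have hπ : Continuous π := continuous_quotient_mk'
  have hπs : Surjective π := Quotient.mk_surjective
  have hπS : ∀ x y, S x y → π x = π y := fun x y h => Quotient.sound (.single h)
  have hcl : IsClosedMap π := by
    intro A hA
    rw [← isQuotientMap_quotient_mk'.isClosed_preimage]
    convert isClosed_sat u v hA N using 1
    ext y
    rw [mem_sat_iff hN]
    exact exists_congr fun x => and_congr_right fun _ => Quotient.eq
  have := normalSpace_of_isClosedMap hπ hcl hπs
  choose g₁ g₂ hg₁ hg₂ hg using fun x₀ : X =>
    exists_solution_on_sat (fun n p h => hN n p (.inl h)) f x₀ N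
  let V : X → Set X := fun x₀ => {x | |f x - g₁ x₀ (u x) - g₂ x₀ (v x)| < 1 / 2 * ‖f‖}
  have hV : ∀ x₀, IsOpen (V x₀) := fun x₀ => isOpen_lt (by fun_prop) (by fun_prop)
  let U : X → Set (Quotient r) := fun x₀ => (π '' (V x₀)ᶜ)ᶜ
  have hU : ∀ x₀, IsOpen (U x₀) := fun x₀ => (hcl _ (hV x₀).isClosed_compl).isOpen_compl
  have hUV : ∀ x₀ x, π x ∈ U x₀ → x ∈ V x₀ := fun x₀ x h => by_contra fun h' => h ⟨x, h', rfl⟩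
  have hcov : univ ⊆ ⋃ x₀, U x₀ := by
    intro q _
    obtain ⟨x₀, rfl⟩ := hπs q
    refine mem_iUnion.2 ⟨x₀, ?_⟩
    rintro ⟨x, hx, e⟩
    refine hx ?_
    have hxs : x ∈ sat u v {x₀} N := by
      rw [mem_sat_iff hN]
      exact ⟨x₀, rfl, Quotient.exact e.symm⟩
    simp only [V, mem_ofPred_eq, hg x₀ x hxs]
    ring_nf
    simpa using hf
  obtain ⟨s, hs⟩ := isCompact_univ.elim_finite_subcover U hU hcov
  obtain ⟨ρ, hρ⟩ := PartitionOfUnity.exists_isSubordinate isClosed_univ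
    (fun i : s => U i) (fun i => hU i) (by simpa [iUnion_subtype] using hs)
  have hρ1 : ∀ q, ∑ i, ρ i q = 1 := fun q => by
    rw [← finsum_eq_sum_of_fintype]
    exact ρ.sum_eq_one (mem_univ q)
  have hρV : ∀ x i, ρ i (π x) ≠ 0 → x ∈ V i := fun x i h =>
    hUV _ _ (hρ i (subset_closure h))
  let πc : C(X, Quotient r) := ⟨π, hπ⟩
  have hF₁ : ∀ x, (∑ i, (ρ i).comp πc * (g₁ i).comp u) x = ∑ i, ρ i (π x) * g₁ i (u x) :=
    fun x => by simp [ContinuousMap.sum_apply, πc]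
  have hF₂ : ∀ x, (∑ i, (ρ i).comp πc * (g₂ i).comp v) x = ∑ i, ρ i (π x) * g₂ i (v x) :=
    fun x => by simp [ContinuousMap.sum_apply, πc]
  refine ⟨∑ i, (ρ i).comp πc * (g₁ i).comp u, ?_,
    ∑ i, (ρ i).comp πc * (g₂ i).comp v, ?_, ?_, ?_, ?_⟩
  · intro x y h
    rw [hF₁, hF₁, h, hπS x y (.inl h)]
  · intro x y h
    rw [hF₂, hF₂, h, hπS x y (.inr h)]
  · refine (ContinuousMap.norm_le _ (by positivity)).2 fun x => ?_
    rw [hF₁]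
    exact abs_sum_mul_le _ (fun i _ => ρ.nonneg i _) (hρ1 _) fun i _ _ => hg₁ i _
  · refine (ContinuousMap.norm_le _ (by positivity)).2 fun x => ?_
    rw [hF₂]
    exact abs_sum_mul_le _ (fun i _ => ρ.nonneg i _) (hρ1 _) fun i _ _ => hg₂ i _
  · refine (ContinuousMap.norm_le _ (by positivity)).2 fun x => ?_
    have e : (f - ∑ i, (ρ i).comp πc * (g₁ i).comp u - ∑ i, (ρ i).comp πc * (g₂ i).comp v) x =
        ∑ i, ρ i (π x) * (f x - g₁ i (u x) - g₂ i (v x)) := by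
      rw [ContinuousMap.sub_apply, ContinuousMap.sub_apply, hF₁, hF₂]
      simp only [mul_sub, Finset.sum_sub_distrib, ← Finset.sum_mul, hρ1, one_mul]
    rw [e]
    exact abs_sum_mul_le _ (fun i _ => ρ.nonneg i _) (hρ1 _) fun i _ h => (hρV x i h).le

lemma exists_add_eq (hN : ∀ n p, AltPath u v n p ∨ AltPath v u n p → n ≤ N) (f : C(X, ℝ)) :
    ∃ F₁ ∈ fiberConst u, ∃ F₂ ∈ fiberConst v, f = F₁ + F₂ := by
  choose φ₁ hφ₁ φ₂ hφ₂ hn₁ hn₂ hr using exists_approx hN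
  let r : ℕ → C(X, ℝ) := fun n => (fun g => g - φ₁ g - φ₂ g)^[n] f
  have hr_succ : ∀ n, r (n + 1) = r n - φ₁ (r n) - φ₂ (r n) := fun n =>
    iterate_succ_apply' _ _ _
  have hr_norm : ∀ n, ‖r n‖ ≤ (1 / 2) ^ n * ‖f‖ := by
    intro n
    induction n with
    | zero => simp [r]
    | succ n ih =>
      rw [hr_succ, pow_succ']
      have := hr (r n)
      linarith
  have hgeom : Summable fun n : ℕ => N * ((1 / 2 : ℝ) ^ n * ‖f‖) :=
    ((summable_geometric_of_lt_one (by norm_num) (by norm_num)).mul_right _).mul_left _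
  have hs₁ : Summable fun n => φ₁ (r n) := .of_norm_bounded hgeom fun n =>
    (hn₁ _).trans (by gcongr; exact hr_norm n)
  have hs₂ : Summable fun n => φ₂ (r n) := .of_norm_bounded hgeom fun n =>
    (hn₂ _).trans (by gcongr; exact hr_norm n)
  have hmem : ∀ (w : C(X, ℝ)) (F : ℕ → C(X, ℝ)), (∀ n, F n ∈ fiberConst w) → Summable F →
      ∑' n, F n ∈ fiberConst w := fun w F hF hs =>
    (isClosed_fiberConst w).mem_of_tendsto hs.hasSum.tendsto_sum_nat
      (.of_forall fun n => sum_mem fun i _ => hF i)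
  refine ⟨_, hmem u _ (fun n => hφ₁ (r n)) hs₁, _, hmem v _ (fun n => hφ₂ (r n)) hs₂, ?_⟩
  have hsum : ∀ n, ∑ i ∈ Finset.range n, (φ₁ (r i) + φ₂ (r i)) = f - r n := by
    intro n
    induction n with
    | zero => simp [r]
    | succ n ih =>
      rw [Finset.sum_range_succ, ih, hr_succ]
      abel
  have hr0 : Tendsto r atTop (𝓝 0) := by
    refine squeeze_zero_norm hr_norm ?_
    simpa using (tendsto_pow_atTop_nhds_zero_of_lt_one (r := (1 / 2 : ℝ)) (by norm_num)
      (by norm_num)).mul_const ‖f‖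
  refine tendsto_nhds_unique ?_ (hs₁.hasSum.add hs₂.hasSum).tendsto_sum_nat
  simpa [hsum] using tendsto_const_nhds.sub hr0

end Topology

section Necessity

lemma sum_alternating_of_even (a : ℕ → ℝ) (m : ℕ)
    (h : ∀ i, i + 1 < m → Even i → a i = a (i + 1)) :
    ∑ i ∈ Finset.range m, (-1) ^ i * a i = if Even m then 0 else a (m - 1) := by
  induction m with
  | zero => simp
  | succ m ih =>
    rw [Finset.sum_range_succ, ih fun i hi => h i (by omega)]
    rcases m.even_or_odd with hm | ⟨l, rfl⟩
    · simp [hm, hm.neg_one_pow, Nat.even_add_one]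
    · have := h (2 * l) (by omega) (by simp)
      simp [Nat.even_add_one, pow_succ, this]

lemma sum_alternating_of_odd (a : ℕ → ℝ) (m : ℕ)
    (h : ∀ i, i < m → Odd i → a i = a (i + 1)) :
    ∑ i ∈ Finset.range (m + 1), (-1) ^ i * a i = a 0 - if Even m then 0 else a m := by
  induction m with
  | zero => simp
  | succ m ih =>
    rw [Finset.sum_range_succ, ih fun i hi => h i (by omega)]
    rcases m.even_or_odd with hm | hm
    · simp [hm, pow_succ, hm.neg_one_pow, Nat.even_add_one]
      ring
    · simp [Nat.not_even_iff_odd.2 hm, hm.neg_one_pow, pow_succ, Nat.even_add_one,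
        h m (by omega) hm]

variable {X : Type*} [TopologicalSpace X]

lemma exists_alternating [CompactSpace X] [T2Space X] (q : ℕ → X) (m : ℕ)
    (h : ∀ i < m, ∀ j < m, Even i → Odd j → q i ≠ q j) :
    ∃ f : C(X, ℝ), ‖f‖ ≤ 1 ∧ ∀ k < m, f (q k) = (-1) ^ k := by
  have hfin : ∀ P : ℕ → Prop, IsClosed (q '' {i | i < m ∧ P i}) := fun P =>
    (((finite_lt_nat m).subset fun i hi => hi.1).image q).isClosed
  obtain ⟨g, h0, h1, h01⟩ := exists_continuous_zero_one_of_isClosed (hfin Even) (hfin Odd) (by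
    rw [Set.disjoint_left]
    rintro _ ⟨i, ⟨hi, hie⟩, rfl⟩ ⟨j, ⟨hj, hjo⟩, e⟩
    exact h i hi j hj hie hjo e.symm)
  refine ⟨1 - (2 : ℝ) • g, (ContinuousMap.norm_le _ zero_le_one).2 fun x => ?_, fun k hk => ?_⟩
  · have := h01 x
    rw [Real.norm_eq_abs, abs_le]
    simp only [ContinuousMap.sub_apply, ContinuousMap.one_apply, ContinuousMap.smul_apply,
      smul_eq_mul]
    constructor <;> linarith [this.1, this.2]
  · rcases k.even_or_odd with hk' | hk'
    · simp [h0 ⟨k, ⟨hk, hk'⟩, rfl⟩, hk'.neg_one_pow]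
    · simp [h1 ⟨k, ⟨hk, hk'⟩, rfl⟩, hk'.neg_one_pow]
      norm_num

lemma sum_alternating_eq {q : ℕ → X} {m : ℕ} {f F₁ F₂ : C(X, ℝ)} (hf : f = F₁ + F₂)
    (h : ∀ k < m, f (q k) = (-1) ^ k) :
    (m : ℝ) = ∑ i ∈ Finset.range m, (-1) ^ i * F₁ (q i) +
      ∑ i ∈ Finset.range m, (-1) ^ i * F₂ (q i) := by
  rw [← Finset.sum_add_distrib]
  have : ∀ i ∈ Finset.range m, (-1) ^ i * F₁ (q i) + (-1) ^ i * F₂ (q i) = (1 : ℝ) := by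
    intro i hi
    rw [← mul_add, ← ContinuousMap.add_apply, ← hf, h i (Finset.mem_range.1 hi), ← mul_pow]
    simp
  rw [Finset.sum_congr rfl this]
  simp

variable [CompactSpace X] {u v : C(X, ℝ)}

lemma not_closed_of_exists_add_eq [T2Space X]
    (hs : ∀ f : C(X, ℝ), ∃ F₁ ∈ fiberConst u, ∃ F₂ ∈ fiberConst v, f = F₁ + F₂)
    {m : ℕ} (hm : Odd m) {q : ℕ → X}
    (hq : ∀ i < m + 1, ∀ j < m + 1, Even i → Odd j → q i ≠ q j)
    (hu : ∀ i < m, Even i → u (q i) = u (q (i + 1)))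
    (hv : ∀ i < m, Odd i → v (q i) = v (q (i + 1))) : v (q m) ≠ v (q 0) := by
  intro hc
  obtain ⟨f, -, hf⟩ := exists_alternating q (m + 1) hq
  obtain ⟨F₁, h₁, F₂, h₂, e⟩ := hs f
  have hsum := sum_alternating_eq e hf
  rw [sum_alternating_of_even (fun i => F₁ (q i)) _ fun i hi he => h₁ _ _ (hu i (by omega) he),
    sum_alternating_of_odd (fun i => F₂ (q i)) _ fun i hi he => h₂ _ _ (hv i hi he),
    if_pos hm.add_one, if_neg (Nat.not_even_iff_odd.2 hm), h₂ _ _ hc] at hsum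
  push_cast at hsum
  linarith [(Nat.cast_nonneg m : (0 : ℝ) ≤ m)]

lemma AltPath.ne_of_odd [T2Space X]
    (hs : ∀ f : C(X, ℝ), ∃ F₁ ∈ fiberConst u, ∃ F₂ ∈ fiberConst v, f = F₁ + F₂)
    {n : ℕ} {p : ℕ → X} (hp : AltPath u v n p) (k : ℕ) :
    Odd k → ∀ i, i + k < n → p i ≠ p (i + k) := by
  induction k using Nat.strong_induction_on with
  | _ k ih =>
    intro hk i hi e
    rcases k with _ | _ | m
    · simp at hk
    · exact (hp i hi).1 e
    have hm : Odd m := by grind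
    have hq : ∀ a < m + 1, ∀ b < m + 1, Even a → Odd b → p (i + 1 + a) ≠ p (i + 1 + b) := by
      intro a ha b hb hae hbo
      rcases lt_or_gt_of_ne (show a ≠ b by rintro rfl; grind) with h | h
      · have := ih (b - a) (by omega) (by grind) (i + 1 + a) (by omega)
        rwa [show i + 1 + a + (b - a) = i + 1 + b by omega] at this
      · have := ih (a - b) (by omega) (by grind) (i + 1 + b) (by omega)
        rw [show i + 1 + b + (a - b) = i + 1 + a by omega] at this
        exact this.symm
    have hfirst := (hp i (by omega)).2
    have hlast := (hp (i + 1 + m) (by omega)).2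
    rw [show i + 1 + m + 1 = i + (m + 2) by omega, ← e] at hlast
    rcases i.even_or_odd with hie | hio
    · refine not_closed_of_exists_add_eq (u := v) (v := u) (fun f => ?_) hm
        (q := fun j => p (i + 1 + j)) hq (fun j hj h => ?_) (fun j hj h => ?_) ?_
      · obtain ⟨F₁, h₁, F₂, h₂, h⟩ := hs f
        exact ⟨F₂, h₂, F₁, h₁, h.trans (add_comm _ _)⟩
      · exact (hp (i + 1 + j) (by omega)).2.2 (by grind)
      · exact (hp (i + 1 + j) (by omega)).2.1 (by grind)
      · exact (hlast.1 (by grind)).trans (hfirst.1 hie)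
    · refine not_closed_of_exists_add_eq hs hm
        (q := fun j => p (i + 1 + j)) hq (fun j hj h => ?_) (fun j hj h => ?_) ?_
      · exact (hp (i + 1 + j) (by omega)).2.1 (by grind)
      · exact (hp (i + 1 + j) (by omega)).2.2 (by grind)
      · exact (hlast.2 (by grind)).trans (hfirst.2 hio)

/-- If two closed subspaces span a Banach space, every vector splits with controlled norms. -/
lemma exists_norm_bound_of_isClosed {E : Type*} [NormedAddCommGroup E] [NormedSpace ℝ E]
    [CompleteSpace E] {P Q : Submodule ℝ E} (hP : IsClosed (P : Set E))
    (hQ : IsClosed (Q : Set E)) (h : ∀ f : E, ∃ a ∈ P, ∃ b ∈ Q, f = a + b) :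
    ∃ C : ℝ, ∀ f : E, ∃ a ∈ P, ∃ b ∈ Q, ‖a‖ ≤ C * ‖f‖ ∧ ‖b‖ ≤ C * ‖f‖ ∧ f = a + b := by
  have := hP.completeSpace_coe
  have := hQ.completeSpace_coe
  have hT : Surjective (P.subtypeL.coprod Q.subtypeL) := by
    intro f
    obtain ⟨a, ha, b, hb, rfl⟩ := h f
    exact ⟨(⟨a, ha⟩, ⟨b, hb⟩), rfl⟩
  obtain ⟨C, -, hC⟩ := ContinuousLinearMap.exists_preimage_norm_le _ hT
  refine ⟨C, fun f => ?_⟩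
  obtain ⟨⟨a, b⟩, hab, hn⟩ := hC f
  exact ⟨a, a.2, b, b.2, (norm_fst_le (a, b)).trans hn, (norm_snd_le (a, b)).trans hn, hab.symm⟩

lemma exists_norm_bound
    (hs : ∀ f : C(X, ℝ), ∃ F₁ ∈ fiberConst u, ∃ F₂ ∈ fiberConst v, f = F₁ + F₂) :
    ∃ C : ℝ, ∀ f : C(X, ℝ), ∃ F₁ ∈ fiberConst u, ∃ F₂ ∈ fiberConst v,
      ‖F₁‖ ≤ C * ‖f‖ ∧ ‖F₂‖ ≤ C * ‖f‖ ∧ f = F₁ + F₂ :=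
  exists_norm_bound_of_isClosed (isClosed_fiberConst u) (isClosed_fiberConst v) hs

lemma exists_length_bound [T2Space X]
    (hs : ∀ f : C(X, ℝ), ∃ F₁ ∈ fiberConst u, ∃ F₂ ∈ fiberConst v, f = F₁ + F₂) :
    ∃ N : ℕ, ∀ n p, AltPath u v n p → n ≤ N := by
  obtain ⟨C, hC⟩ := exists_norm_bound hs
  refine ⟨⌈3 * C⌉₊, fun n p hp => ?_⟩
  obtain ⟨f, hf1, hf⟩ := exists_alternating p n fun i hi j hj hie hjo => by
    rcases lt_or_gt_of_ne (show i ≠ j by rintro rfl; grind) with h | h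
    · have := hp.ne_of_odd hs (j - i) (by grind) i (by omega)
      rwa [show i + (j - i) = j by omega] at this
    · have := hp.ne_of_odd hs (i - j) (by grind) j (by omega)
      rw [show j + (i - j) = i by omega] at this
      exact this.symm
  rcases n with _ | n
  · exact Nat.zero_le _
  obtain ⟨F₁, h₁, F₂, h₂, hn₁, hn₂, e⟩ := hC f
  have hsum := sum_alternating_eq e hf
  rw [sum_alternating_of_even (fun i => F₁ (p i)) _ fun i hi he => h₁ _ _ ((hp i hi).2.1 he),
    sum_alternating_of_odd (fun i => F₂ (p i)) _ fun i hi he =>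
      h₂ _ _ ((hp i (by omega)).2.2 he)] at hsum
  have hC0 : 0 ≤ C := by
    have hfp : 1 ≤ ‖f‖ := by simpa [hf 0 (by omega)] using f.norm_coe_le_norm (p 0)
    nlinarith [norm_nonneg F₁]
  have hb₁ : ∀ x, |F₁ x| ≤ C := fun x =>
    ((F₁.norm_coe_le_norm x).trans hn₁).trans (mul_le_of_le_one_right hC0 hf1)
  have hb₂ : ∀ x, |F₂ x| ≤ C := fun x =>
    ((F₂.norm_coe_le_norm x).trans hn₂).trans (mul_le_of_le_one_right hC0 hf1)
  have : ((n + 1 : ℕ) : ℝ) ≤ 3 * C := by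
    rw [hsum]
    have c₁ := abs_le.1 (hb₁ (p (n + 1 - 1)))
    have c₂ := abs_le.1 (hb₂ (p 0))
    have c₃ := abs_le.1 (hb₂ (p n))
    split_ifs <;> linarith
  exact_mod_cast this.trans (Nat.le_ceil _)

end Necessity

section Directions

variable {d : ℕ} {a1 a2 : Fin d → ℝ} {X : Set (Fin d → ℝ)}

/-- The function `x ↦ a · x` on `X`. -/
def dotOn (a : Fin d → ℝ) (X : Set (Fin d → ℝ)) : C(X, ℝ) :=
  ⟨fun x => ∑ t, a t * x.1 t, continuous_finsetSum _ fun t _ =>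
    continuous_const.mul ((continuous_apply t).comp continuous_subtype_val)⟩

lemma forall_even_odd_iff {n : ℕ} {P Q : ℕ → Prop} :
    ((∀ i, 2 * i + 1 < n → P (2 * i)) ∧ ∀ i, 2 * i + 2 < n → Q (2 * i + 1)) ↔
      ∀ i, i + 1 < n → (Even i → P i) ∧ (Odd i → Q i) := by
  constructor
  · rintro ⟨hP, hQ⟩ i hi
    refine ⟨?_, ?_⟩
    · rintro ⟨k, rfl⟩
      have := hP k (by omega)
      rwa [two_mul] at this
    · rintro ⟨k, rfl⟩
      exact hQ k (by omega)
  · exact fun h => ⟨fun i hi => (h _ hi).1 (by simp), fun i hi => (h _ hi).2 (by simp)⟩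

lemma finPath_iff {n : ℕ} {p : ℕ → Fin d → ℝ} {q : ℕ → X} (hq : ∀ i < n, (q i : Fin d → ℝ) = p i) :
    FinPath a1 a2 X n p ↔ AltPath (dotOn a1 X) (dotOn a2 X) n q ∨
      AltPath (dotOn a2 X) (dotOn a1 X) n q := by
  have hval : ∀ a : Fin d → ℝ, ∀ i < n, dotOn a X (q i) = ∑ t, a t * p i t := fun a i hi => by
    simp [dotOn, hq i hi]
  have hmem : ∀ i < n, p i ∈ X := fun i hi => hq i hi ▸ (q i).2
  have hne : ∀ i, i + 1 < n → (q i ≠ q (i + 1) ↔ p i ≠ p (i + 1)) := fun i hi => by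
    rw [← hq i (by omega), ← hq (i + 1) hi, Ne, Ne, Subtype.ext_iff]
  have key : ∀ a b : Fin d → ℝ, AltPath (dotOn a X) (dotOn b X) n q ↔
      (∀ i, i + 1 < n → p i ≠ p (i + 1)) ∧
      ((∀ i, 2 * i + 1 < n → ∑ t, a t * p (2 * i) t = ∑ t, a t * p (2 * i + 1) t) ∧
        (∀ i, 2 * i + 2 < n → ∑ t, b t * p (2 * i + 1) t = ∑ t, b t * p (2 * i + 2) t)) := by
    intro a b
    rw [forall_even_odd_iff (P := fun i => ∑ t, a t * p i t = ∑ t, a t * p (i + 1) t)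
      (Q := fun i => ∑ t, b t * p i t = ∑ t, b t * p (i + 1) t), ← forall_and]
    refine forall_congr' fun i => ?_
    rw [← imp_and]
    refine imp_congr_right fun hi => ?_
    rw [hne i hi, hval a i (by omega), hval a (i + 1) hi, hval b i (by omega), hval b (i + 1) hi]
  rw [key, key, ← and_or_left, FinPath]
  exact and_iff_right hmem

lemma bounded_finPath_iff {N : ℕ} : (∀ n p, FinPath a1 a2 X n p → n ≤ N) ↔
    ∀ n p, AltPath (dotOn a1 X) (dotOn a2 X) n p ∨ AltPath (dotOn a2 X) (dotOn a1 X) n p →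
      n ≤ N := by
  constructor
  · exact fun h n q hq => h n (fun i => q i) ((finPath_iff fun i _ => rfl).2 hq)
  · intro h n p hp
    rcases n.eq_zero_or_pos with rfl | hn
    · exact Nat.zero_le _
    · refine h n (fun i => if hi : i < n then ⟨p i, hp.1 i hi⟩ else ⟨p 0, hp.1 0 hn⟩)
        ((finPath_iff fun i hi => ?_).1 hp)
      simp [hi]

lemma PathSeq.finPath {p : ℕ → Fin d → ℝ} (hp : PathSeq a1 a2 X p) (n : ℕ) :
    FinPath a1 a2 X n p :=
  ⟨fun i _ => hp.1 i, fun i _ => hp.2.1 i,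
    hp.2.2.imp (fun h => ⟨fun i _ => h.1 i, fun i _ => h.2 i⟩)
      (fun h => ⟨fun i _ => h.1 i, fun i _ => h.2 i⟩)⟩

lemma forall_exists_ridge_iff [CompactSpace X] :
    (∀ f : (Fin d → ℝ) → ℝ, ContinuousOn f X →
      ∃ g1 g2 : ℝ → ℝ, Continuous g1 ∧ Continuous g2 ∧
        ∀ x ∈ X, f x = g1 (∑ t, a1 t * x t) + g2 (∑ t, a2 t * x t)) ↔
    ∀ f : C(X, ℝ), ∃ F₁ ∈ fiberConst (dotOn a1 X), ∃ F₂ ∈ fiberConst (dotOn a2 X),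
      f = F₁ + F₂ := by
  constructor
  · intro h f
    have hf : X.domRestrict (Function.extend Subtype.val f 0) = f := by
      ext x
      exact Subtype.val_injective.extend_apply f 0 x
    obtain ⟨g₁, g₂, h₁, h₂, hg⟩ := h (Function.extend Subtype.val f 0)
      (continuousOn_iff_continuous_domRestrict.2 (by rw [hf]; exact f.continuous))
    refine ⟨_, comp_mem_fiberConst _ ⟨g₁, h₁⟩, _, comp_mem_fiberConst _ ⟨g₂, h₂⟩, ?_⟩
    ext x
    exact (congrFun hf x).symm.trans (hg x x.2)
  · intro h f hf
    obtain ⟨F₁, h₁, F₂, h₂, e⟩ := h ⟨X.domRestrict f, continuousOn_iff_continuous_domRestrict.1 hf⟩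
    obtain ⟨g₁, hg₁⟩ := exists_comp_eq_of_mem_fiberConst h₁
    obtain ⟨g₂, hg₂⟩ := exists_comp_eq_of_mem_fiberConst h₂
    refine ⟨g₁, g₂, g₁.continuous, g₂.continuous, fun x hx => ?_⟩
    refine (DFunLike.congr_fun e ⟨x, hx⟩).trans ?_
    rw [ContinuousMap.add_apply, hg₁, hg₂]
    rfl

end Directions

end AlternatingPath

/-- For a compact set `X ⊆ ℝᵈ`, one has
`H₁(X) + H₂(X) = C(X)` (every continuous function on `X` is a sum
`g₁(a¹·x) + g₂(a²·x)` with `g₁, g₂ ∈ C(ℝ)`) if and only if `X` contains no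
closed path and the lengths of all paths in `X` are bounded by some positive
integer `n₀`. -/
theorem stmt6 {d : ℕ} (a1 a2 : Fin d → ℝ) (ha1 : a1 ≠ 0) (ha2 : a2 ≠ 0)
    (X : Set (Fin d → ℝ)) (hX : IsCompact X) :
    (∀ f : (Fin d → ℝ) → ℝ, ContinuousOn f X →
      ∃ g1 g2 : ℝ → ℝ, Continuous g1 ∧ Continuous g2 ∧
        ∀ x ∈ X, f x = g1 (∑ t, a1 t * x t) + g2 (∑ t, a2 t * x t)) ↔
    ((¬ ∃ p : ℕ → Fin d → ℝ, ClosedPathSeq a1 a2 X p) ∧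
      ∃ n0 : ℕ, 0 < n0 ∧
        ∀ (n : ℕ) (p : ℕ → Fin d → ℝ), FinPath a1 a2 X n p → n ≤ n0) := by
  have := isCompact_iff_compactSpace.1 hX
  rw [AlternatingPath.forall_exists_ridge_iff]
  constructor
  · intro h
    obtain ⟨N₁, hN₁⟩ := AlternatingPath.exists_length_bound h
    obtain ⟨N₂, hN₂⟩ := AlternatingPath.exists_length_bound fun f => by
      obtain ⟨F₁, h₁, F₂, h₂, e⟩ := h f
      exact ⟨F₂, h₂, F₁, h₁, e.trans (add_comm _ _)⟩
    have hb : ∀ n p, FinPath a1 a2 X n p → n ≤ N₁ + N₂ + 1 := by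
      refine AlternatingPath.bounded_finPath_iff.2 fun n p hp => ?_
      rcases hp with hp | hp
      · have := hN₁ n p hp
        omega
      · have := hN₂ n p hp
        omega
    refine ⟨?_, N₁ + N₂ + 1, by omega, hb⟩
    rintro ⟨p, hp, -⟩
    have := hb _ p (AlternatingPath.PathSeq.finPath hp (N₁ + N₂ + 2))
    omega
  · rintro ⟨-, N, -, hN⟩ f
    exact AlternatingPath.exists_add_eq (AlternatingPath.bounded_finPath_iff.1 hN) f
end

section
/- Let a^1, ..., a^k be pairwise linearly independent vectors in ℝ^n and suppose a continuous function f ∈ C(ℝ^n) has the form f(x) = ∑_{i=1}^k f_i(a^i·x), where f_1, ..., f_k : ℝ → ℝ are arbitrarily behaved functions. Then there exist continuous functions g_1, ..., g_k : ℝ → ℝ and a polynomial P : ℝ^n → ℝ of total degree at most k − 1 such that f(x) = ∑_{i=1}^k g_i(a^i·x) + P(x) for all x ∈ ℝ^n. -/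
open fwdDiff Filter Topology

/-- The additive subgroup of dyadic rationals in `ℝ`. -/
def dyadicReals : AddSubgroup ℝ where
  carrier := {x | ∃ (n : ℕ) (z : ℤ), x * 2 ^ n = z}
  zero_mem' := ⟨0, 0, by simp⟩
  add_mem' := by
    rintro x y ⟨n, z, hx⟩ ⟨m, w, hy⟩
    refine ⟨n + m, z * 2 ^ m + w * 2 ^ n, ?_⟩
    push_cast
    rw [← hx, ← hy]
    ring
  neg_mem' := by
    rintro x ⟨n, z, hx⟩
    exact ⟨n, -z, by push_cast; rw [← hx]; ring⟩

theorem one_mem_dyadicReals : (1 : ℝ) ∈ dyadicReals := ⟨0, 1, by simp⟩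

theorem dense_dyadicReals : Dense (dyadicReals : Set ℝ) := by
  refine AddSubgroup.dense_of_not_isolated_zero _ fun ε hε => ?_
  obtain ⟨n, hn⟩ := exists_pow_lt_of_lt_one hε (show (1 / 2 : ℝ) < 1 by norm_num)
  exact ⟨(1 / 2) ^ n, ⟨n, 1, by rw [← mul_pow]; norm_num⟩, by positivity, hn⟩

theorem fwdDiff_iter_zero_step {M G : Type*} [AddCommMonoid M] [AddCommGroup G] (F : M → G)
    {k : ℕ} (hk : k ≠ 0) (y : M) : (Δ_[0])^[k] F y = 0 := by
  obtain ⟨k, rfl⟩ := Nat.exists_eq_succ_of_ne_zero hk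
  rw [Function.iterate_succ_apply']
  simp [fwdDiff]

theorem fwdDiff_iter_two_mul (F : ℝ → ℝ) (k : ℕ) (h y : ℝ) :
    (Δ_[2 * h])^[k] F y =
      ∑ j ∈ Finset.range (k + 1), (k.choose j * 2 ^ (k - j) : ℝ) * (Δ_[h])^[k + j] F y := by
  have h2 : fwdDiff_aux.fwdDiffₗ ℝ ℝ (2 * h) =
      fwdDiff_aux.fwdDiffₗ ℝ ℝ h * (fwdDiff_aux.fwdDiffₗ ℝ ℝ h + 2) := by
    ext F y
    change F (y + 2 * h) - F y = _
    simp only [mul_add, LinearMap.add_apply, Module.End.mul_apply, fwdDiff_aux.coe_fwdDiffₗ,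
      Pi.add_apply, mul_two]
    simp only [fwdDiff]
    rw [show y + 2 * h = y + h + h by ring]
    ring
  rw [← fwdDiff_aux.coe_fwdDiffₗ_pow, h2, Commute.mul_pow (by
    exact (Commute.refl _).add_right (Commute.ofNat_right _ 2)),
    (Commute.ofNat_right (fwdDiff_aux.fwdDiffₗ ℝ ℝ h) 2).add_pow, Finset.mul_sum,
    LinearMap.sum_apply, Finset.sum_apply]
  refine Finset.sum_congr rfl fun j _ => ?_
  have : fwdDiff_aux.fwdDiffₗ ℝ ℝ h ^ k * (fwdDiff_aux.fwdDiffₗ ℝ ℝ h ^ j * 2 ^ (k - j) *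
      (k.choose j : Module.End ℤ (ℝ → ℝ))) =
      (k.choose j * 2 ^ (k - j)) • fwdDiff_aux.fwdDiffₗ ℝ ℝ h ^ (k + j) := by
    rw [nsmul_eq_mul, (Nat.cast_commute _ _).eq, pow_add]
    push_cast
    rw [(Nat.cast_commute (k.choose j) ((2 : Module.End ℤ (ℝ → ℝ)) ^ (k - j))).eq]
    simp only [mul_assoc]
  rw [this, LinearMap.smul_apply, fwdDiff_aux.coe_fwdDiffₗ_pow]
  simp

theorem continuous_fwdDiff_iter_of_le {F : ℝ → ℝ} {m : ℕ}
    (hF : Continuous fun p : ℝ × ℝ => (Δ_[p.2])^[m] F p.1) {j : ℕ} (hj : m ≤ j) :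
    Continuous fun p : ℝ × ℝ => (Δ_[p.2])^[j] F p.1 := by
  induction j, hj using Nat.le_induction with
  | base => exact hF
  | succ j _ ih =>
    simp only [Function.iterate_succ_apply']
    exact (ih.comp (by fun_prop : Continuous fun p : ℝ × ℝ => (p.1 + p.2, p.2))).sub ih

theorem fwdDiff_iter_two_mul_sub (F : ℝ → ℝ) (k : ℕ) (h y : ℝ) :
    (Δ_[2 * h])^[k] F y - 2 ^ k * (Δ_[h])^[k] F y =
      ∑ j ∈ Finset.range k,
        (k.choose (j + 1) * 2 ^ (k - (j + 1)) : ℝ) * (Δ_[h])^[k + (j + 1)] F y := by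
  rw [fwdDiff_iter_two_mul, Finset.sum_range_succ']
  simp

theorem abs_fwdDiff_iter_two_mul_sub_le {F : ℝ → ℝ} {k : ℕ} {h y B : ℝ}
    (hB : ∀ j ∈ Finset.range k, |(Δ_[h])^[k + (j + 1)] F y| ≤ B) (hB0 : 0 ≤ B) :
    |(Δ_[2 * h])^[k] F y - 2 ^ k * (Δ_[h])^[k] F y| ≤ 3 ^ k * B := by
  rw [fwdDiff_iter_two_mul_sub]
  calc _ ≤ ∑ j ∈ Finset.range k, (k.choose (j + 1) * 2 ^ (k - (j + 1)) : ℝ) * B := by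
        refine (Finset.abs_sum_le_sum_abs _ _).trans (Finset.sum_le_sum fun j hj => ?_)
        rw [abs_mul, abs_of_nonneg (by positivity : (0 : ℝ) ≤ k.choose (j + 1) * 2 ^ (k - (j + 1)))]
        exact mul_le_mul_of_nonneg_left (hB j hj) (by positivity)
    _ ≤ 3 ^ k * B := by
        rw [← Finset.sum_mul]
        refine mul_le_mul_of_nonneg_right ?_ hB0
        have := add_pow (1 : ℝ) 2 k
        rw [Finset.sum_range_succ'] at this
        norm_num at this
        rw [this]
        simp only [mul_comm]
        simp

/-- Iterated differences of order `k` are bounded on bounded sets of dyadic base points, for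
dyadic steps of size at most `1/2`. -/
def DyadicBounded (F : ℝ → ℝ) (k : ℕ) : Prop :=
  ∀ R : ℝ, ∃ C : ℝ, 0 ≤ C ∧ ∀ y ∈ dyadicReals, |y| ≤ R → ∀ h ∈ dyadicReals, |h| ≤ 1 / 2 →
    |(Δ_[h])^[k] F y| ≤ C

/-- Iterated differences of order `k` tend to zero with the dyadic step, uniformly on bounded sets
of dyadic base points. -/
def DyadicVanishing (F : ℝ → ℝ) (k : ℕ) : Prop :=
  ∀ R ε : ℝ, 0 < ε → ∃ δ > 0, ∀ y ∈ dyadicReals, |y| ≤ R → ∀ h ∈ dyadicReals, |h| ≤ δ →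
    |(Δ_[h])^[k] F y| ≤ ε

theorem DyadicBounded.of_continuous {F : ℝ → ℝ} {k : ℕ}
    (hF : Continuous fun p : ℝ × ℝ => (Δ_[p.2])^[k] F p.1) : DyadicBounded F k := by
  intro R
  obtain ⟨C, hC⟩ := ((isCompact_Icc (a := -R) (b := R)).prod
    (isCompact_Icc (a := (-(1 / 2) : ℝ)) (b := 1 / 2))).exists_bound_of_continuousOn hF.continuousOn
  exact ⟨|C|, abs_nonneg _, fun y _ hy h _ hh =>
    (hC (y, h) ⟨abs_le.1 hy, abs_le.1 hh⟩).trans (le_abs_self C)⟩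

theorem DyadicVanishing.of_continuous {F : ℝ → ℝ} {k : ℕ} (hk : k ≠ 0)
    (hF : Continuous fun p : ℝ × ℝ => (Δ_[p.2])^[k] F p.1) : DyadicVanishing F k := by
  intro R ε hε
  have huc := ((isCompact_Icc (a := -R) (b := R)).prod
    (isCompact_Icc (a := (-1 : ℝ)) (b := 1))).uniformContinuousOn_of_continuous hF.continuousOn
  obtain ⟨δ, hδ, H⟩ := Metric.uniformContinuousOn_iff_le.1 huc ε hε
  refine ⟨min δ 1, by positivity, fun y _ hy h _ hh => ?_⟩
  have := H (y, h) ⟨abs_le.1 hy, abs_le.1 (hh.trans (min_le_right _ _))⟩ (y, 0)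
    ⟨abs_le.1 hy, by norm_num⟩ (by
      simpa [Prod.dist_eq, hδ.le] using hh.trans (min_le_left _ _))
  simpa [fwdDiff_iter_zero_step F hk, Real.dist_eq] using this

theorem exists_bound_dyadic_of_common {F : ℝ → ℝ} {k : ℕ}
    (H : ∀ j > k, DyadicBounded F j) (R : ℝ) :
    ∃ C : ℝ, 0 ≤ C ∧ ∀ y ∈ dyadicReals, |y| ≤ R → ∀ h ∈ dyadicReals, |h| ≤ 1 / 2 →
      |(Δ_[2 * h])^[k] F y - 2 ^ k * (Δ_[h])^[k] F y| ≤ C := by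
  choose C hC0 hC using fun j : ℕ => H (k + (j + 1)) (by omega) R
  refine ⟨3 ^ k * ∑ j ∈ Finset.range k, C j,
    mul_nonneg (by positivity) (Finset.sum_nonneg fun j _ => hC0 j),
    fun y hy hyR h hh hhR => ?_⟩
  exact abs_fwdDiff_iter_two_mul_sub_le (fun j hj => (hC j y hy hyR h hh hhR).trans
    (Finset.single_le_sum (fun j _ => hC0 j) hj)) (Finset.sum_nonneg fun j _ => hC0 j)

/-- If `F (y + 1) - F y` is bounded on bounded sets of dyadics, so are the changes of iterated
differences under changing the step by one. -/
theorem exists_bound_fwdDiff_iter_add_one {F : ℝ → ℝ}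
    (h1 : ∀ R : ℝ, ∃ C : ℝ, ∀ y ∈ dyadicReals, |y| ≤ R → |F (y + 1) - F y| ≤ C) (k : ℕ) (R : ℝ) :
    ∃ C : ℝ, 0 ≤ C ∧ ∀ y ∈ dyadicReals, |y| ≤ R → ∀ h ∈ dyadicReals, |h| ≤ 1 →
      |(Δ_[h + 1])^[k] F y - (Δ_[h])^[k] F y| ≤ C := by
  have hshift : ∀ j : ℕ, ∀ R : ℝ, ∃ C : ℝ, 0 ≤ C ∧ ∀ y ∈ dyadicReals, |y| ≤ R →
      |F (y + j) - F y| ≤ C := by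
    intro j
    induction j with
    | zero => exact fun R => ⟨0, le_rfl, by simp⟩
    | succ j ih =>
      intro R
      obtain ⟨C, hC0, hC⟩ := ih R
      obtain ⟨C', hC'⟩ := h1 (R + j)
      refine ⟨C + |C'|, by positivity, fun y hy hyR => ?_⟩
      have hj : (j : ℝ) ∈ dyadicReals := ⟨0, j, by simp⟩
      have e1 := hC y hy hyR
      have e2 := (hC' (y + j) (add_mem hy hj) ((abs_add_le _ _).trans (by
        rw [Nat.abs_cast]; linarith))).trans (le_abs_self C')
      push_cast
      rw [← add_assoc]
      calc _ = |(F (y + j + 1) - F (y + j)) + (F (y + j) - F y)| := by ring_nf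
        _ ≤ _ := (abs_add_le _ _).trans (by linarith)
  choose C hC0 hC using fun j : ℕ => hshift j (R + j)
  refine ⟨∑ j ∈ Finset.range (k + 1), k.choose j * C j,
    Finset.sum_nonneg fun j _ => mul_nonneg (by positivity) (hC0 j), fun y hy hyR h hh hhR => ?_⟩
  rw [fwdDiff_iter_eq_sum_shift, fwdDiff_iter_eq_sum_shift, ← Finset.sum_sub_distrib]
  refine (Finset.abs_sum_le_sum_abs _ _).trans (Finset.sum_le_sum fun j _ => ?_)
  rw [← smul_sub, zsmul_eq_mul, abs_mul]
  push_cast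
  rw [abs_mul, abs_pow, abs_neg, abs_one, one_pow, one_mul, Nat.abs_cast]
  refine mul_le_mul_of_nonneg_left ?_ (by positivity)
  have := hC j (y + j * h) (add_mem hy (by simpa using nsmul_mem hh j))
    ((abs_add_le _ _).trans (by
      rw [abs_mul, Nat.abs_cast]
      nlinarith [(Nat.cast_nonneg j : (0 : ℝ) ≤ j)]))
  rwa [nsmul_eq_mul, nsmul_eq_mul, mul_add, mul_one, ← add_assoc]

theorem DyadicBounded.of_forall_gt {F : ℝ → ℝ} {k : ℕ} (hk : k ≠ 0)
    (h1 : ∀ R : ℝ, ∃ C : ℝ, ∀ y ∈ dyadicReals, |y| ≤ R → |F (y + 1) - F y| ≤ C)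
    (H : ∀ j > k, DyadicBounded F j) : DyadicBounded F k := by
  intro R
  obtain ⟨C₁, hC₁, H₁⟩ := exists_bound_dyadic_of_common H R
  obtain ⟨C₂, hC₂, H₂⟩ := exists_bound_fwdDiff_iter_add_one h1 k R
  refine ⟨C₁ + C₂, by positivity, ?_⟩
  rintro y hy hyR h ⟨n, z, hz⟩ hh
  induction n generalizing h z with
  | zero =>
    have hz0 : z = 0 := by
      rw [pow_zero, mul_one] at hz
      rw [hz] at hh
      have : |(z : ℝ)| < 1 := by linarith
      exact Int.abs_lt_one_iff.1 (by exact_mod_cast this)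
    have : h = 0 := by simpa [hz0] using hz
    rw [this, fwdDiff_iter_zero_step F hk, abs_zero]
    positivity
  | succ n ih =>
    have hd : h ∈ dyadicReals := ⟨n + 1, z, hz⟩
    have hd2 : 2 * h ∈ dyadicReals := by rw [two_mul]; exact add_mem hd hd
    have hz2 : 2 * h * 2 ^ n = z := by rw [← hz]; ring
    have key : |(Δ_[2 * h])^[k] F y| ≤ (C₁ + C₂) + C₂ := by
      rw [abs_le] at hh
      rcases lt_or_ge (1 / 2) (2 * h) with hlt | hle
      · have e1 := ih (2 * h - 1) (z - 2 ^ n) (by push_cast; rw [← hz2]; ring)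
          (abs_le.2 ⟨by linarith, by linarith⟩)
        have e2 := H₂ y hy hyR (2 * h - 1) (sub_mem hd2 one_mem_dyadicReals)
          (abs_le.2 ⟨by linarith, by linarith⟩)
        rw [sub_add_cancel] at e2
        have := abs_sub_abs_le_abs_sub ((Δ_[2 * h])^[k] F y) ((Δ_[2 * h - 1])^[k] F y)
        linarith
      rcases lt_or_ge (2 * h) (-(1 / 2)) with hlt' | hle'
      · have e1 := ih (2 * h + 1) (z + 2 ^ n) (by push_cast; rw [← hz2]; ring)
          (abs_le.2 ⟨by linarith, by linarith⟩)
        have e2 := H₂ y hy hyR (2 * h) hd2 (abs_le.2 ⟨by linarith, by linarith⟩)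
        have := abs_sub_abs_le_abs_sub ((Δ_[2 * h])^[k] F y) ((Δ_[2 * h + 1])^[k] F y)
        rw [abs_sub_comm] at this
        linarith
      · have := ih (2 * h) z hz2 (abs_le.2 ⟨by linarith, by linarith⟩)
        linarith
    have e := H₁ y hy hyR h hd hh
    have h2k : (2 : ℝ) ≤ 2 ^ k := by
      simpa using pow_le_pow_right₀ (one_le_two : (1 : ℝ) ≤ 2) (Nat.one_le_iff_ne_zero.2 hk)
    have := abs_sub_abs_le_abs_sub (2 ^ k * (Δ_[h])^[k] F y) ((Δ_[2 * h])^[k] F y)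
    rw [abs_sub_comm, abs_mul, abs_of_nonneg (by positivity : (0 : ℝ) ≤ 2 ^ k)] at this
    nlinarith [abs_nonneg ((Δ_[h])^[k] F y)]

theorem DyadicVanishing.of_forall_gt {F : ℝ → ℝ} {k : ℕ} (hk : k ≠ 0)
    (hb : DyadicBounded F k) (H : ∀ j > k, DyadicVanishing F j) : DyadicVanishing F k := by
  intro R ε hε
  obtain ⟨C, hC0, hC⟩ := hb R
  choose δ hδ0 hδ using fun j : ℕ => H (k + (j + 1)) (by omega) R (ε / 2 / 3 ^ k) (by positivity)
  obtain ⟨d, hd0, hd⟩ : ∃ d > 0, d ≤ 1 / 2 ∧ ∀ j ∈ Finset.range k, d ≤ δ j := by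
    refine ⟨min (1 / 2) ((Finset.range k).inf' (by simpa using hk) δ), ?_, min_le_left _ _,
      fun j hj => (min_le_right _ _).trans (Finset.inf'_le _ hj)⟩
    exact lt_min (by norm_num) ((Finset.lt_inf'_iff _).2 fun j _ => hδ0 j)
  have h2k : (2 : ℝ) ≤ 2 ^ k := by
    simpa using pow_le_pow_right₀ (one_le_two : (1 : ℝ) ≤ 2) (Nat.one_le_iff_ne_zero.2 hk)
  have key : ∀ n : ℕ, ∀ y ∈ dyadicReals, |y| ≤ R → ∀ h ∈ dyadicReals, |h| ≤ d / 2 ^ n →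
      |(Δ_[h])^[k] F y| ≤ C / 2 ^ n + ε / 2 := by
    intro n y hy hyR
    induction n with
    | zero =>
      intro h hh hhd
      have := hC y hy hyR h hh (by simpa using hhd.trans (by simpa using hd.1))
      rw [pow_zero, div_one]
      linarith
    | succ n ih =>
      intro h hh hhd
      have hhd' : |h| ≤ d := hhd.trans (div_le_self hd0.le (one_le_pow₀ one_le_two))
      have e1 := ih (2 * h) (by rw [two_mul]; exact add_mem hh hh) (by
        rw [abs_mul, abs_two]
        calc 2 * |h| ≤ 2 * (d / 2 ^ (n + 1)) := by linarith
          _ = d / 2 ^ n := by rw [pow_succ]; field_simp)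
      have e2 := abs_fwdDiff_iter_two_mul_sub_le (F := F) (k := k) (h := h) (y := y)
        (B := ε / 2 / 3 ^ k)
        (fun j hj => hδ j y hy hyR h hh (hhd'.trans (hd.2 j hj))) (by positivity)
      rw [mul_div_cancel₀ _ (by positivity : (3 : ℝ) ^ k ≠ 0)] at e2
      have := abs_sub_abs_le_abs_sub (2 ^ k * (Δ_[h])^[k] F y) ((Δ_[2 * h])^[k] F y)
      rw [abs_sub_comm, abs_mul, abs_of_nonneg (by positivity : (0 : ℝ) ≤ 2 ^ k)] at this
      have e3 : C / 2 ^ (n + 1) = C / 2 ^ n / 2 := by rw [pow_succ]; field_simp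
      rw [e3]
      nlinarith [abs_nonneg ((Δ_[h])^[k] F y)]
  obtain ⟨n, hn⟩ := pow_unbounded_of_one_lt (C / (ε / 2)) (one_lt_two : (1 : ℝ) < 2)
  refine ⟨d / 2 ^ n, by positivity, fun y hy hyR h hh hhd => (key n y hy hyR h hh hhd).trans ?_⟩
  have : C / 2 ^ n ≤ ε / 2 := by
    rw [div_lt_iff₀ (by positivity)] at hn
    rw [div_le_iff₀ (by positivity)]
    linarith
  linarith

theorem exists_continuous_eqOn_dyadicReals {F : ℝ → ℝ} (hF : DyadicVanishing F 1) :
    ∃ g : ℝ → ℝ, Continuous g ∧ ∀ y ∈ dyadicReals, g y = F y := by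
  have di : IsDenseInducing ((↑) : dyadicReals → ℝ) :=
    dense_dyadicReals.isDenseEmbedding_val.isDenseInducing
  have hc : ∀ b : ℝ, Cauchy (map (fun y : dyadicReals => F y) (comap (↑) (𝓝 b))) := by
    intro b
    have : NeBot (comap ((↑) : dyadicReals → ℝ) (𝓝 b)) := di.comap_nhds_neBot b
    rw [Metric.cauchy_iff]
    refine ⟨inferInstance, fun ε hε => ?_⟩
    obtain ⟨δ, hδ, H⟩ := hF (|b| + 1) (ε / 2) (by positivity)
    refine ⟨_, image_mem_map (preimage_mem_comap
      (Metric.ball_mem_nhds b (lt_min one_pos (half_pos hδ)))), ?_⟩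
    rintro _ ⟨x, hx, rfl⟩ _ ⟨y, hy, rfl⟩
    simp only [Set.mem_preimage, Metric.mem_ball, Real.dist_eq, lt_min_iff] at hx hy
    have hyx := H y y.2 (by
      have := abs_sub_abs_le_abs_sub (y : ℝ) b
      linarith [hy.1]) (x - y) (sub_mem x.2 y.2) (by
        have := abs_sub_le (x : ℝ) b y
        rw [abs_sub_comm b] at this
        linarith [hx.2, hy.2])
    simp only [Function.iterate_one, fwdDiff, add_sub_cancel] at hyx
    rw [Real.dist_eq]
    linarith
  refine ⟨di.extend fun y => F y, di.continuous_extend_of_cauchy hc, fun y hy => ?_⟩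
  have hcont : Continuous fun y : dyadicReals => F y := by
    rw [continuous_iff_continuousAt]
    intro y
    have := hc y
    rw [← di.nhds_eq_comap] at this
    obtain ⟨c, hcl⟩ := CompleteSpace.complete this
    have h2 : Tendsto (fun y : dyadicReals => F y) (𝓝 y) (𝓝 c) := hcl
    rwa [tendsto_nhds_unique (h2.mono_left (pure_le_nhds y)) (tendsto_pure_nhds _ y)] at h2
  exact di.extend_eq hcont ⟨y, hy⟩

/-- If the iterated differences `Δ_h^a Δ_1^b F` with `a + b = m` are jointly continuous in the base
point and in `h`, then `F` agrees on the dyadic rationals with a continuous function. -/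
theorem exists_continuous_eqOn_dyadicReals_of_fwdDiff {m : ℕ} {F : ℝ → ℝ}
    (hF : ∀ a b : ℕ, a + b = m →
      Continuous fun p : ℝ × ℝ => (Δ_[p.2])^[a] ((Δ_[(1 : ℝ)])^[b] F) p.1) :
    ∃ g : ℝ → ℝ, Continuous g ∧ ∀ y ∈ dyadicReals, g y = F y := by
  induction m generalizing F with
  | zero =>
    exact ⟨F, (hF 0 0 rfl).comp (by fun_prop : Continuous fun y : ℝ => (y, (0 : ℝ))),
      fun _ _ => rfl⟩
  | succ m ih =>
    obtain ⟨g, hg, hgF⟩ := ih (F := Δ_[(1 : ℝ)] F) fun a b hab => hF a (b + 1) (by omega)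
    have h1 : ∀ R : ℝ, ∃ C : ℝ, ∀ y ∈ dyadicReals, |y| ≤ R → |F (y + 1) - F y| ≤ C := by
      intro R
      obtain ⟨C, hC⟩ := (isCompact_Icc (a := -R) (b := R)).exists_bound_of_continuousOn
        hg.continuousOn
      refine ⟨C, fun y hy hyR => ?_⟩
      have := hC y (abs_le.1 hyR)
      rwa [hgF y hy] at this
    have hc : ∀ j ≥ m + 1, Continuous fun p : ℝ × ℝ => (Δ_[p.2])^[j] F p.1 :=
      fun j hj => continuous_fwdDiff_iter_of_le (hF (m + 1) 0 rfl) hj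
    have hdesc : ∀ i : ℕ, ∀ j : ℕ, j ≠ 0 → m + 1 ≤ i + j →
        DyadicBounded F j ∧ DyadicVanishing F j := by
      intro i
      induction i with
      | zero =>
        intro j hj hij
        have := hc j (by omega)
        exact ⟨.of_continuous this, .of_continuous hj this⟩
      | succ i ihi =>
        intro j hj hij
        have hb : DyadicBounded F j :=
          .of_forall_gt hj h1 fun l hl => (ihi l (by omega) (by omega)).1
        exact ⟨hb, .of_forall_gt hj hb fun l hl => (ihi l (by omega) (by omega)).2⟩
    exact exists_continuous_eqOn_dyadicReals (hdesc m 1 one_ne_zero le_rfl).2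

/-- A function killed by `(m + 1)`-st differences agrees with a polynomial of degree at most `m`
along the natural multiples of any step. -/
theorem exists_polynomial_of_fwdDiff_iter_eq_zero {F : ℝ → ℝ} {m : ℕ} {h : ℝ}
    (hF : ∀ y, (Δ_[h])^[m + 1] F y = 0) (y : ℝ) :
    ∃ p : Polynomial ℝ, p.natDegree ≤ m ∧ ∀ n : ℕ, p.eval (n : ℝ) = F (y + n * h) := by
  refine ⟨∑ k ∈ Finset.range (m + 1),
    Polynomial.C ((Δ_[h])^[k] F y / k.factorial) * descPochhammer ℝ k, ?_, fun n => ?_⟩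
  · refine Polynomial.natDegree_sum_le_of_forall_le _ _ fun k hk => ?_
    refine (Polynomial.natDegree_C_mul_le _ _).trans ?_
    rw [descPochhammer_natDegree]
    exact Nat.lt_succ_iff.1 (Finset.mem_range.1 hk)
  have hzero : ∀ k ≥ m + 1, (Δ_[h])^[k] F = 0 := by
    intro k hk
    induction k, hk using Nat.le_induction with
    | base => exact funext hF
    | succ k _ ih =>
      rw [Function.iterate_succ_apply', ih]
      ext
      simp [fwdDiff]
  have e : ∀ k, (n.choose k : ℝ) * (Δ_[h])^[k] F y =
      (Polynomial.C ((Δ_[h])^[k] F y / k.factorial) * descPochhammer ℝ k).eval (n : ℝ) := by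
    intro k
    rw [Polynomial.eval_mul, Polynomial.eval_C, Nat.cast_choose_eq_descPochhammer_div]
    ring
  have := shift_eq_sum_fwdDiff_iter h F n y
  rw [nsmul_eq_mul] at this
  rw [this, Polynomial.eval_finsetSum, ← Finset.sum_congr rfl fun k _ => e k]
  simp only [nsmul_eq_mul]
  rcases le_total m n with hmn | hmn
  · refine Finset.sum_subset (Finset.range_mono (by omega)) fun k _ hk => ?_
    rw [hzero k (by simpa using hk)]
    simp
  · refine (Finset.sum_subset (Finset.range_mono (by omega)) fun k _ hk => ?_).symm
    rw [Nat.choose_eq_zero_of_lt (by simpa using hk)]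
    simp

theorem exists_polynomial_int_of_fwdDiff_iter_eq_zero {F : ℝ → ℝ} {m : ℕ} {h : ℝ}
    (hF : ∀ y, (Δ_[h])^[m + 1] F y = 0) (y : ℝ) :
    ∃ p : Polynomial ℝ, p.natDegree ≤ m ∧ ∀ z : ℤ, p.eval (z : ℝ) = F (y + z * h) := by
  obtain ⟨p, hp, hpF⟩ := exists_polynomial_of_fwdDiff_iter_eq_zero hF y
  refine ⟨p, hp, fun z => ?_⟩
  obtain ⟨q, -, hq⟩ := exists_polynomial_of_fwdDiff_iter_eq_zero hF (y - z.natAbs * h)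
  have hpq : p = q.comp (Polynomial.X + Polynomial.C (z.natAbs : ℝ)) := by
    refine Polynomial.eq_of_infinite_eval_eq _ _
      ((Set.infinite_range_of_injective (Nat.cast_injective (R := ℝ))).mono ?_)
    rintro _ ⟨n, rfl⟩
    have e : (n : ℝ) + z.natAbs = ((n + z.natAbs : ℕ) : ℝ) := by push_cast; rfl
    simp only [Set.mem_ofPred_eq, Polynomial.eval_comp, Polynomial.eval_add, Polynomial.eval_X,
      Polynomial.eval_C]
    rw [e, hq, hpF]
    congr 1
    push_cast
    ring
  have e : (z : ℝ) + z.natAbs = ((z + z.natAbs).toNat : ℝ) := by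
    have : z + z.natAbs = ((z + z.natAbs).toNat : ℤ) := by omega
    simpa only [Int.cast_add, Int.cast_natCast] using congrArg (Int.cast : ℤ → ℝ) this
  rw [hpq, Polynomial.eval_comp, Polynomial.eval_add, Polynomial.eval_X, Polynomial.eval_C, e, hq,
    ← e]
  congr 1
  ring

/-- A continuous function of one variable killed by all `(m + 1)`-st differences is a polynomial of
degree at most `m`. -/
theorem exists_polynomial_of_continuous_of_fwdDiff_iter_eq_zero {F : ℝ → ℝ} (hc : Continuous F)
    {m : ℕ} (hF : ∀ h y, (Δ_[h])^[m + 1] F y = 0) :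
    ∃ p : Polynomial ℝ, p.natDegree ≤ m ∧ ∀ t, p.eval t = F t := by
  obtain ⟨p, hp, hpF⟩ := exists_polynomial_int_of_fwdDiff_iter_eq_zero (hF 1) 0
  simp only [mul_one, zero_add] at hpF
  refine ⟨p, hp, congrFun (p.continuous.ext_on dense_dyadicReals hc ?_)⟩
  rintro x ⟨N, z, hx⟩
  obtain ⟨q, -, hq⟩ := exists_polynomial_int_of_fwdDiff_iter_eq_zero (hF ((1 / 2) ^ N)) 0
  simp only [zero_add] at hq
  have hpq : p.comp (Polynomial.X * Polynomial.C ((1 / 2 : ℝ) ^ N)) = q := by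
    refine Polynomial.eq_of_infinite_eval_eq _ _ ((Set.infinite_range_of_injective
      (f := fun j : ℤ => ((j * 2 ^ N : ℤ) : ℝ)) fun i j hij => by simpa using hij).mono ?_)
    rintro _ ⟨j, rfl⟩
    have h2 : ((j * 2 ^ N : ℤ) : ℝ) * (1 / 2) ^ N = j := by
      push_cast
      rw [mul_assoc, ← mul_pow]
      norm_num
    simp only [Set.mem_ofPred_eq, hq, h2, ← hpF, Polynomial.eval_comp, Polynomial.eval_mul,
      Polynomial.eval_X, Polynomial.eval_C]
  have hxz : x = z * (1 / 2) ^ N := by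
    rw [← hx, mul_assoc, ← mul_pow]
    norm_num
  rw [hxz, ← hq, ← hpq]
  simp only [Polynomial.eval_comp, Polynomial.eval_mul, Polynomial.eval_X, Polynomial.eval_C]

theorem MvPolynomial.IsHomogeneous.eval_smul_eq {σ : Type*} {P : MvPolynomial σ ℝ} {d : ℕ}
    (hP : P.IsHomogeneous d) (t : ℝ) (x : σ → ℝ) :
    MvPolynomial.eval (t • x) P = t ^ d * MvPolynomial.eval x P := by
  rw [MvPolynomial.eval_eq, MvPolynomial.eval_eq, Finset.mul_sum]
  refine Finset.sum_congr rfl fun s hs => ?_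
  have := hP (MvPolynomial.mem_support_iff.1 hs)
  rw [show (1 : σ → ℕ) = fun _ => 1 from rfl, ← Finsupp.degree_eq_weight_one] at this
  simp only [Pi.smul_apply, smul_eq_mul, mul_pow, Finset.prod_mul_distrib, Finset.prod_pow_eq_pow_sum]
  rw [show ∑ i ∈ s.support, s i = d from this]
  ring

theorem MvPolynomial.totalDegree_le_of_forall_line {σ : Type*} {P : MvPolynomial σ ℝ} {m : ℕ}
    (hP : ∀ x : σ → ℝ, ∃ p : Polynomial ℝ, p.natDegree ≤ m ∧
      ∀ t, p.eval t = MvPolynomial.eval (t • x) P) : P.totalDegree ≤ m := by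
  have hz : ∀ d > m, MvPolynomial.homogeneousComponent d P = 0 := by
    intro d hd
    by_cases hdP : P.totalDegree < d
    · exact MvPolynomial.homogeneousComponent_eq_zero _ _ hdP
    refine MvPolynomial.funext fun x => ?_
    obtain ⟨p, hp, hpx⟩ := hP x
    have : p = ∑ i ∈ Finset.range (P.totalDegree + 1),
        Polynomial.monomial i (MvPolynomial.eval x (MvPolynomial.homogeneousComponent i P)) := by
      refine Polynomial.funext fun t => ?_
      rw [hpx]
      conv_lhs => rw [← MvPolynomial.sum_homogeneousComponent P, map_sum]
      rw [Polynomial.eval_finsetSum]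
      refine Finset.sum_congr rfl fun i _ => ?_
      rw [(MvPolynomial.homogeneousComponent_isHomogeneous i P).eval_smul_eq,
        Polynomial.eval_monomial, mul_comm]
    have hc := congrArg (fun q => Polynomial.coeff q d) this
    simp only [Polynomial.finsetSum_coeff, Polynomial.coeff_monomial] at hc
    rw [Polynomial.coeff_eq_zero_of_natDegree_lt (by omega), Finset.sum_ite_eq',
      if_pos (by simp; omega)] at hc
    rw [← hc, map_zero]
  refine Finset.sup_le fun s hs => ?_
  by_contra hlt
  have := congrArg (MvPolynomial.coeff s) (hz s.degree (not_le.1 hlt))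
  rw [MvPolynomial.coeff_homogeneousComponent, if_pos rfl] at this
  exact MvPolynomial.mem_support_iff.1 hs this

/-- A function that is polynomial of degree at most `m` along every line is a polynomial. -/
theorem exists_mvPolynomial_of_forall_line {n m : ℕ} {Q : (Fin n → ℝ) → ℝ}
    (hQ : ∀ x v : Fin n → ℝ, ∃ p : Polynomial ℝ, p.natDegree ≤ m ∧
      ∀ t, p.eval t = Q (x + t • v)) :
    ∃ P : MvPolynomial (Fin n) ℝ, ∀ x, Q x = MvPolynomial.eval x P := by
  induction n with
  | zero => exact ⟨MvPolynomial.C (Q 0), fun x => by simp [Subsingleton.elim x 0]⟩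
  | succ n ih =>
    have hj : ∀ j : ℕ, ∃ P : MvPolynomial (Fin n) ℝ,
        ∀ x, Q (Fin.cons (j : ℝ) x) = MvPolynomial.eval x P := by
      intro j
      refine ih fun x v => ?_
      obtain ⟨p, hp, h⟩ := hQ (Fin.cons (j : ℝ) x) (Fin.cons 0 v)
      refine ⟨p, hp, fun t => (h t).trans (congrArg Q ?_)⟩
      ext i
      refine Fin.cases ?_ (fun i => ?_) i <;> simp
    choose P hP using hj
    have hinj : Set.InjOn (fun j : ℕ => (j : ℝ)) (Finset.range (m + 1)) :=
      Nat.cast_injective.injOn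
    refine ⟨∑ j ∈ Finset.range (m + 1),
      Polynomial.aeval (MvPolynomial.X 0)
        (Lagrange.basis (Finset.range (m + 1)) (fun j : ℕ => (j : ℝ)) j) *
      MvPolynomial.rename Fin.succ (P j), fun x => ?_⟩
    obtain ⟨p, hp, h⟩ := hQ (Fin.cons 0 (Fin.tail x)) (Fin.cons 1 0)
    have hline : ∀ t : ℝ, p.eval t = Q (Fin.cons t (Fin.tail x)) := by
      intro t
      refine (h t).trans (congrArg Q ?_)
      ext i
      refine Fin.cases ?_ (fun i => ?_) i <;> simp
    have hlag := Lagrange.eq_interpolate_of_eval_eq (f := p) (fun j : ℕ => p.eval (j : ℝ)) hinj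
      (Polynomial.degree_lt_iff_coeff_zero _ _ |>.2 fun i hi =>
        Polynomial.coeff_eq_zero_of_natDegree_lt (by simp at hi; omega)) fun _ _ => rfl
    rw [← Fin.cons_self_tail x, ← hline, hlag, Lagrange.interpolate_apply,
      Polynomial.eval_finsetSum, map_sum]
    refine Finset.sum_congr rfl fun j _ => ?_
    rw [Polynomial.eval_mul, Polynomial.eval_C, hline, hP, map_mul, MvPolynomial.eval_rename,
      mul_comm]
    congr 1
    have := Polynomial.aeval_algHom_apply (MvPolynomial.aeval (R := ℝ) x) (MvPolynomial.X 0)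
      (Lagrange.basis (Finset.range (m + 1)) (fun j : ℕ => (j : ℝ)) j)
    rw [MvPolynomial.aeval_X, MvPolynomial.aeval_eq_eval] at this
    simpa [Polynomial.aeval_def] using this

/-- The iterated difference of `f` with the steps in the list `l`. -/
def listDiff {V G : Type*} [AddCommMonoid V] [AddCommGroup G] (l : List V) (f : V → G) : V → G :=
  l.foldr fwdDiff f

section ListDiff

variable {V W G : Type*} [AddCommMonoid V] [AddCommMonoid W] [AddCommGroup G]

theorem listDiff_cons (v : V) (l : List V) (f : V → G) (x : V) :
    listDiff (v :: l) f x = listDiff l f (x + v) - listDiff l f x := rfl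

theorem listDiff_replicate (n : ℕ) (v : V) (f : V → G) :
    listDiff (List.replicate n v) f = (Δ_[v])^[n] f := by
  induction n with
  | zero => rfl
  | succ n ih => rw [Function.iterate_succ_apply', ← ih]; rfl

theorem listDiff_append (l₁ l₂ : List V) (f : V → G) :
    listDiff (l₁ ++ l₂) f = listDiff l₁ (listDiff l₂ f) :=
  List.foldr_append

theorem listDiff_finsetSum {ι : Type*} (s : Finset ι) (l : List V) (f : ι → V → G) (x : V) :
    listDiff l (fun x => ∑ j ∈ s, f j x) x = ∑ j ∈ s, listDiff l (f j) x := by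
  induction l generalizing x with
  | nil => rfl
  | cons v l ih => simp only [listDiff_cons, ih, Finset.sum_sub_distrib]

theorem listDiff_comp_addMonoidHom (φ : V →+ W) (l : List V) (F : W → G) (x : V) :
    listDiff l (fun x => F (φ x)) x = listDiff (l.map φ) F (φ x) := by
  induction l generalizing x with
  | nil => rfl
  | cons v l ih => simp only [List.map_cons, listDiff_cons, ih, map_add]

theorem listDiff_eq_zero_of_mem {l : List V} (h : (0 : V) ∈ l) (f : V → G) (x : V) :
    listDiff l f x = 0 := by
  induction l generalizing x with
  | nil => simp at h
  | cons v l ih =>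
    rw [listDiff_cons]
    rcases List.mem_cons.1 h with rfl | h
    · simp
    · rw [ih h, ih h, sub_zero]

theorem continuous_listDiff {X : Type*} [TopologicalSpace X] [TopologicalSpace V]
    [ContinuousAdd V] [TopologicalSpace G] [IsTopologicalAddGroup G] {f : V → G}
    (hf : Continuous f) {u : X → V} (hu : Continuous u) (l : List (X → V))
    (hl : ∀ v ∈ l, Continuous v) :
    Continuous fun p => listDiff (l.map fun v => v p) f (u p) := by
  induction l generalizing u with
  | nil => exact hf.comp hu
  | cons v l ih =>
    have hl' : ∀ v ∈ l, Continuous v := fun w hw => hl w (List.mem_cons_of_mem _ hw)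
    simp only [List.map_cons, listDiff_cons]
    exact (ih (hu.add (hl v List.mem_cons_self)) hl').sub (ih hu hl')

end ListDiff

theorem exists_dotProduct_eq_one_of_ne_zero {n : ℕ} {a : Fin n → ℝ} (ha : a ≠ 0) :
    ∃ w : Fin n → ℝ, a ⬝ᵥ w = 1 := by
  refine ⟨(a ⬝ᵥ a)⁻¹ • a, ?_⟩
  rw [dotProduct_smul, smul_eq_mul, inv_mul_cancel₀]
  simpa using ha

theorem exists_dotProduct_eq_zero_and_eq_one {n : ℕ} {a b : Fin n → ℝ}
    (h : LinearIndependent ℝ ![a, b]) : ∃ v : Fin n → ℝ, b ⬝ᵥ v = 0 ∧ a ⬝ᵥ v = 1 := by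
  have hb : b ⬝ᵥ b ≠ 0 := by
    have := h.ne_zero 1
    simpa using this
  have hc : a - (a ⬝ᵥ b / b ⬝ᵥ b) • b ≠ 0 := by
    intro h0
    have := (LinearIndependent.pair_iff.1 h 1 (-(a ⬝ᵥ b / b ⬝ᵥ b)) (by
      rw [one_smul, neg_smul, ← sub_eq_add_neg, h0])).1
    exact one_ne_zero this
  set c := a - (a ⬝ᵥ b / b ⬝ᵥ b) • b with hcdef
  have hbc : b ⬝ᵥ c = 0 := by
    rw [hcdef, dotProduct_sub, dotProduct_smul, smul_eq_mul, div_mul_cancel₀ _ hb,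
      dotProduct_comm, sub_self]
  have hac : a ⬝ᵥ c = c ⬝ᵥ c := by
    have : a = c + (a ⬝ᵥ b / b ⬝ᵥ b) • b := by rw [hcdef, sub_add_cancel]
    conv_lhs => rw [this]
    rw [add_dotProduct, smul_dotProduct, hbc, smul_zero, add_zero]
  refine ⟨(c ⬝ᵥ c)⁻¹ • c, ?_, ?_⟩
  · rw [dotProduct_smul, hbc, smul_zero]
  · rw [dotProduct_smul, hac, smul_eq_mul, inv_mul_cancel₀]
    simpa using hc

/-- Each summand of a continuous sum of ridge functions with pairwise independent directions has
jointly continuous differences of order one less than the number of summands. -/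
theorem continuous_fwdDiff_of_sum_ridge {n k : ℕ} {a : Fin k → Fin n → ℝ}
    (ha0 : ∀ i, a i ≠ 0) (hind : ∀ i j : Fin k, i ≠ j → LinearIndependent ℝ ![a i, a j])
    {f : (Fin n → ℝ) → ℝ} (hf : Continuous f) {F : Fin k → ℝ → ℝ}
    (hrepr : ∀ x, f x = ∑ i, F i (a i ⬝ᵥ x)) (i : Fin k) {b c : ℕ} (hbc : b + c = k - 1) :
    Continuous fun p : ℝ × ℝ => (Δ_[p.2])^[b] ((Δ_[(1 : ℝ)])^[c] (F i)) p.1 := by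
  obtain ⟨w, hw⟩ := exists_dotProduct_eq_one_of_ne_zero (ha0 i)
  have hv : ∀ j, ∃ v : Fin n → ℝ, j ≠ i → a j ⬝ᵥ v = 0 ∧ a i ⬝ᵥ v = 1 := by
    intro j
    by_cases hj : j = i
    · exact ⟨0, fun h => absurd hj h⟩
    · obtain ⟨v, hv⟩ := exists_dotProduct_eq_zero_and_eq_one (hind i j (Ne.symm hj))
      exact ⟨v, fun _ => hv⟩
  choose v hv using hv
  let L : List (Fin k) := (Finset.univ.erase i).toList
  have hL : ∀ j, j ∈ L ↔ j ≠ i := by simp [L]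
  have hlen : L.length = b + c := by simp [L, hbc]
  let S : List (ℝ × ℝ → Fin n → ℝ) :=
    (L.take b).map (fun j p => p.2 • v j) ++ (L.drop b).map (fun j _ => v j)
  have hS : ∀ s ∈ S, Continuous s := by
    intro s hs
    rcases List.mem_append.1 hs with hs | hs <;> obtain ⟨j, -, rfl⟩ := List.mem_map.1 hs <;>
      fun_prop
  have hcont := continuous_listDiff hf
    (by fun_prop : Continuous fun p : ℝ × ℝ => p.1 • w) S hS
  refine hcont.congr fun p => ?_
  let φ : Fin k → (Fin n → ℝ) →+ ℝ := fun j => AddMonoidHom.mk' (a j ⬝ᵥ ·) (dotProduct_add _)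
  have hφ : ∀ j x, φ j x = a j ⬝ᵥ x := fun _ _ => rfl
  have hsum : f = fun x => ∑ j, F j (φ j x) := funext hrepr
  rw [hsum, listDiff_finsetSum]
  simp only [listDiff_comp_addMonoidHom]
  rw [Finset.sum_eq_single i]
  · have h1 : ((S.map fun s => s p).map (φ i)) = List.replicate b p.2 ++ List.replicate c 1 := by
      simp only [S, List.map_append, List.map_map]
      congr 1
      · refine List.eq_replicate_iff.2 ⟨by simp [hlen], fun x hx => ?_⟩
        obtain ⟨j, hj, rfl⟩ := List.mem_map.1 hx
        simp [hφ, (hv j ((hL j).1 (List.mem_of_mem_take hj))).2]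
      · refine List.eq_replicate_iff.2 ⟨by simp [hlen], fun x hx => ?_⟩
        obtain ⟨j, hj, rfl⟩ := List.mem_map.1 hx
        simp [hφ, (hv j ((hL j).1 (List.mem_of_mem_drop hj))).2]
    rw [h1, listDiff_append, listDiff_replicate, listDiff_replicate, hφ, dotProduct_smul, hw]
    simp
  · intro j _ hj
    refine listDiff_eq_zero_of_mem ?_ _ _
    have hjL : j ∈ L.take b ++ L.drop b := by rw [List.take_append_drop]; exact (hL j).2 hj
    rw [List.map_map, List.mem_map]
    rcases List.mem_append.1 hjL with h | h
    · exact ⟨_, List.mem_append_left _ (List.mem_map_of_mem h), by simp [hφ, (hv j hj).1]⟩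
    · exact ⟨_, List.mem_append_right _ (List.mem_map_of_mem h), by simp [hφ, (hv j hj).1]⟩
  · simp

theorem exists_continuous_ridge_add_polynomial {n k : ℕ} {a : Fin k → Fin n → ℝ}
    (ha0 : ∀ i, a i ≠ 0) (hind : ∀ i j : Fin k, i ≠ j → LinearIndependent ℝ ![a i, a j])
    {f : (Fin n → ℝ) → ℝ} (hf : Continuous f) {F : Fin k → ℝ → ℝ}
    (hrepr : ∀ x, f x = ∑ i, F i (a i ⬝ᵥ x)) :
    ∃ (g : Fin k → ℝ → ℝ) (P : MvPolynomial (Fin n) ℝ),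
      (∀ i, Continuous (g i)) ∧ P.totalDegree ≤ k - 1 ∧
      ∀ x, f x = (∑ i, g i (a i ⬝ᵥ x)) + MvPolynomial.eval x P := by
  have hD := fun i b c (hbc : b + c = k - 1) =>
    continuous_fwdDiff_of_sum_ridge ha0 hind hf hrepr i hbc
  choose g hg hgF using fun i => exists_continuous_eqOn_dyadicReals_of_fwdDiff (hD i)
  have hzero : ∀ i h y, (Δ_[h])^[k - 1] (F i - g i) y = 0 := by
    intro i
    have h1 : Continuous fun p : ℝ × ℝ => (Δ_[p.2])^[k - 1] (F i - g i) p.1 := by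
      have h2 : Continuous fun p : ℝ × ℝ => (Δ_[p.2])^[k - 1] (g i) p.1 :=
        continuous_fwdDiff_iter_of_le (m := 0) ((hg i).comp continuous_fst) (Nat.zero_le _)
      refine ((hD i (k - 1) 0 rfl).sub h2).congr fun p => ?_
      simp [fwdDiff_iter_eq_sum_shift, mul_sub, Finset.sum_sub_distrib]
    have h0 := h1.ext_on (dense_dyadicReals.prod dense_dyadicReals) (g := fun _ => (0 : ℝ))
      continuous_const (by
        rintro ⟨y, h⟩ ⟨hy, hh⟩
        simp only [fwdDiff_iter_eq_sum_shift]
        refine Finset.sum_eq_zero fun j _ => ?_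
        rw [Pi.sub_apply, hgF i _ (add_mem hy (nsmul_mem hh j)), sub_self, smul_zero])
    exact fun h y => congrFun h0 (y, h)
  let Q : (Fin n → ℝ) → ℝ := fun x => f x - ∑ i, g i (a i ⬝ᵥ x)
  have hQc : Continuous Q := hf.sub (continuous_finsetSum _ fun i _ => (hg i).comp (by fun_prop))
  have hQsum : ∀ x, Q x = ∑ i, (F i - g i) (a i ⬝ᵥ x) := by
    intro x
    simp only [Q, hrepr, Pi.sub_apply, Finset.sum_sub_distrib]
  have hline : ∀ x v : Fin n → ℝ, ∃ p : Polynomial ℝ, p.natDegree ≤ k - 1 ∧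
      ∀ t, p.eval t = Q (x + t • v) := by
    intro x v
    refine exists_polynomial_of_continuous_of_fwdDiff_iter_eq_zero (hQc.comp (by fun_prop))
      fun h t => ?_
    have e : ∀ t, Q (x + t • v) = ∑ i, (F i - g i) (a i ⬝ᵥ x + t * (a i ⬝ᵥ v)) := by
      intro t
      simp only [hQsum, dotProduct_add, dotProduct_smul, smul_eq_mul]
    have hk : ∀ y, (Δ_[h])^[k - 1] (fun t => Q (x + t • v)) y = 0 := by
      intro y
      simp only [e, fwdDiff_iter_eq_sum_shift]
      simp only [Finset.smul_sum]
      rw [Finset.sum_comm]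
      refine Finset.sum_eq_zero fun i _ => ?_
      rw [← hzero i (h * (a i ⬝ᵥ v)) (a i ⬝ᵥ x + y * (a i ⬝ᵥ v)), fwdDiff_iter_eq_sum_shift]
      refine Finset.sum_congr rfl fun j _ => ?_
      congr 2
      simp only [nsmul_eq_mul]
      ring_nf
    rw [Function.iterate_succ_apply']
    exact (congrArg₂ (· - ·) (hk _) (hk _)).trans (sub_zero _)
  obtain ⟨P, hP⟩ := exists_mvPolynomial_of_forall_line hline
  refine ⟨g, P, hg, MvPolynomial.totalDegree_le_of_forall_line fun x => ?_, fun x => ?_⟩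
  · obtain ⟨p, hp, h⟩ := hline 0 x
    exact ⟨p, hp, fun t => by rw [h, hP, zero_add]⟩
  · rw [← hP]
    simp only [Q, add_sub_cancel]

/-- If a continuous `f : ℝⁿ → ℝ` is a sum of arbitrarily behaved ridge
functions with pairwise linearly independent directions `a¹,...,aᵏ`, then it is
a sum of continuous ridge functions with the same directions plus a polynomial
of total degree at most `k - 1`. -/
theorem stmt10 {n k : ℕ} (a : Fin k → Fin n → ℝ)
    (hind : ∀ i j : Fin k, i ≠ j → LinearIndependent ℝ ![a i, a j])
    (f : (Fin n → ℝ) → ℝ) (hf : Continuous f)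
    (F : Fin k → ℝ → ℝ)
    (hrepr : ∀ x : Fin n → ℝ, f x = ∑ i, F i (∑ t, a i t * x t)) :
    ∃ (g : Fin k → ℝ → ℝ) (P : MvPolynomial (Fin n) ℝ),
      (∀ i, Continuous (g i)) ∧ P.totalDegree ≤ k - 1 ∧
      ∀ x : Fin n → ℝ, f x = (∑ i, g i (∑ t, a i t * x t)) + MvPolynomial.eval x P := by
  by_cases ha : ∀ i, a i ≠ 0
  · exact exists_continuous_ridge_add_polynomial ha hind hf hrepr
  push Not at ha
  obtain ⟨i, hi⟩ := ha
  have huniq : ∀ j, j = i := by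
    intro j
    by_contra hj
    exact (hind i j (Ne.symm hj)).ne_zero 0 hi
  have : Unique (Fin k) := ⟨⟨i⟩, huniq⟩
  refine ⟨fun _ _ => F i 0, 0, fun _ => continuous_const, by simp, fun x => ?_⟩
  have hd : default = i := huniq _
  rw [hrepr, Fintype.sum_unique (ι := Fin k), Fintype.sum_unique (ι := Fin k), hd, hi]
  simp
end

section
/- Let a^1, ..., a^k be pairwise linearly independent vectors in ℝ^n, let s ≥ 0 be an integer, and suppose a function f ∈ C^s(ℝ^n) has the form f(x) = ∑_{i=1}^k f_i(a^i·x), where f_1, ..., f_k : ℝ → ℝ are arbitrarily behaved functions. Then there exist functions g_1, ..., g_k ∈ C^s(ℝ) and a polynomial P : ℝ^n → ℝ of total degree at most k − 1 such that f(x) = ∑_{i=1}^k g_i(a^i·x) + P(x) for all x ∈ ℝ^n. -/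
/-- The mixed difference at the origin of `F` along the increments `t`. -/
def mixedDiff {ι E : Type*} [Fintype ι] [DecidableEq ι] [AddCommGroup E]
    (F : E → ℝ) (t : ι → E) : ℝ :=
  ∑ ε : ι → Fin 2, (∏ j, (-1 : ℝ) ^ ((ε j : ℕ) + 1)) * F (∑ j, (ε j : ℕ) • t j)

section Algebra

variable {ι E : Type*} [Fintype ι] [DecidableEq ι] [AddCommGroup E]

lemma mixedDiff_sub (F G : E → ℝ) (t : ι → E) :
    mixedDiff (fun x => F x - G x) t = mixedDiff F t - mixedDiff G t := by
  simp only [mixedDiff, mul_sub, Finset.sum_sub_distrib]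

lemma mixedDiff_sum {κ : Type*} [Fintype κ] (F : κ → E → ℝ) (t : ι → E) :
    mixedDiff (fun x => ∑ l, F l x) t = ∑ l, mixedDiff (F l) t := by
  simp only [mixedDiff, Finset.mul_sum]
  exact Finset.sum_comm

lemma mixedDiff_comp {E' : Type*} [AddCommGroup E'] (F : E' → ℝ) (L : E →+ E') (t : ι → E) :
    mixedDiff (fun x => F (L x)) t = mixedDiff F (fun j => L (t j)) := by
  simp only [mixedDiff, map_sum, map_nsmul]

lemma mixedDiff_comp_perm (F : E → ℝ) (t : ι → E) (σ : Equiv.Perm ι) :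
    mixedDiff F (t ∘ σ) = mixedDiff F t := by
  unfold mixedDiff
  refine Fintype.sum_equiv (σ.arrowCongr (Equiv.refl (Fin 2))) _ _ fun ε => ?_
  congr 1
  · exact Fintype.prod_equiv σ _ _ fun j => by simp
  · congr 1
    exact Fintype.sum_equiv σ _ _ fun j => by simp

lemma mixedDiff_insertNth {m : ℕ} (F : E → ℝ) (i : Fin (m + 1)) (u : E) (t : Fin m → E) :
    mixedDiff F (i.insertNth (α := fun _ => E) u t) =
      mixedDiff (fun x => F (u + x)) t - mixedDiff F t := by
  unfold mixedDiff
  rw [← (Fin.insertNthEquiv (fun _ => Fin 2) i).sum_comp, Fintype.sum_prod_type]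
  simp [Fin.prod_univ_succAbove _ i, Fin.sum_univ_succAbove _ i, Fin.sum_univ_two]
  ring

lemma mixedDiff_cons {m : ℕ} (F : E → ℝ) (u : E) (t : Fin m → E) :
    mixedDiff F (Fin.cons u t : Fin (m + 1) → E) =
      mixedDiff (fun x => F (u + x)) t - mixedDiff F t := by
  rw [← mixedDiff_insertNth F 0 u t, Fin.insertNth_zero']

lemma mixedDiff_eq_zero_of_eq_zero {m : ℕ} (F : E → ℝ) (t : Fin m → E) (j : Fin m)
    (h : t j = 0) : mixedDiff F t = 0 := by
  obtain _ | m := m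
  · exact j.elim0
  · rw [← Fin.insertNth_self_removeNth j t, h, mixedDiff_insertNth]
    simp

lemma mixedDiff_update_add {m : ℕ} (F : E → ℝ) (t : Fin (m + 1) → E) (i : Fin (m + 1))
    (u v : E) :
    mixedDiff F (Function.update t i (u + v)) =
      mixedDiff F (Function.update t i u) + mixedDiff F (Function.update t i v) +
        mixedDiff F (Fin.cons u (Function.update t i v) : Fin (m + 2) → E) := by
  rw [← Fin.insertNth_self_removeNth i t]
  simp only [Fin.update_insertNth, mixedDiff_cons, mixedDiff_insertNth, add_assoc]
  ring

lemma mixedDiff_succ_eq_zero {m : ℕ} {F : E → ℝ}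
    (h : ∀ t : Fin (m + 1) → E, mixedDiff F t = 0) (t : Fin (m + 2) → E) :
    mixedDiff F t = 0 := by
  have := mixedDiff_update_add F (Fin.tail t) 0 (t 0) (Fin.tail t 0)
  rw [Function.update_eq_self, Fin.cons_self_tail] at this
  simpa [h] using this.symm

/-- Polarization: the mixed difference of the diagonal of a multi-additive map. -/
lemma mixedDiff_diagonal (A : MultilinearMap ℕ (fun _ : ι => E) ℝ) (t : ι → E) :
    mixedDiff (fun x => A fun _ => x) t = ∑ σ : Equiv.Perm ι, A (t ∘ σ) := by
  have key (r : ι → ι) : ∑ ε : ι → Fin 2, (∏ j, (-1 : ℝ) ^ ((ε j : ℕ) + 1)) *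
      ∏ i, ((ε (r i) : ℕ) : ℝ) = if Function.Bijective r then 1 else 0 := by
    have h1 (ε : ι → Fin 2) : (∏ j, (-1 : ℝ) ^ ((ε j : ℕ) + 1)) * ∏ i, ((ε (r i) : ℕ) : ℝ) =
        ∏ j, ((-1 : ℝ) ^ ((ε j : ℕ) + 1) *
          ((ε j : ℕ) : ℝ) ^ (Finset.univ.filter (r · = j)).card) := by
      rw [Finset.prod_mul_distrib]
      congr 1
      rw [← Finset.prod_fiberwise (Finset.univ) r]
      refine Finset.prod_congr rfl fun j _ => ?_
      rw [Finset.prod_congr rfl (g := fun _ => ((ε j : ℕ) : ℝ)), Finset.prod_const]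
      intro i hi
      rw [(Finset.mem_filter.1 hi).2]
    simp only [h1]
    rw [← Fintype.prod_sum (fun j (e : Fin 2) => (-1 : ℝ) ^ ((e : ℕ) + 1) *
      ((e : ℕ) : ℝ) ^ (Finset.univ.filter (r · = j)).card)]
    simp only [Fin.sum_univ_two]
    split_ifs with hr
    · refine Finset.prod_eq_one fun j _ => ?_
      obtain ⟨i, hi⟩ := hr.2 j
      have : (Finset.univ.filter (r · = j)).card ≠ 0 := by
        rw [Finset.card_ne_zero]
        exact ⟨i, by simp [hi]⟩
      simp [this]
    · rw [← Finite.surjective_iff_bijective] at hr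
      obtain ⟨j, hj⟩ := not_forall.1 hr
      refine Finset.prod_eq_zero (Finset.mem_univ j) ?_
      have : (Finset.univ.filter (r · = j)).card = 0 := by
        rw [Finset.card_eq_zero, Finset.filter_eq_empty_iff]
        exact fun i _ hi => hj ⟨i, hi⟩
      simp [this]
  have h2 (r : ι → ι) : ∑ ε : ι → Fin 2, (∏ j, (-1 : ℝ) ^ ((ε j : ℕ) + 1)) *
      A (fun i => (ε (r i) : ℕ) • t (r i)) = if Function.Bijective r then A (t ∘ r) else 0 := by
    have := key r
    rw [← mul_one (A (t ∘ r)), ← mul_zero (A (t ∘ r)), ← mul_ite, ← this, Finset.mul_sum]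
    refine Finset.sum_congr rfl fun ε _ => ?_
    rw [A.map_smul_univ (fun i => (ε (r i) : ℕ)) (fun i => t (r i)), nsmul_eq_mul]
    push_cast
    simp only [Function.comp_def]
    ring
  simp only [mixedDiff, A.map_sum, Finset.mul_sum]
  rw [Finset.sum_comm]
  simp only [h2]
  rw [← Finset.sum_filter]
  refine (Finset.sum_bij (fun (σ : Equiv.Perm ι) _ => (σ : ι → ι)) (by simp) ?_ ?_ ?_).symm
  · exact fun σ _ τ _ h => DFunLike.coe_injective h
  · intro r hr
    exact ⟨Equiv.ofBijective r (Finset.mem_filter.1 hr).2, Finset.mem_univ _, rfl⟩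
  · exact fun _ _ => rfl

end Algebra

universe u

lemma contDiff_parametric_integral {H G : Type u} [NormedAddCommGroup H] [NormedSpace ℝ H]
    [FiniteDimensional ℝ H] [NormedAddCommGroup G] [NormedSpace ℝ G] [CompleteSpace G] (s : ℕ)
    (c : H → ℝ → G) (hc : ContDiff ℝ (s : ℕ∞) (Function.uncurry c)) (a b : ℝ) :
    ContDiff ℝ (s : ℕ∞) (fun x => ∫ u in a..b, c x u) := by
  induction s generalizing G with
  | zero =>
    simp only [CharP.cast_eq_zero, WithTop.coe_zero, contDiff_zero] at hc ⊢
    exact intervalIntegral.continuous_parametric_intervalIntegral_of_continuous' hc a b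
  | succ s ih =>
    have hcs : ContDiff ℝ ((s : ℕ∞) + 1) (Function.uncurry c) := by exact_mod_cast hc
    have hd : Differentiable ℝ (Function.uncurry c) := hcs.differentiable (by simp)
    have hfd : ContDiff ℝ (s : ℕ∞) (fderiv ℝ (Function.uncurry c)) :=
      hcs.fderiv_right le_rfl
    let c' : H → ℝ → H →L[ℝ] G := fun x u =>
      (fderiv ℝ (Function.uncurry c) (x, u)).comp (ContinuousLinearMap.inl ℝ H ℝ)
    have hc' : ContDiff ℝ (s : ℕ∞) (Function.uncurry c') :=
      hfd.clm_comp contDiff_const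
    have hder (x : H) (u : ℝ) : HasFDerivAt (fun x => c x u) (c' x u) x :=
      HasFDerivAt.comp (g := Function.uncurry c) (f := fun x => (x, u)) x
        (hd (x, u)).hasFDerivAt (hasFDerivAt_prodMk_left x u)
    have hcont : Continuous (Function.uncurry c) := hc.continuous
    have hcont' : Continuous (Function.uncurry c') := hc'.continuous
    have hmain (x : H) : HasFDerivAt (fun x => ∫ u in a..b, c x u) (∫ u in a..b, c' x u) x := by
      obtain ⟨C, hC⟩ := ((isCompact_closedBall x 1).prod
        (isCompact_uIcc (a := a) (b := b))).exists_bound_of_continuousOn hcont'.continuousOn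
      refine intervalIntegral.hasFDerivAt_integral_of_dominated_of_fderiv_le (bound := fun _ => C)
        (Metric.closedBall_mem_nhds x one_pos) (.of_forall fun y => ?_) ?_ ?_ ?_ ?_ ?_
      · exact (hcont.comp (.prodMk_right y)).aestronglyMeasurable
      · exact (hcont.comp (.prodMk_right x)).intervalIntegrable a b
      · exact (hcont'.comp (.prodMk_right x)).aestronglyMeasurable
      · exact .of_forall fun u hu y hy => hC (y, u) ⟨hy, Set.uIoc_subset_uIcc hu⟩
      · exact intervalIntegrable_const
      · exact .of_forall fun u hu y hy => hder y u
    have : ContDiff ℝ ((s : ℕ∞) + 1) (fun x => ∫ u in a..b, c x u) := by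
      rw [contDiff_succ_iff_fderiv]
      refine ⟨fun x => (hmain x).differentiableAt, by simp, ?_⟩
      rw [funext fun x => (hmain x).fderiv]
      exact ih c' hc'
    exact_mod_cast this

lemma ContDiff.of_forall_eq {H G : Type*} [NormedAddCommGroup H] [NormedSpace ℝ H]
    [NormedAddCommGroup G] [NormedSpace ℝ G] {s : WithTop ℕ∞} {f g : H → G} (hf : ContDiff ℝ s f)
    (h : ∀ x, g x = f x) : ContDiff ℝ s g :=
  funext h ▸ hf

/-- Additivity of `A` in its `i`-th argument. -/
def AdditiveInArg {m : ℕ} {E : Type*} [AddCommGroup E] (A : (Fin m → E) → ℝ) (i : Fin m) : Prop :=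
  ∀ (t : Fin m → E) (u v : E),
    A (Function.update t i (u + v)) = A (Function.update t i u) + A (Function.update t i v)

lemma sub_integral_cocycle_add {F : ℝ → ℝ} {c : ℝ → ℝ → ℝ}
    (hc : Continuous (Function.uncurry c)) (hF : ∀ x y, c x y = F (x + y) - F x - F y) (x y : ℝ) :
    let R : ℝ → ℝ := fun x => (∫ u in (0:ℝ)..x, c u 1) - ∫ u in (0:ℝ)..1, c x u
    F (x + y) - R (x + y) = (F x - R x) + (F y - R y) := by
  intro R
  have hl (z : ℝ) (a b : ℝ) : IntervalIntegrable (fun u => c u z) MeasureTheory.volume a b :=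
    (hc.comp (.prodMk_left z)).intervalIntegrable a b
  have hr (z : ℝ) (a b : ℝ) : IntervalIntegrable (fun u => c z u) MeasureTheory.volume a b :=
    (hc.comp (.prodMk_right z)).intervalIntegrable a b
  have hs (z w : ℝ) (a b : ℝ) :
      IntervalIntegrable (fun u => c z (w + u)) MeasureTheory.volume a b :=
    (hc.comp ((Continuous.prodMk_right z).comp (continuous_const_add w))).intervalIntegrable a b
  have hs' (z w : ℝ) (a b : ℝ) :
      IntervalIntegrable (fun u => c (w + u) z) MeasureTheory.volume a b :=
    (hc.comp ((Continuous.prodMk_left z).comp (continuous_const_add w))).intervalIntegrable a b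
  have e1 : c x y + ∫ u in (0:ℝ)..1, c (x + y) u =
      (∫ u in (0:ℝ)..1, c x (y + u)) + ∫ u in (0:ℝ)..1, c y u := by
    have : c x y = ∫ u in (0:ℝ)..1, c x y := by simp
    rw [this, ← intervalIntegral.integral_add (by simp) (hr _ _ _),
      ← intervalIntegral.integral_add (hs _ _ _ _) (hr _ _ _)]
    refine intervalIntegral.integral_congr fun u _ => ?_
    simp only [hF, ← add_assoc]
    ring
  have e2 : (∫ u in (0:ℝ)..1, c x (y + u)) - ∫ u in (0:ℝ)..1, c x u =
      ∫ u in (0:ℝ)..y, (c x (1 + u) - c x u) := by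
    rw [intervalIntegral.integral_sub (hs _ _ _ _) (hr _ _ _),
      intervalIntegral.integral_comp_add_left (fun u => c x u),
      intervalIntegral.integral_comp_add_left (fun u => c x u)]
    have h1 := intervalIntegral.integral_add_adjacent_intervals (hr x 0 y) (hr x y (1 + y))
    have h2 := intervalIntegral.integral_add_adjacent_intervals (hr x 0 1) (hr x 1 (1 + y))
    rw [add_zero, add_zero, add_comm y 1]
    linarith
  have e3 : ∫ u in (0:ℝ)..y, (c x (1 + u) - c x u) =
      (∫ u in (0:ℝ)..(x + y), c u 1) - (∫ u in (0:ℝ)..x, c u 1) - ∫ u in (0:ℝ)..y, c u 1 := by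
    have h1 := intervalIntegral.integral_add_adjacent_intervals (hl 1 0 x) (hl 1 x (x + y))
    have h2 := intervalIntegral.integral_comp_add_left (a := 0) (b := y) (fun u => c u 1) x
    rw [add_zero] at h2
    rw [← h1, add_sub_cancel_left, ← h2, ← intervalIntegral.integral_sub (hs' _ _ _ _) (hl _ _ _)]
    refine intervalIntegral.integral_congr fun u _ => ?_
    simp only [hF, ← add_assoc, add_comm _ (1:ℝ)]
    ring
  have e4 := hF x y
  simp only [R]
  linarith

lemma exists_contDiff_additiveInArg {m : ℕ} (s : ℕ) (A : (Fin m → ℝ) → ℝ) (i : Fin m)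
    (hA : ContDiff ℝ (s : ℕ∞) fun p : (Fin m → ℝ) × ℝ =>
      A (Function.update p.1 i (p.1 i + p.2)) - A p.1 - A (Function.update p.1 i p.2)) :
    ∃ R : (Fin m → ℝ) → ℝ, ContDiff ℝ (s : ℕ∞) R ∧ AdditiveInArg (fun t => A t - R t) i ∧
      ∀ j ≠ i, AdditiveInArg A j → AdditiveInArg (fun t => A t - R t) j := by
  set c : (Fin m → ℝ) × ℝ → ℝ := fun p =>
      A (Function.update p.1 i (p.1 i + p.2)) - A p.1 - A (Function.update p.1 i p.2) with hc
  have hup : ContDiff ℝ (s : ℕ∞) fun p : (Fin m → ℝ) × ℝ => Function.update p.1 i p.2 := by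
    rw [contDiff_pi]
    intro j
    by_cases h : j = i
    · subst h; simpa using contDiff_snd
    · simp only [Function.update_of_ne h]; fun_prop
  have hcup : Continuous fun p : (Fin m → ℝ) × ℝ × ℝ => c (Function.update p.1 i p.2.1, p.2.2) :=
    hA.continuous.comp (((hup.continuous.comp
      (continuous_fst.prodMk (continuous_fst.comp continuous_snd)))).prodMk
        (continuous_snd.comp continuous_snd))
  let R : (Fin m → ℝ) → ℝ := fun t =>
    (∫ u in (0:ℝ)..t i, c (Function.update t i u, 1)) - ∫ u in (0:ℝ)..1, c (t, u)
  refine ⟨R, ?_, ?_, ?_⟩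
  · refine ContDiff.sub ?_ (contDiff_parametric_integral s (fun t u => c (t, u)) hA 0 1)
    have : (fun t : Fin m → ℝ => ∫ u in (0:ℝ)..t i, c (Function.update t i u, 1)) =
        fun t => t i * ∫ v in (0:ℝ)..1, c (Function.update t i (t i * v), 1) := by
      ext t
      have := intervalIntegral.smul_integral_comp_mul_left (a := 0) (b := 1)
        (fun u => c (Function.update t i u, 1)) (t i)
      simpa using this.symm
    rw [this]
    refine (contDiff_apply ℝ ℝ i).mul (contDiff_parametric_integral s
      (fun t v => c (Function.update t i (t i * v), 1)) ?_ 0 1)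
    exact hA.comp ((hup.comp (contDiff_fst.prodMk (((contDiff_apply ℝ ℝ i).comp
      contDiff_fst).mul contDiff_snd))).prodMk contDiff_const)
  · intro t u v
    have := sub_integral_cocycle_add (F := fun x => A (Function.update t i x))
      (c := fun x y => c (Function.update t i x, y)) (hcup.comp (.prodMk_right t))
      (fun x y => by simp [hc]) u v
    simpa [R] using this
  · intro j hj hAj t u v
    have hcj (t : Fin m → ℝ) (u v w : ℝ) : c (Function.update t j (u + v), w) =
        c (Function.update t j u, w) + c (Function.update t j v, w) := by
      simp only [hc, hAj t u v, Function.update_of_ne hj.symm, Function.update_comm hj, hAj _ u v]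
      ring
    have hi1 (x : ℝ) : IntervalIntegrable (fun w => c (Function.update t j x, w))
        MeasureTheory.volume 0 1 :=
      (hA.continuous.comp (.prodMk_right _)).intervalIntegrable _ _
    have hi2 (x : ℝ) : IntervalIntegrable
        (fun w => c (Function.update (Function.update t i w) j x, 1))
        MeasureTheory.volume 0 (t i) := by
      simp only [Function.update_comm hj.symm]
      exact (hcup.comp ((Continuous.prodMk_right (Function.update t j x)).comp
        (.prodMk_left (1:ℝ)))).intervalIntegrable _ _
    simp only [R, Function.update_of_ne hj.symm, Function.update_comm hj, hcj, hAj t u v]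
    rw [intervalIntegral.integral_add (hi1 u) (hi1 v), intervalIntegral.integral_add (hi2 u) (hi2 v)]
    ring

/-- A function that is additive in every argument, as a multilinear map over `ℕ`. -/
def AdditiveInArg.toMultilinearMap {m : ℕ} {E : Type*} [AddCommGroup E] {A : (Fin m → E) → ℝ}
    (h : ∀ i, AdditiveInArg A i) : MultilinearMap ℕ (fun _ : Fin m => E) ℝ where
  toFun := A
  map_update_add' := by
    intro inst t i u v
    obtain rfl : inst = instDecidableEqFin m := Subsingleton.elim _ _
    exact h i t u v
  map_update_smul' := by
    intro inst t i r u
    obtain rfl : inst = instDecidableEqFin m := Subsingleton.elim _ _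
    exact map_nsmul (AddMonoidHom.mk' (fun u => A (Function.update t i u)) (h i t)) r u

/-- A continuous function that is additive in every argument, as a multilinear map over `ℝ`. -/
def AdditiveInArg.toRealMultilinearMap {m n : ℕ} {A : (Fin m → Fin n → ℝ) → ℝ}
    (h : ∀ i, AdditiveInArg A i) (hA : Continuous A) :
    MultilinearMap ℝ (fun _ : Fin m => Fin n → ℝ) ℝ where
  toFun := A
  map_update_add' := (AdditiveInArg.toMultilinearMap h).map_update_add'
  map_update_smul' := by
    intro inst t i r u
    obtain rfl : inst = instDecidableEqFin m := Subsingleton.elim _ _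
    exact map_real_smul (AddMonoidHom.mk' (fun u => A (Function.update t i u)) (h i t))
      (hA.comp (continuous_const.update i continuous_id)) r u

lemma exists_additiveInArg_contDiff_sub {m : ℕ} (s : ℕ) (c : (Fin m → ℝ) → ℝ)
    (hc : ∀ i, ContDiff ℝ (s : ℕ∞) fun p : (Fin m → ℝ) × ℝ =>
      c (Function.update p.1 i (p.1 i + p.2)) - c p.1 - c (Function.update p.1 i p.2)) :
    ∃ A : (Fin m → ℝ) → ℝ, (∀ i, AdditiveInArg A i) ∧
      ContDiff ℝ (s : ℕ∞) fun t => c t - A t := by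
  suffices h : ∀ S : Finset (Fin m), ∃ A : (Fin m → ℝ) → ℝ, (∀ i ∈ S, AdditiveInArg A i) ∧
      ContDiff ℝ (s : ℕ∞) fun t => c t - A t by simpa using h Finset.univ
  intro S
  induction S using Finset.induction_on with
  | empty => exact ⟨c, by simp, by simpa using contDiff_const⟩
  | insert i S hi ih =>
    obtain ⟨A, hA, hcA⟩ := ih
    have hup {g : (Fin m → ℝ) × ℝ → ℝ} (hg : ContDiff ℝ (s : ℕ∞) g) :
        ContDiff ℝ (s : ℕ∞) fun p : (Fin m → ℝ) × ℝ => Function.update p.1 i (g p) := by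
      rw [contDiff_pi]
      intro j
      by_cases h : j = i
      · subst h; simpa using hg
      · simp only [Function.update_of_ne h]; fun_prop
    have hδ : ContDiff ℝ (s : ℕ∞) fun p : (Fin m → ℝ) × ℝ =>
        A (Function.update p.1 i (p.1 i + p.2)) - A p.1 - A (Function.update p.1 i p.2) := by
      have := (hc i).sub (((hcA.comp (hup (g := fun p => p.1 i + p.2) (by fun_prop))).sub
        (hcA.comp contDiff_fst)).sub (hcA.comp (hup contDiff_snd)))
      refine this.of_forall_eq fun p => ?_
      simp only [Function.comp]
      ring
    obtain ⟨R, hR, hRi, hRj⟩ := exists_contDiff_additiveInArg s A i hδ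
    refine ⟨fun t => A t - R t, fun j hj => ?_, (hcA.add hR).of_forall_eq fun t => by ring⟩
    obtain rfl | hj := Finset.mem_insert.1 hj
    · exact hRi
    · exact hRj j (ne_of_mem_of_not_mem hj hi) (hA j hj)

lemma mixedDiff_eq_of_subsingleton {E : Type*} [AddCommGroup E] (F : E → ℝ) (t : Fin 1 → E) :
    mixedDiff F t = F (t 0) - F 0 := by
  rw [← Fin.cons_self_tail t, mixedDiff_cons]
  simp [mixedDiff]

lemma mixedDiff_const_mul_diagonal {m : ℕ} {E : Type*} [AddCommGroup E] {A : (Fin m → E) → ℝ}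
    (h : ∀ i, AdditiveInArg A i) (r : ℝ) (t : Fin m → E) :
    mixedDiff (fun x => r * A fun _ => x) t = r * ∑ σ : Equiv.Perm (Fin m), A (t ∘ σ) := by
  have := mixedDiff_diagonal (AdditiveInArg.toMultilinearMap h) t
  change mixedDiff (fun x => A fun _ => x) t = ∑ σ : Equiv.Perm (Fin m), A (t ∘ σ) at this
  rw [← this, mixedDiff, mixedDiff, Finset.mul_sum]
  exact Finset.sum_congr rfl fun ε _ => by ring

lemma mixedDiff_succ_diagonal {m : ℕ} {E : Type*} [AddCommGroup E]
    {A : (Fin (m + 1) → E) → ℝ} (h : ∀ i, AdditiveInArg A i) (r : ℝ) (t : Fin (m + 2) → E) :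
    mixedDiff (fun x => r * A fun _ => x) t = 0 := by
  have := mixedDiff_update_add (fun x => r * A fun _ => x) (Fin.tail t) 0 (t 0) (Fin.tail t 0)
  rw [Function.update_eq_self, Fin.cons_self_tail] at this
  simp only [mixedDiff_const_mul_diagonal h, Function.update_comp_equiv, h _ _ (t 0),
    Finset.sum_add_distrib] at this
  have h' (σ : Equiv.Perm (Fin (m + 1))) :
      Function.update (Fin.tail t ∘ σ) (σ.symm 0) (Fin.tail t 0) = Fin.tail t ∘ σ := by
    rw [← Function.update_comp_equiv, Function.update_eq_self]
  simp only [h', mul_add] at this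
  linarith

lemma contDiff_mixedDiff {ι E : Type*} [Fintype ι] [DecidableEq ι] [NormedAddCommGroup E]
    [NormedSpace ℝ E] {s : WithTop ℕ∞} {F : E → ℝ} (hF : ContDiff ℝ s F) :
    ContDiff ℝ s fun t : ι → E => mixedDiff F t := by
  unfold mixedDiff
  refine ContDiff.sum fun ε _ => contDiff_const.mul (hF.comp (ContDiff.sum fun j _ => ?_))
  exact (contDiff_apply ℝ E j).const_smul (ε j : ℕ)

lemma inv_factorial_mul_sum_perm {m : ℕ} (a : ℝ) :
    ((m.factorial : ℝ))⁻¹ * ∑ _σ : Equiv.Perm (Fin m), a = a := by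
  have : (m.factorial : ℝ) ≠ 0 := by positivity
  simp [Fintype.card_perm, this]

/-- If the mixed differences of order `m + 1` of `F` are of class `C^s`, then `F` is the sum of a
`C^s` function and a function whose mixed differences of order `m + 1` vanish. -/
lemma exists_contDiff_mixedDiff_sub_eq_zero (s m : ℕ) (F : ℝ → ℝ)
    (hF : ContDiff ℝ (s : ℕ∞) fun t : Fin (m + 1) → ℝ => mixedDiff F t) :
    ∃ g : ℝ → ℝ, ContDiff ℝ (s : ℕ∞) g ∧
      ∀ t : Fin (m + 1) → ℝ, mixedDiff (fun x => F x - g x) t = 0 := by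
  induction m generalizing F with
  | zero =>
    refine ⟨F, ?_, fun t => by simp [mixedDiff]⟩
    have h := (hF.comp (contDiff_pi.2 fun _ => contDiff_id :
      ContDiff ℝ (s : ℕ∞) fun (x : ℝ) (_ : Fin 1) => x)).add (contDiff_const (c := F 0))
    refine h.of_forall_eq fun x => ?_
    simp [mixedDiff_eq_of_subsingleton]
  | succ m ih =>
    obtain ⟨A, hA, hcA⟩ := exists_additiveInArg_contDiff_sub s
      (fun t : Fin (m + 1) → ℝ => mixedDiff F t) fun i => by
        have : ContDiff ℝ (s : ℕ∞) fun p : (Fin (m + 1) → ℝ) × ℝ =>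
            (Fin.cons (p.1 i) (Function.update p.1 i p.2) : Fin (m + 2) → ℝ) := by
          rw [contDiff_pi]
          intro j
          refine Fin.cases (by simp only [Fin.cons_zero]; fun_prop) (fun j => ?_) j
          simp only [Fin.cons_succ]
          by_cases h : j = i
          · subst h; simpa using contDiff_snd
          · simp only [Function.update_of_ne h]; fun_prop
        refine (hF.comp this).of_forall_eq fun p => ?_
        have h := mixedDiff_update_add F p.1 i (p.1 i) p.2
        rw [Function.update_eq_self] at h
        simp only [h, Function.comp]
        ring
    set r : ℝ := ((m + 1).factorial : ℝ)⁻¹ with hr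
    obtain ⟨g, hg, hFg⟩ := ih (fun x => F x - r * A fun _ => x) <| by
      have h (σ : Equiv.Perm (Fin (m + 1))) :
          ContDiff ℝ (s : ℕ∞) fun t : Fin (m + 1) → ℝ => t ∘ σ :=
        contDiff_pi.2 fun j => contDiff_apply ℝ ℝ (σ j)
      refine ((contDiff_const (c := r)).mul
        (ContDiff.sum (s := Finset.univ) fun σ _ => hcA.comp (h σ))).of_forall_eq fun t => ?_
      rw [mixedDiff_sub, mixedDiff_const_mul_diagonal hA]
      simp only [Function.comp_def, Finset.sum_sub_distrib, mul_sub]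
      congr 1
      rw [← inv_factorial_mul_sum_perm (m := m + 1) (mixedDiff F t), ← hr]
      congr 1
      exact Finset.sum_congr rfl fun σ _ => (mixedDiff_comp_perm F t σ).symm
    refine ⟨g, hg, fun t => ?_⟩
    have h1 := mixedDiff_succ_eq_zero hFg t
    have h2 := mixedDiff_succ_diagonal hA r t
    rw [mixedDiff_sub, mixedDiff_sub, h2] at h1
    rw [mixedDiff_sub]
    linarith

lemma exists_mvPolynomial_eval_eq_diagonal {m n : ℕ}
    (A : MultilinearMap ℝ (fun _ : Fin m => Fin n → ℝ) ℝ) :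
    ∃ P : MvPolynomial (Fin n) ℝ, P.totalDegree ≤ m ∧
      ∀ x, MvPolynomial.eval x P = A fun _ => x := by
  refine ⟨∑ r : Fin m → Fin n, MvPolynomial.C (A fun i => Pi.single (r i) 1) *
    ∏ i, MvPolynomial.X (r i), ?_, fun x => ?_⟩
  · refine MvPolynomial.totalDegree_finsetSum_le fun r _ => ?_
    refine (MvPolynomial.totalDegree_mul _ _).trans ?_
    rw [MvPolynomial.totalDegree_C, zero_add]
    refine (MvPolynomial.totalDegree_finsetProd _ _).trans ?_
    simp
  · have hx : x = ∑ j, x j • (Pi.single j 1 : Fin n → ℝ) := by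
      ext l
      simp [Finset.sum_apply, Pi.single_apply]
    conv_rhs => rw [hx]
    rw [A.map_sum]
    simp [A.map_smul_univ, mul_comm]

/-- A continuous function whose mixed differences of order `m + 1` vanish is a polynomial of degree
at most `m`. -/
lemma exists_mvPolynomial_of_mixedDiff_eq_zero {n : ℕ} (m : ℕ) (Q : (Fin n → ℝ) → ℝ)
    (hQ : Continuous Q) (h : ∀ t : Fin (m + 1) → Fin n → ℝ, mixedDiff Q t = 0) :
    ∃ P : MvPolynomial (Fin n) ℝ, P.totalDegree ≤ m ∧ ∀ x, Q x = MvPolynomial.eval x P := by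
  induction m generalizing Q with
  | zero =>
    refine ⟨MvPolynomial.C (Q 0), by simp, fun x => ?_⟩
    have := h fun _ => x
    rw [mixedDiff_eq_of_subsingleton] at this
    simp only [MvPolynomial.eval_C]
    linarith
  | succ m ih =>
    have hA (i : Fin (m + 1)) :
        AdditiveInArg (fun t : Fin (m + 1) → Fin n → ℝ => mixedDiff Q t) i := fun t u v => by
      simp [mixedDiff_update_add, h]
    have hcont : Continuous fun t : Fin (m + 1) → Fin n → ℝ => mixedDiff Q t :=
      (contDiff_mixedDiff (contDiff_zero.2 hQ)).continuous
    obtain ⟨P₁, hP₁, hP₁A⟩ := exists_mvPolynomial_eval_eq_diagonal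
      (AdditiveInArg.toRealMultilinearMap hA hcont)
    change ∀ x, MvPolynomial.eval x P₁ = mixedDiff Q fun _ => x at hP₁A
    set r : ℝ := ((m + 1).factorial : ℝ)⁻¹ with hr
    obtain ⟨P₀, hP₀, hP₀Q⟩ := ih (fun x => Q x - r * MvPolynomial.eval x P₁)
      (hQ.sub (continuous_const.mul (MvPolynomial.continuous_eval P₁))) fun t => by
        simp only [hP₁A]
        rw [mixedDiff_sub, mixedDiff_const_mul_diagonal hA]
        simp only [mixedDiff_comp_perm, hr, inv_factorial_mul_sum_perm, sub_self]
    refine ⟨P₀ + MvPolynomial.C r * P₁, ?_, fun x => ?_⟩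
    · refine (MvPolynomial.totalDegree_add _ _).trans (max_le (by omega) ?_)
      refine (MvPolynomial.totalDegree_mul _ _).trans ?_
      rw [MvPolynomial.totalDegree_C]
      omega
    · rw [map_add, map_mul, MvPolynomial.eval_C, ← hP₀Q]
      ring

lemma exists_dotProduct_eq_one_eq_zero {n : ℕ} {v w : Fin n → ℝ}
    (h : LinearIndependent ℝ ![v, w]) : ∃ b : Fin n → ℝ, v ⬝ᵥ b = 1 ∧ w ⬝ᵥ b = 0 := by
  have hw : w ⬝ᵥ w ≠ 0 := by
    rw [Ne, dotProduct_self_eq_zero]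
    exact h.ne_zero 1
  set b : Fin n → ℝ := (w ⬝ᵥ w) • v - (v ⬝ᵥ w) • w with hb
  have hwb : w ⬝ᵥ b = 0 := by
    rw [hb, dotProduct_sub, dotProduct_smul, dotProduct_smul, smul_eq_mul, smul_eq_mul,
      dotProduct_comm w v]
    ring
  have hvb : v ⬝ᵥ b ≠ 0 := by
    intro hvb
    have hbb : b ⬝ᵥ b = 0 := by
      nth_rw 1 [hb]
      rw [sub_dotProduct, smul_dotProduct, smul_dotProduct, hvb, hwb]
      simp
    have := LinearIndependent.pair_iff.1 h (w ⬝ᵥ w) (-(v ⬝ᵥ w)) (by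
      rw [neg_smul, ← sub_eq_add_neg]
      exact dotProduct_self_eq_zero.1 hbb)
    exact hw this.1
  exact ⟨(v ⬝ᵥ b)⁻¹ • b, by simp [hvb], by simp [hwb]⟩

/-- If `f ∈ Cˢ(ℝⁿ)` is a sum of arbitrarily behaved ridge functions with
pairwise linearly independent directions `a¹,...,aᵏ`, then it is a sum of
`Cˢ` ridge functions with the same directions plus a polynomial of total
degree at most `k - 1`. -/
theorem stmt11 {n k : ℕ} (s : ℕ) (a : Fin k → Fin n → ℝ)
    (hind : ∀ i j : Fin k, i ≠ j → LinearIndependent ℝ ![a i, a j])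
    (f : (Fin n → ℝ) → ℝ) (hf : ContDiff ℝ (s : ℕ∞) f)
    (F : Fin k → ℝ → ℝ)
    (hrepr : ∀ x : Fin n → ℝ, f x = ∑ i, F i (∑ t, a i t * x t)) :
    ∃ (g : Fin k → ℝ → ℝ) (P : MvPolynomial (Fin n) ℝ),
      (∀ i, ContDiff ℝ (s : ℕ∞) (g i)) ∧ P.totalDegree ≤ k - 1 ∧
      ∀ x : Fin n → ℝ, f x = (∑ i, g i (∑ t, a i t * x t)) + MvPolynomial.eval x P := by
  by_cases h0 : ∃ i, a i = 0
  · obtain ⟨i, hi⟩ := h0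
    have huniq (j : Fin k) : j = i := by
      by_contra hj
      exact (hind j i hj).ne_zero 1 hi
    have hk : (Finset.univ : Finset (Fin k)) = {i} := by
      ext j
      simp [huniq j]
    refine ⟨fun _ _ => 0, MvPolynomial.C (F i 0), fun _ => contDiff_const, by simp, fun x => ?_⟩
    simp [hrepr, hk, hi]
  obtain _ | m := k
  · exact ⟨fun _ _ => 0, 0, fun _ => contDiff_const, by simp, fun x => by simp [hrepr]⟩
  push Not at h0
  have hb (i j : Fin (m + 1)) : ∃ b : Fin n → ℝ, a i ⬝ᵥ b = 1 ∧ (j ≠ i → a j ⬝ᵥ b = 0) := by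
    by_cases hij : j = i
    · have : a i ⬝ᵥ a i ≠ 0 := by
        rw [Ne, dotProduct_self_eq_zero]
        exact h0 i
      exact ⟨(a i ⬝ᵥ a i)⁻¹ • a i, by simp [this], fun h => absurd hij h⟩
    · obtain ⟨b, hb, hb'⟩ := exists_dotProduct_eq_one_eq_zero (hind i j (Ne.symm hij))
      exact ⟨b, hb, fun _ => hb'⟩
  choose b hb1 hb0 using hb
  let L (i : Fin (m + 1)) : (Fin n → ℝ) →+ ℝ :=
    AddMonoidHom.mk' (fun x => a i ⬝ᵥ x) (dotProduct_add (a i))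
  have hsum (G : Fin (m + 1) → ℝ → ℝ) (t : Fin (m + 1) → Fin n → ℝ) :
      mixedDiff (fun x => ∑ l, G l (a l ⬝ᵥ x)) t =
        ∑ l, mixedDiff (G l) fun j => a l ⬝ᵥ t j := by
    rw [mixedDiff_sum]
    exact Finset.sum_congr rfl fun l _ => mixedDiff_comp (G l) (L l) t
  have hfF : f = fun x => ∑ l, F l (a l ⬝ᵥ x) := funext hrepr
  have hF (i : Fin (m + 1)) :
      ContDiff ℝ (s : ℕ∞) fun t : Fin (m + 1) → ℝ => mixedDiff (F i) t := by
    have hlin : ContDiff ℝ (s : ℕ∞) fun (t : Fin (m + 1) → ℝ) j => t j • b i j := by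
      rw [contDiff_pi]
      intro j
      exact (contDiff_apply ℝ ℝ j).smul contDiff_const
    refine ((contDiff_mixedDiff hf).comp hlin).of_forall_eq fun t => ?_
    simp only [Function.comp, hfF, hsum, dotProduct_smul, smul_eq_mul]
    rw [Finset.sum_eq_single i]
    · simp [hb1]
    · exact fun l _ hl => mixedDiff_eq_zero_of_eq_zero _ _ l (by simp [hb0 i l hl])
    · simp
  choose g hg hFg using fun i => exists_contDiff_mixedDiff_sub_eq_zero s m (F i) (hF i)
  obtain ⟨P, hP, hPQ⟩ := exists_mvPolynomial_of_mixedDiff_eq_zero m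
    (fun x => f x - ∑ i, g i (a i ⬝ᵥ x))
    (hf.continuous.sub (continuous_finsetSum _ fun i _ =>
      (hg i).continuous.comp (continuous_const.dotProduct continuous_id)))
    fun t => by
      simp only [hfF, ← Finset.sum_sub_distrib]
      rw [hsum fun i x => F i x - g i x]
      exact Finset.sum_eq_zero fun i _ => hFg i _
  refine ⟨g, P, hg, by simpa using hP, fun x => ?_⟩
  have := hPQ x
  simp only [dotProduct] at this
  linarith
end

section
/- Let a^1, ..., a^k be pairwise linearly independent vectors in ℝ^n, let p be the maximal number of linearly independent vectors among a^1, ..., a^k, and let s be an integer with s ≥ k − p + 1. Suppose a function f ∈ C^s(ℝ^n) has the form f(x) = ∑_{i=1}^k f_i(a^i·x), where f_1, ..., f_k : ℝ → ℝ are arbitrarily behaved functions. Then there exist functions g_1, ..., g_k ∈ C^s(ℝ) and a polynomial P : ℝ^n → ℝ of total degree at most k − p + 1 such that f(x) = ∑_{i=1}^k g_i(a^i·x) + P(x) for all x ∈ ℝ^n. -/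
namespace RidgeSum

variable {E : Type*} [NormedAddCommGroup E] [NormedSpace ℝ E]

/-- The iterated directional derivative along a list of vectors. -/
noncomputable def listDeriv : List E → (E → ℝ) → E → ℝ
  | [], w => w
  | h :: hs, w => fun x => fderiv ℝ (listDeriv hs w) x h

/-- All iterated differences of `w` with steps on the lines spanned by the listed vectors vanish. -/
def DiffVanish : List E → (E → ℝ) → Prop
  | [], w => ∀ x, w x = 0
  | h :: hs, w => ∀ t : ℝ, DiffVanish hs (fun x => w (x + t • h) - w x)

theorem contDiff_listDeriv (hs : List E) {w : E → ℝ} (m : ℕ)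
    (hw : ContDiff ℝ ((m + hs.length : ℕ) : WithTop ℕ∞) w) :
    ContDiff ℝ (m : WithTop ℕ∞) (listDeriv hs w) := by
  induction hs generalizing m with
  | nil => simpa [listDeriv] using hw
  | cons h hs ih =>
    have h1 : ContDiff ℝ ((m + 1 : ℕ) : WithTop ℕ∞) (listDeriv hs w) :=
      ih (m + 1) (by rwa [Nat.add_right_comm, Nat.add_assoc])
    exact (h1.fderiv_right (m := (m : WithTop ℕ∞)) (by push_cast; rfl)).clm_apply contDiff_const

theorem listDeriv_sub (hs : List E) {w₁ w₂ : E → ℝ}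
    (h₁ : ContDiff ℝ (hs.length : WithTop ℕ∞) w₁)
    (h₂ : ContDiff ℝ (hs.length : WithTop ℕ∞) w₂) :
    listDeriv hs (fun x => w₁ x - w₂ x) = fun x => listDeriv hs w₁ x - listDeriv hs w₂ x := by
  induction hs with
  | nil => rfl
  | cons h hs ih =>
    have hle : (hs.length : WithTop ℕ∞) ≤ ((h :: hs).length : WithTop ℕ∞) := by
      exact_mod_cast (by simp)
    have d (w : E → ℝ) (hw : ContDiff ℝ ((h :: hs).length : WithTop ℕ∞) w) :
        Differentiable ℝ (listDeriv hs w) :=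
      (contDiff_listDeriv hs 1 (by convert hw using 3; simp; ring)).differentiable (by simp)
    funext x
    simp only [listDeriv]
    rw [ih (h₁.of_le hle) (h₂.of_le hle), fderiv_fun_sub (d w₁ h₁ x) (d w₂ h₂ x)]
    rfl

theorem listDeriv_translate (hs : List E) (w : E → ℝ) (v : E) :
    listDeriv hs (fun x => w (x + v)) = fun x => listDeriv hs w (x + v) := by
  induction hs with
  | nil => rfl
  | cons h hs ih =>
    funext x
    simp only [listDeriv]
    rw [ih, fderiv_comp_add_right]

theorem listDeriv_append_singleton (hs : List E) (h : E) (w : E → ℝ) :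
    listDeriv (hs ++ [h]) w = listDeriv hs (fun x => fderiv ℝ w x h) := by
  induction hs with
  | nil => rfl
  | cons h' hs ih => simp only [List.cons_append, listDeriv, ih]

theorem contDiff_translate {w : E → ℝ} {m : WithTop ℕ∞} (hw : ContDiff ℝ m w) (v : E) :
    ContDiff ℝ m (fun x => w (x + v)) :=
  hw.comp (contDiff_id.add contDiff_const)

theorem listDeriv_difference (hs : List E) {w : E → ℝ}
    (hw : ContDiff ℝ (hs.length : WithTop ℕ∞) w) (v x : E) :
    listDeriv hs (fun x => w (x + v) - w x) x = listDeriv hs w (x + v) - listDeriv hs w x := by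
  rw [listDeriv_sub hs (contDiff_translate hw v) hw, listDeriv_translate]

theorem forall_fderiv_apply_eq_zero_iff {u : E → ℝ} (hu : Differentiable ℝ u) (h : E) :
    (∀ x, fderiv ℝ u x h = 0) ↔ ∀ (t : ℝ) (x : E), u (x + t • h) - u x = 0 := by
  have hd (x : E) (t : ℝ) :
      HasDerivAt (fun t : ℝ => u (x + t • h)) (fderiv ℝ u (x + t • h) h) t := by
    have h1 : HasDerivAt (fun t : ℝ => x + t • h) h t := by
      simpa using ((hasDerivAt_id t).smul_const h).const_add x
    exact (hu (x + t • h)).hasFDerivAt.comp_hasDerivAt t h1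
  constructor
  · intro H t x
    have := is_const_of_deriv_eq_zero (f := fun t : ℝ => u (x + t • h))
      (fun t => (hd x t).differentiableAt) (fun t => by rw [(hd x t).deriv, H]) t 0
    simpa [sub_eq_zero] using this
  · intro H x
    have h1 : (fun t : ℝ => u (x + t • h)) = fun _ => u x :=
      funext fun t => sub_eq_zero.mp (H t x)
    have h2 := hd x 0
    rw [h1] at h2
    simpa using h2.unique (hasDerivAt_const 0 (u x))

theorem diffVanish_iff_listDeriv (hs : List E) {w : E → ℝ}
    (hw : ContDiff ℝ (hs.length : WithTop ℕ∞) w) :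
    DiffVanish hs w ↔ ∀ x, listDeriv hs w x = 0 := by
  induction hs generalizing w with
  | nil => rfl
  | cons h hs ih =>
    have hw' : ContDiff ℝ (hs.length : WithTop ℕ∞) w := hw.of_le (by exact_mod_cast (by simp))
    have hd : Differentiable ℝ (listDeriv hs w) :=
      (contDiff_listDeriv hs 1 (by convert hw using 3; simp; ring)).differentiable (by simp)
    simp only [DiffVanish, listDeriv]
    rw [forall_fderiv_apply_eq_zero_iff hd]
    refine forall_congr' fun t => ?_
    rw [ih ((contDiff_translate hw' _).sub hw')]
    simp only [listDeriv_difference hs hw']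

theorem DiffVanish.zero (hs : List E) : DiffVanish hs (fun _ => 0) := by
  induction hs with
  | nil => exact fun _ => rfl
  | cons h hs ih => intro t; simpa using ih

theorem DiffVanish.add {hs : List E} {w₁ w₂ : E → ℝ} (h₁ : DiffVanish hs w₁)
    (h₂ : DiffVanish hs w₂) : DiffVanish hs (fun x => w₁ x + w₂ x) := by
  induction hs generalizing w₁ w₂ with
  | nil => intro x; simp [h₁ x, h₂ x]
  | cons h hs ih =>
    intro t
    convert ih (h₁ t) (h₂ t) using 2
    ring

theorem DiffVanish.neg {hs : List E} {w : E → ℝ} (h₁ : DiffVanish hs w) :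
    DiffVanish hs (fun x => - w x) := by
  induction hs generalizing w with
  | nil => intro x; simp [h₁ x]
  | cons h hs ih =>
    intro t
    convert ih (h₁ t) using 2
    ring

theorem DiffVanish.sum {hs : List E} {ι : Type*} (S : Finset ι) {w : ι → E → ℝ}
    (hw : ∀ i ∈ S, DiffVanish hs (w i)) : DiffVanish hs (fun x => ∑ i ∈ S, w i x) := by
  classical
  induction S using Finset.induction_on with
  | empty => simpa using DiffVanish.zero hs
  | insert i S hi ih =>
    simp only [Finset.sum_insert hi]
    exact (hw i (by simp)).add (ih fun j hj => hw j (by simp [hj]))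

theorem DiffVanish.translate {hs : List E} {w : E → ℝ} (h₁ : DiffVanish hs w) (v : E) :
    DiffVanish hs (fun x => w (x + v)) := by
  induction hs generalizing w with
  | nil => intro x; exact h₁ _
  | cons h hs ih =>
    intro t
    convert ih (h₁ t) using 4
    abel

theorem DiffVanish.of_mem {hs : List E} {h : E} (hmem : h ∈ hs) {w : E → ℝ}
    (hw : ∀ (t : ℝ) (x : E), w (x + t • h) = w x) : DiffVanish hs w := by
  induction hs generalizing w with
  | nil => simp at hmem
  | cons h' hs ih =>
    intro t
    rcases List.mem_cons.mp hmem with rfl | hmem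
    · simpa [hw] using DiffVanish.zero hs
    · refine ih hmem fun t' x => ?_
      rw [hw, add_right_comm, hw]

theorem diffVanish_comp_iff {ℓ : E →L[ℝ] ℝ} (hℓ : Function.Surjective ℓ) (hs : List E)
    (q : ℝ → ℝ) : DiffVanish hs (fun x => q (ℓ x)) ↔ DiffVanish (hs.map ℓ) q := by
  induction hs generalizing q with
  | nil => exact (hℓ.forall (p := fun y => q y = 0)).symm
  | cons h hs ih =>
    simp only [DiffVanish, List.map_cons]
    refine forall_congr' fun t => ?_
    rw [← ih]
    simp

theorem diffVanish_real_of_ones {cs ds : List ℝ} (hcs : ∀ c ∈ cs, c = 1)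
    (hlen : ds.length = cs.length) {q : ℝ → ℝ} (hq : DiffVanish cs q) : DiffVanish ds q := by
  induction cs generalizing ds q with
  | nil => obtain rfl := List.length_eq_zero_iff.mp hlen; exact hq
  | cons c cs ih =>
    obtain ⟨d, ds, rfl⟩ := List.exists_cons_of_length_eq_add_one hlen
    intro t
    refine ih (fun c hc => hcs c (by simp [hc])) (by simpa using hlen) ?_
    have := hq (t * d)
    rwa [hcs c (by simp), smul_eq_mul, mul_one] at this

theorem exists_contDiff_antideriv {ψ : ℝ → ℝ} {m : ℕ} (hψ : ContDiff ℝ (m : WithTop ℕ∞) ψ) :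
    ∃ Ψ : ℝ → ℝ, ContDiff ℝ ((m + 1 : ℕ) : WithTop ℕ∞) Ψ ∧ ∀ y, HasDerivAt Ψ (ψ y) y := by
  have hd (y : ℝ) : HasDerivAt (fun y => ∫ u in (0 : ℝ)..y, ψ u) (ψ y) y :=
    (hψ.continuous).integral_hasStrictDerivAt 0 y |>.hasDerivAt
  refine ⟨_, ?_, hd⟩
  push_cast
  rw [contDiff_succ_iff_deriv]
  refine ⟨fun y => (hd y).differentiableAt, by simp, ?_⟩
  rwa [show deriv (fun y => ∫ u in (0 : ℝ)..y, ψ u) = ψ from funext fun y => (hd y).deriv]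

theorem exists_listDeriv_ridge_eq (ℓ : E →L[ℝ] ℝ) (hs : List E) (h1 : ∀ h ∈ hs, ℓ h = 1)
    {ψ : ℝ → ℝ} {m : ℕ} (hψ : ContDiff ℝ (m : WithTop ℕ∞) ψ) :
    ∃ g : ℝ → ℝ, ContDiff ℝ ((m + hs.length : ℕ) : WithTop ℕ∞) g ∧
      listDeriv hs (fun x => g (ℓ x)) = fun x => ψ (ℓ x) := by
  induction hs generalizing ψ m with
  | nil => exact ⟨ψ, by simpa using hψ, rfl⟩
  | cons h hs ih =>
    obtain ⟨Ψ, hΨ, hd⟩ := exists_contDiff_antideriv hψ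
    obtain ⟨g, hg, hgΨ⟩ := ih (fun h hh => h1 h (by simp [hh])) hΨ
    refine ⟨g, by rwa [Nat.add_right_comm, Nat.add_assoc] at hg, ?_⟩
    funext x
    have := ((hd (ℓ x)).comp_hasFDerivAt x ℓ.hasFDerivAt).fderiv
    simp only [listDeriv, hgΨ]
    change fderiv ℝ (Ψ ∘ ℓ) x h = _
    rw [this]
    simp [h1 h (by simp)]

/-- If a smooth function is a ridge function plus a function annihilated by differences along `hs`,
the ridge function is smooth up to a generalized polynomial. -/
theorem exists_contDiff_ridge_part (ℓ : E →L[ℝ] ℝ) {hs : List E} (hne : hs ≠ [])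
    (h1 : ∀ h ∈ hs, ℓ h = 1) {f G : E → ℝ} {φ : ℝ → ℝ} {s : ℕ} (hlen : hs.length ≤ s)
    (hf : ContDiff ℝ (s : WithTop ℕ∞) f) (hG : DiffVanish hs G)
    (hfG : ∀ x, f x = φ (ℓ x) + G x) :
    ∃ g : ℝ → ℝ, ContDiff ℝ (s : WithTop ℕ∞) g ∧
      ∀ ks : List E, ks.length = hs.length → DiffVanish ks (fun x => φ (ℓ x) - g (ℓ x)) := by
  obtain ⟨e, he⟩ := List.exists_mem_of_ne_nil hs hne
  have hℓe := h1 e he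
  have hsurj : Function.Surjective ℓ := fun y => ⟨y • e, by simp [hℓe]⟩
  have hf' : ContDiff ℝ (hs.length : WithTop ℕ∞) f := hf.of_le (by exact_mod_cast hlen)
  have hinv (v x : E) (hv : ℓ v = 0) : listDeriv hs f (x + v) = listDeriv hs f x := by
    have hvan : DiffVanish hs (fun x => f (x + v) - f x) := by
      convert (hG.translate v).add hG.neg using 2
      simp [hfG, hv]
      ring
    have := (diffVanish_iff_listDeriv hs ((contDiff_translate hf' v).sub hf')).mp hvan x
    rw [listDeriv_difference hs hf'] at this
    exact sub_eq_zero.mp this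
  have hψ : ContDiff ℝ ((s - hs.length : ℕ) : WithTop ℕ∞) (fun y : ℝ => listDeriv hs f (y • e)) :=
    (contDiff_listDeriv hs (s - hs.length) (by rwa [Nat.sub_add_cancel hlen])).comp
      (contDiff_id.smul contDiff_const)
  obtain ⟨g, hg, hgψ⟩ := exists_listDeriv_ridge_eq ℓ hs h1 hψ
  rw [Nat.sub_add_cancel hlen] at hg
  refine ⟨g, hg, fun ks hks => ?_⟩
  have hgℓ : ContDiff ℝ (hs.length : WithTop ℕ∞) (fun x => g (ℓ x)) :=
    (hg.of_le (by exact_mod_cast hlen)).comp ℓ.contDiff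
  have hW : DiffVanish hs (fun x => f x - g (ℓ x)) := by
    rw [diffVanish_iff_listDeriv hs (hf'.sub hgℓ), listDeriv_sub hs hf' hgℓ, hgψ]
    intro x
    have := hinv (x - ℓ x • e) (ℓ x • e) (by simp [hℓe])
    simp only [add_sub_cancel] at this
    simp [this]
  have hq : DiffVanish hs (fun x => (fun y => φ y - g y) (ℓ x)) := by
    convert hW.add hG.neg using 2
    rw [hfG]
    ring
  replace hq := (diffVanish_comp_iff hsurj hs (fun y => φ y - g y)).mp hq
  refine (diffVanish_comp_iff hsurj ks (fun y => φ y - g y)).mpr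
    (diffVanish_real_of_ones ?_ (by simpa using hks) hq)
  simpa using h1

theorem exists_mvPolynomial_integral_segment {n : ℕ} (P : MvPolynomial (Fin n) ℝ) :
    ∃ Q : MvPolynomial (Fin n) ℝ, Q.totalDegree ≤ P.totalDegree ∧
      ∀ x : Fin n → ℝ, ∫ u in (0 : ℝ)..1, MvPolynomial.eval (u • x) P = MvPolynomial.eval x Q := by
  refine ⟨∑ d ∈ P.support,
    MvPolynomial.monomial d (P.coeff d * (1 / ((d.degree : ℕ) + 1 : ℝ))), ?_, fun x => ?_⟩
  · refine (MvPolynomial.totalDegree_finsetSum _ _).trans (Finset.sup_le fun d hd => ?_)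
    exact (MvPolynomial.totalDegree_monomial_le _ _).trans (MvPolynomial.le_totalDegree hd)
  · simp only [MvPolynomial.eval_eq' _ P, map_sum, MvPolynomial.eval_monomial]
    rw [intervalIntegral.integral_finsetSum
      fun d _ => (by fun_prop : Continuous _).intervalIntegrable _ _]
    refine Finset.sum_congr rfl fun d _ => ?_
    have (u : ℝ) : P.coeff d * ∏ i, (u • x) i ^ d i =
        (P.coeff d * ∏ i, x i ^ d i) * u ^ d.degree := by
      simp only [Pi.smul_apply, smul_eq_mul, mul_pow, Finset.prod_mul_distrib,
        Finset.prod_pow_eq_pow_sum, Finsupp.degree_eq_sum]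
      ring
    simp only [this]
    rw [intervalIntegral.integral_const_mul, integral_pow, Finsupp.prod_fintype _ _ (by simp)]
    simp
    ring

theorem exists_mvPolynomial_of_listDeriv {n : ℕ} (N : ℕ) {R : (Fin n → ℝ) → ℝ}
    (hR : ContDiff ℝ (N : WithTop ℕ∞) R)
    (hz : ∀ hs : List (Fin n → ℝ), hs.length = N → ∀ x, listDeriv hs R x = 0) :
    ∃ P : MvPolynomial (Fin n) ℝ, P.totalDegree ≤ N ∧ ∀ x, R x = MvPolynomial.eval x P := by
  induction N generalizing R with
  | zero => exact ⟨0, by simp, fun x => by simpa [listDeriv] using hz [] rfl x⟩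
  | succ N ih =>
    have hpd (t : Fin n) : ∃ Q : MvPolynomial (Fin n) ℝ, Q.totalDegree ≤ N ∧
        ∀ x, fderiv ℝ R x (Pi.single t 1) = MvPolynomial.eval x Q := by
      refine ih ((hR.fderiv_right (m := (N : WithTop ℕ∞)) (by push_cast; rfl)).clm_apply
        contDiff_const) fun hs hlen x => ?_
      rw [← listDeriv_append_singleton]
      exact hz _ (by simp [hlen]) x
    choose Q hQdeg hQ using hpd
    choose I hIdeg hI using fun t => exists_mvPolynomial_integral_segment (Q t)
    refine ⟨MvPolynomial.C (R 0) + ∑ t, MvPolynomial.X t * I t, ?_, fun x => ?_⟩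
    · refine (MvPolynomial.totalDegree_add _ _).trans (max_le (by simp) ?_)
      refine (MvPolynomial.totalDegree_finsetSum _ _).trans (Finset.sup_le fun t _ => ?_)
      refine (MvPolynomial.totalDegree_mul _ _).trans ?_
      rw [MvPolynomial.totalDegree_X]
      have := (hIdeg t).trans (hQdeg t)
      omega
    · have hderiv (u : ℝ) : HasDerivAt (fun u : ℝ => R (u • x))
          (∑ t, x t * MvPolynomial.eval (u • x) (Q t)) u := by
        have h1 : HasDerivAt (fun u : ℝ => u • x) x u := by
          simpa using (hasDerivAt_id u).smul_const x
        have h2 := ((hR.differentiable (by simp)) (u • x)).hasFDerivAt.comp_hasDerivAt u h1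
        have hx : fderiv ℝ R (u • x) x = ∑ t, x t * MvPolynomial.eval (u • x) (Q t) := by
          conv_lhs => enter [2]; rw [pi_eq_sum_univ' x]
          simp only [map_sum, map_smul, smul_eq_mul, ← hQ]
        rwa [hx] at h2
      have hcont (t : Fin n) : Continuous fun u : ℝ => MvPolynomial.eval (u • x) (Q t) :=
        (MvPolynomial.continuous_eval (Q t)).comp (by fun_prop)
      have hftc := intervalIntegral.integral_eq_sub_of_hasDerivAt (a := 0) (b := 1)
        (fun u _ => hderiv u)
        ((continuous_finsetSum _ fun t _ => (hcont t).const_mul (x t)).intervalIntegrable _ _)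
      rw [intervalIntegral.integral_finsetSum
        fun t _ => ((hcont t).const_mul (x t)).intervalIntegrable _ _] at hftc
      simp only [intervalIntegral.integral_const_mul, hI, one_smul, zero_smul] at hftc
      simp [hftc]

/-- The linear form `x ↦ ∑ t, a t * x t`. -/
noncomputable def dotForm {n : ℕ} (a : Fin n → ℝ) : (Fin n → ℝ) →L[ℝ] ℝ :=
  ∑ t, a t • ContinuousLinearMap.proj t

theorem dotForm_apply {n : ℕ} (a x : Fin n → ℝ) : dotForm a x = ∑ t, a t * x t := by
  simp [dotForm]

theorem exists_dotForm_eq_one {n : ℕ} {b : Fin n → ℝ} {S : Set (Fin n → ℝ)}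
    (hb : b ∉ Submodule.span ℝ S) : ∃ h, dotForm b h = 1 ∧ ∀ c ∈ S, dotForm c h = 0 := by
  obtain ⟨L, hLb, hL⟩ := Submodule.exists_le_ker_of_notMem hb
  have hLd (c : Fin n → ℝ) : dotForm c (fun t => (L b)⁻¹ * L (Pi.single t 1)) = (L b)⁻¹ * L c := by
    conv_rhs => rw [pi_eq_sum_univ' c]
    simp only [dotForm_apply, map_sum, map_smul, smul_eq_mul, Finset.mul_sum]
    exact Finset.sum_congr rfl fun t _ => by ring
  refine ⟨_, (hLd b).trans (inv_mul_cancel₀ hLb), fun c hc => ?_⟩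
  rw [hLd, show L c = 0 from hL (Submodule.subset_span hc), mul_zero]

theorem exists_annihilating_list {n k p : ℕ} (a : Fin k → Fin n → ℝ)
    (hpair : ∀ i j : Fin k, i ≠ j → LinearIndependent ℝ ![a i, a j])
    {T : Finset (Fin k)} (hTp : T.card = p)
    (hT : LinearIndependent ℝ (fun i : {x : Fin k // x ∈ T} => a i.1))
    {i : Fin k} (hi : a i ≠ 0) :
    ∃ hs : List (Fin n → ℝ), hs.length = k - p + 1 ∧ (∀ h ∈ hs, dotForm (a i) h = 1) ∧
      ∀ j, j ≠ i → ∃ h ∈ hs, dotForm (a j) h = 0 := by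
  classical
  have hpairh (j : Fin k) (hj : j ≠ i) : ∃ h, dotForm (a i) h = 1 ∧ dotForm (a j) h = 0 := by
    have hn : a i ∉ Submodule.span ℝ {a j} := by
      intro hmem
      obtain ⟨c, hc⟩ := Submodule.mem_span_singleton.mp hmem
      have := LinearIndependent.pair_iff.mp (hpair i j hj.symm) 1 (-c) (by simp [hc])
      simp at this
    obtain ⟨h, h1, h2⟩ := exists_dotForm_eq_one hn
    exact ⟨h, h1, h2 _ rfl⟩
  have hsing : LinearIndepOn ℝ a {i} := (linearIndepOn_singleton_iff ℝ).mpr hi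
  obtain ⟨B, -, hiB, hspan, hB⟩ := exists_linearIndepOn_extension hsing (Set.subset_univ _)
  have hiB : i ∈ B := hiB rfl
  have hcard : p ≤ B.toFinset.card := by
    have h1 : Module.finrank ℝ (Submodule.span ℝ (Set.range fun j : {x // x ∈ T} => a j.1)) = p := by
      rw [finrank_span_eq_card hT, Fintype.card_coe, hTp]
    have h2 : Module.finrank ℝ (Submodule.span ℝ (Set.range fun j : B => a j.1)) =
        B.toFinset.card := by
      rw [finrank_span_eq_card hB, Set.toFinset_card]
    rw [← h1, ← h2]
    refine Submodule.finrank_mono (Submodule.span_le.mpr ?_)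
    rintro _ ⟨j, rfl⟩
    have := hspan ⟨j.1, Set.mem_univ _, rfl⟩
    rwa [Set.image_eq_range] at this
  have hnB : a i ∉ Submodule.span ℝ (a '' (B \ {i})) :=
    (hB.mono Set.sdiff_subset).notMem_span_iff.mpr
      ⟨by rwa [Set.insert_sdiff_singleton, Set.insert_eq_of_mem hiB], by simp⟩
  obtain ⟨h₀, h₀i, h₀B⟩ := exists_dotForm_eq_one hnB
  choose! H hH1 hH0 using hpairh
  set C : Finset (Fin k) := B.toFinsetᶜ with hC
  have hClen : C.card ≤ k - p := by
    rw [hC, Finset.card_compl, Fintype.card_fin]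
    omega
  refine ⟨C.toList.map H ++ List.replicate (k - p + 1 - C.card) h₀, ?_, ?_, ?_⟩
  · simp
    omega
  · intro h hh
    rcases List.mem_append.mp hh with hh | hh
    · obtain ⟨j, hj, rfl⟩ := List.mem_map.mp hh
      refine hH1 j ?_
      rintro rfl
      simp [hC, hiB] at hj
    · rw [List.eq_of_mem_replicate hh, h₀i]
  · intro j hj
    by_cases hjB : j ∈ B
    · refine ⟨h₀, List.mem_append_right _ (List.mem_replicate.mpr ⟨by omega, rfl⟩), ?_⟩
      exact h₀B _ ⟨j, ⟨hjB, hj⟩, rfl⟩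
    · exact ⟨H j, List.mem_append_left _ (List.mem_map.mpr ⟨j, by simp [hC, hjB], rfl⟩), hH0 j hj⟩

end RidgeSum


/-- If `f ∈ Cˢ(ℝⁿ)`, `s ≥ k - p + 1`, is a sum of arbitrarily behaved ridge
functions with pairwise linearly independent directions `a¹,...,aᵏ`, where `p`
is the maximal number of linearly independent vectors among them, then it is a
sum of `Cˢ` ridge functions with the same directions plus a polynomial of
total degree at most `k - p + 1`. -/
theorem stmt14 {n k : ℕ} (s p : ℕ) (a : Fin k → Fin n → ℝ)
    (hpair : ∀ i j : Fin k, i ≠ j → LinearIndependent ℝ ![a i, a j])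
    (hp1 : ∃ T : Finset (Fin k), T.card = p ∧
      LinearIndependent ℝ (fun i : {x : Fin k // x ∈ T} => a i.1))
    (hp2 : ∀ T : Finset (Fin k),
      LinearIndependent ℝ (fun i : {x : Fin k // x ∈ T} => a i.1) → T.card ≤ p)
    (hs : k - p + 1 ≤ s)
    (f : (Fin n → ℝ) → ℝ) (hf : ContDiff ℝ (s : ℕ∞) f)
    (F : Fin k → ℝ → ℝ)
    (hrepr : ∀ x : Fin n → ℝ, f x = ∑ i, F i (∑ t, a i t * x t)) :
    ∃ (g : Fin k → ℝ → ℝ) (P : MvPolynomial (Fin n) ℝ),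
      (∀ i, ContDiff ℝ (s : ℕ∞) (g i)) ∧ P.totalDegree ≤ k - p + 1 ∧
      ∀ x : Fin n → ℝ, f x = (∑ i, g i (∑ t, a i t * x t)) + MvPolynomial.eval x P := by
  classical
  obtain ⟨T, hTp, hT⟩ := hp1
  have hf' : ContDiff ℝ (s : WithTop ℕ∞) f := hf
  simp only [← RidgeSum.dotForm_apply] at hrepr ⊢
  have hmain (i : Fin k) : ∃ g : ℝ → ℝ, ContDiff ℝ (s : WithTop ℕ∞) g ∧
      ∀ ks : List (Fin n → ℝ), ks.length = k - p + 1 →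
        RidgeSum.DiffVanish ks
          (fun x => F i (RidgeSum.dotForm (a i) x) - g (RidgeSum.dotForm (a i) x)) := by
    by_cases hi : a i = 0
    · refine ⟨fun _ => 0, contDiff_const, fun ks hks => ?_⟩
      obtain ⟨h, hh⟩ := List.exists_mem_of_length_pos (l := ks) (by omega)
      exact RidgeSum.DiffVanish.of_mem hh fun t x => by simp [RidgeSum.dotForm_apply, hi]
    · obtain ⟨hs', hlen, h1, h0⟩ := RidgeSum.exists_annihilating_list a hpair hTp hT hi
      rw [← hlen]
      refine RidgeSum.exists_contDiff_ridge_part (RidgeSum.dotForm (a i))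
        (G := fun x => ∑ j ∈ Finset.univ.erase i, F j (RidgeSum.dotForm (a j) x))
        (List.ne_nil_of_length_pos (by omega)) h1 (by omega) hf' ?_ fun x => ?_
      · refine RidgeSum.DiffVanish.sum _ fun j hj => ?_
        obtain ⟨h, hh, hz⟩ := h0 j (Finset.ne_of_mem_erase hj)
        exact RidgeSum.DiffVanish.of_mem hh fun t x => by simp [hz]
      · rw [hrepr, ← Finset.add_sum_erase _ _ (Finset.mem_univ i)]
  choose g hg hgv using hmain
  have hR : ContDiff ℝ (s : WithTop ℕ∞)
      (fun x => f x - ∑ i, g i (RidgeSum.dotForm (a i) x)) :=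
    hf'.sub (ContDiff.sum fun i _ => (hg i).comp (RidgeSum.dotForm (a i)).contDiff)
  have hR' := hR.of_le (m := ((k - p + 1 : ℕ) : WithTop ℕ∞)) (by exact_mod_cast hs)
  obtain ⟨P, hPdeg, hP⟩ := RidgeSum.exists_mvPolynomial_of_listDeriv (k - p + 1) hR'
    fun ks hks => by
      rw [← RidgeSum.diffVanish_iff_listDeriv ks (by rwa [hks])]
      convert RidgeSum.DiffVanish.sum Finset.univ fun i _ => hgv i ks hks using 2
      rw [hrepr, Finset.sum_sub_distrib]
  exact ⟨g, P, hg, hPdeg, fun x => by rw [← hP]; ring⟩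
end
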